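/- There is a constant c > 0 such that A(x) − log x > c·x^{−1/2}·log log log x for arbitrarily large x, and A(x) − log x < −c·x^{−1/2}·log log log x for arbitrarily large x. (That is, A(x) − log x = Ω_±( x^{−1/2} log log log x ).) -/

import Mathlib

open Filter

/-- `A(x) = γ + ∑_{p ≤ x} log p / (p - 1)`, the sum over primes `p ≤ x`. -/
noncomputable def A (x : ℝ) : ℝ :=
  Real.eulerMascheroniConstant +
    ∑ p ∈ (Finset.range (⌊x⌋₊ + 1)).filter Nat.Prime, Real.log p / ((p : ℝ) - 1)

/-!
Write `mertensError u = e ^ (u / 2) * (∑ n ≤ e ^ u, Λ n / n - u + γ)`. Up to a bounded error it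
equals `√x * (A x - log x)` at `x = e ^ u`, so it has to be shown that `mertensError u` exceeds a
multiple of `log (log u)` in absolute value, with either sign, for arbitrarily large `u`.

If this fails for one sign, `mertensError` is bounded by a linear function from one side. Its
Laplace transform is elementary in `ζ' / ζ (1 / 2 + s)` and has no real singularity in `Re s > 0`,
so by Landau's theorem it converges there, whence `ζ` has no zeros with real part exceeding `1 / 2`.
The partial fraction expansion of `ξ' / ξ` then yields an explicit formula: a primitive of
`mertensError`, up to Lipschitz terms, is the sum over the poles of the Gamma factor minus the
absolutely convergent even sum `Z u = ∑ γ, (1 - cos (γ u)) / γ ^ 2` over the zeros.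

There are no primes below `2`, so for `u < log 2` the sum `Z` has to cancel the sum over the poles,
and hence `T * (Z (2 / T) - Z (1 / T))` is at least a multiple of `log T`. By Dirichlet's theorem on
simultaneous approximation there is an almost period `u` of `Z` with error `O (1 / T)` and
`log u = O (T ^ 3 * log T)`. Near `u` the increments of `Z` of size `(log T) / T` therefore recur,
with both signs because `Z` is even, and since they are averages of `-mertensError` over intervals
of length `1 / T`, they force values of size `log T`, of order `log (log u)`, of both signs.
-/

namespace MertensOscillation

open Complex MeasureTheory ProbabilityTheory Set Topology
open scoped Real

/-! ### The logarithmic derivative of the Gamma factor -/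

lemma ne_neg_natCast_of_re_pos {z : ℂ} (hz : 0 < z.re) (m : ℕ) : z ≠ -m := by
  rintro rfl
  have : (0 : ℝ) ≤ m := m.cast_nonneg
  simp only [neg_re, natCast_re] at hz
  linarith

lemma ne_zero_of_re_pos {z : ℂ} (hz : 0 < z.re) : z ≠ 0 := by
  rintro rfl
  simp at hz

lemma add_ofReal_ne_zero {z : ℂ} {a : ℝ} (h : -a < z.re) : z + a ≠ 0 :=
  ne_zero_of_re_pos (by rw [add_re, ofReal_re]; linarith)

lemma isOpen_re_pos : IsOpen {w : ℂ | 0 < w.re} := isOpen_lt continuous_const continuous_re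

lemma isPreconnected_re_pos : IsPreconnected {w : ℂ | 0 < w.re} :=
  (convex_halfSpace_re_gt 0).isPreconnected

lemma tendsto_ofReal_nhdsNE (x : ℝ) : Tendsto ((↑) : ℝ → ℂ) (𝓝[≠] x) (𝓝[≠] (x : ℂ)) :=
  continuous_ofReal.continuousWithinAt.tendsto_nhdsWithin fun _ hy h ↦ hy (ofReal_injective h)

lemma summable_const_div_succ_sq (K : ℝ) : Summable fun m : ℕ ↦ K / ((m : ℝ) + 1) ^ 2 := by
  have h := (summable_nat_add_iff 1).2 (Real.summable_one_div_nat_pow.2 one_lt_two)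
  simpa [div_eq_mul_inv] using h.mul_left K

lemma norm_one_div_succ_sub_one_div_add_le {δ M : ℝ} (hδ : 0 < δ) (hδ1 : δ ≤ 1) {w : ℂ}
    (hw : δ ≤ w.re) (hM : ‖w‖ ≤ M) (m : ℕ) :
    ‖1 / ((m : ℂ) + 1) - 1 / (w + m)‖ ≤ (M + 1) / δ / ((m : ℝ) + 1) ^ 2 := by
  have hm1 : (m : ℂ) + 1 ≠ 0 := m.cast_add_one_ne_zero
  have hwm : w + m ≠ 0 := mod_cast add_ofReal_ne_zero (a := m) (by linarith)
  have hnum : ‖w - 1‖ ≤ M + 1 := by linarith [norm_sub_le w 1, norm_one (α := ℂ)]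
  have hden : δ * ((m : ℝ) + 1) ≤ ‖w + m‖ := by
    have := re_le_norm (w + m)
    rw [add_re, natCast_re] at this
    nlinarith
  have hnorm : ‖(m : ℂ) + 1‖ = m + 1 := by simpa using Complex.norm_natCast (m + 1)
  calc ‖1 / ((m : ℂ) + 1) - 1 / (w + m)‖ = ‖w - 1‖ / ((m + 1) * ‖w + m‖) := by
        rw [← hnorm, ← norm_mul, ← norm_div]
        congr 1
        field_simp
        ring
    _ ≤ (M + 1) / ((m + 1) * (δ * (m + 1))) := by gcongr; linarith [norm_nonneg w]
    _ = (M + 1) / δ / ((m : ℝ) + 1) ^ 2 := by field_simp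

lemma exists_pos_lt_re_and_norm_lt {z : ℂ} (hz : 0 < z.re) :
    ∃ δ M : ℝ, 0 < δ ∧ δ ≤ 1 ∧ δ < z.re ∧ ‖z‖ < M :=
  ⟨min 1 (z.re / 2), ‖z‖ + 1, by positivity, min_le_left _ _,
    (min_le_right _ _).trans_lt (half_lt_self hz), lt_add_one _⟩

lemma summable_one_div_succ_sub_one_div_add {z : ℂ} (hz : 0 < z.re) :
    Summable fun m : ℕ ↦ 1 / ((m : ℂ) + 1) - 1 / (z + m) := by
  obtain ⟨δ, M, hδ, hδ1, hδz, hzM⟩ := exists_pos_lt_re_and_norm_lt hz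
  exact .of_norm_bounded (summable_const_div_succ_sq _) fun m ↦
    norm_one_div_succ_sub_one_div_add_le hδ hδ1 hδz.le hzM.le m

lemma differentiableAt_tsum_one_div_succ_sub_one_div_add {z : ℂ} (hz : 0 < z.re) :
    DifferentiableAt ℂ (fun w : ℂ ↦ ∑' m : ℕ, (1 / ((m : ℂ) + 1) - 1 / (w + m))) z := by
  obtain ⟨δ, M, hδ, hδ1, hδz, hzM⟩ := exists_pos_lt_re_and_norm_lt hz
  obtain ⟨U, hU⟩ : ∃ U : Set ℂ, U = {w | δ < w.re} ∩ {w | ‖w‖ < M} := ⟨_, rfl⟩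
  have hUo : IsOpen U := hU ▸ (isOpen_lt continuous_const continuous_re).inter
    (isOpen_lt continuous_norm continuous_const)
  have hre (w : ℂ) (hw : w ∈ U) : δ < w.re := (hU ▸ hw).1
  have hdiff (m : ℕ) : DifferentiableOn ℂ (fun w : ℂ ↦ 1 / ((m : ℂ) + 1) - 1 / (w + m)) U := by
    intro w hw
    have hwm : w + m ≠ 0 :=
      mod_cast add_ofReal_ne_zero (a := m) (by linarith [hre w hw, m.cast_nonneg (α := ℝ)])
    exact (.sub (differentiableAt_const _) (.div (differentiableAt_const _)
      (differentiableAt_id.add_const (m : ℂ)) hwm) : DifferentiableAt ℂ _ w).differentiableWithinAt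
  exact (differentiableOn_tsum_of_summable_norm (summable_const_div_succ_sq ((M + 1) / δ)) hdiff hUo
    fun m w hw ↦ norm_one_div_succ_sub_one_div_add_le hδ hδ1 (hre w hw).le (hU ▸ hw).2.le m
    ).differentiableAt (hUo.mem_nhds (hU ▸ ⟨hδz, hzM⟩))

lemma hasDerivAt_logGammaSeq {y : ℝ} (hy : 0 < y) (n : ℕ) :
    HasDerivAt (fun y ↦ Real.BohrMollerup.logGammaSeq y n)
      ((Real.log n - harmonic (n + 1)) +
        ∑ m ∈ Finset.range (n + 1), (1 / ((m : ℝ) + 1) - 1 / (y + m))) y := by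
  have hsum : HasDerivAt (fun y : ℝ ↦ ∑ m ∈ Finset.range (n + 1), Real.log (y + m))
      (∑ m ∈ Finset.range (n + 1), 1 / (y + m)) y :=
    .fun_sum fun m _ ↦ ((hasDerivAt_id' y).add_const (m : ℝ)).log (by positivity)
  refine ((((hasDerivAt_id y).mul_const (Real.log n)).add_const _).sub hsum).congr_deriv ?_
  rw [Finset.sum_sub_distrib, harmonic]
  push_cast
  simp

lemma tendsto_log_sub_harmonic_succ :
    Tendsto (fun n : ℕ ↦ Real.log n - (harmonic (n + 1) : ℝ)) atTop
      (𝓝 (-Real.eulerMascheroniConstant)) := by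
  have h := Real.tendsto_harmonic_sub_log.add (tendsto_one_div_add_atTop_nhds_zero_nat (𝕜 := ℝ))
  rw [add_zero] at h
  refine h.neg.congr fun n ↦ ?_
  rw [harmonic_succ]
  push_cast
  ring

lemma hasDerivAt_log_Gamma {x : ℝ} (hx : 0 < x) :
    HasDerivAt (fun y ↦ Real.log (Real.Gamma y))
      (-Real.eulerMascheroniConstant + ∑' m : ℕ, (1 / ((m : ℝ) + 1) - 1 / (x + m))) x := by
  obtain ⟨δ, M, hδ, hδ1, hδx, hxM⟩ := exists_pos_lt_re_and_norm_lt (z := x) hx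
  rw [ofReal_re] at hδx
  rw [norm_real, Real.norm_of_nonneg hx.le] at hxM
  refine hasDerivAt_of_tendstoLocallyUniformlyOn (l := atTop) (s := Ioo δ M)
    (f := fun n y ↦ Real.BohrMollerup.logGammaSeq y n)
    (g' := fun y ↦ -Real.eulerMascheroniConstant + ∑' m : ℕ, (1 / ((m : ℝ) + 1) - 1 / (y + m)))
    isOpen_Ioo (TendstoUniformlyOn.tendstoLocallyUniformlyOn ?_)
    (Eventually.of_forall fun n y hy ↦ hasDerivAt_logGammaSeq (hδ.trans hy.1) n)
    (fun y hy ↦ Real.BohrMollerup.tendsto_log_gamma (hδ.trans hy.1)) ⟨hδx, hxM⟩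
  refine (tendsto_log_sub_harmonic_succ.tendstoUniformlyOn_const _).add fun v hv ↦
    (tendsto_add_atTop_nat 1).eventually (tendstoUniformlyOn_tsum_nat
      (summable_const_div_succ_sq ((M + 1) / δ)) (fun m y hy ↦ ?_) v hv)
  have hyM : ‖(y : ℂ)‖ ≤ M := by
    rw [norm_real, Real.norm_of_nonneg (hδ.trans hy.1).le]
    exact hy.2.le
  have h := norm_one_div_succ_sub_one_div_add_le hδ hδ1 (ofReal_re y ▸ hy.1.le) hyM m
  rw [← norm_real]
  push_cast
  exact h

lemma digamma_ofReal {x : ℝ} (hx : 0 < x) :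
    digamma x = ((-Real.eulerMascheroniConstant +
      ∑' m : ℕ, (1 / ((m : ℝ) + 1) - 1 / (x + m)) : ℝ) : ℂ) := by
  have hd : DifferentiableAt ℝ Real.Gamma x := Real.differentiableAt_Gamma fun m ↦
    mod_cast ne_neg_natCast_of_re_pos (z := x) hx m
  have hdc : DifferentiableAt ℂ Gamma x := differentiableAt_Gamma _ (ne_neg_natCast_of_re_pos hx)
  have hderiv : deriv Gamma (x : ℂ) = (deriv Real.Gamma x : ℝ) :=
    hdc.hasDerivAt.comp_ofReal.unique
      (hd.hasDerivAt.ofReal_comp.congr_of_eventuallyEq (.of_forall fun y ↦ Gamma_ofReal y))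
  rw [← (hd.hasDerivAt.log (Real.Gamma_pos_of_pos hx).ne').unique (hasDerivAt_log_Gamma hx),
    digamma_def, logDeriv_apply, hderiv, Gamma_ofReal, ofReal_div]

lemma analyticOnNhd_digamma : AnalyticOnNhd ℂ digamma {w : ℂ | 0 < w.re} := by
  have hΓ : AnalyticOnNhd ℂ Gamma {w : ℂ | 0 < w.re} := DifferentiableOn.analyticOnNhd
    (fun w hw ↦ (differentiableAt_Gamma _ (ne_neg_natCast_of_re_pos hw)).differentiableWithinAt)
    isOpen_re_pos
  exact fun w hw ↦ (hΓ.deriv w hw).div (hΓ w hw) (Gamma_ne_zero_of_re_pos hw)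

lemma digamma_eq_tsum {z : ℂ} (hz : 0 < z.re) :
    digamma z = -Real.eulerMascheroniConstant +
      ∑' m : ℕ, (1 / ((m : ℂ) + 1) - 1 / (z + m)) := by
  have hseries : AnalyticOnNhd ℂ (fun z : ℂ ↦ -Real.eulerMascheroniConstant +
      ∑' m : ℕ, (1 / ((m : ℂ) + 1) - 1 / (z + m))) {w : ℂ | 0 < w.re} :=
    DifferentiableOn.analyticOnNhd (fun w hw ↦
      ((differentiableAt_tsum_one_div_succ_sub_one_div_add hw).const_add
        _).differentiableWithinAt) isOpen_re_pos
  refine analyticOnNhd_digamma.eqOn_of_preconnected_of_frequently_eq hseries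
    isPreconnected_re_pos (z₀ := ((1 : ℝ) : ℂ)) (by simp) ?_ hz
  refine (tendsto_ofReal_nhdsNE 1).frequently (Eventually.frequently ?_)
  filter_upwards [nhdsWithin_le_nhds (lt_mem_nhds one_pos)] with x hx
  rw [digamma_ofReal hx]
  push_cast
  rfl

lemma logDeriv_Gammaℝ {z : ℂ} (hz : 0 < z.re) :
    logDeriv Gammaℝ z = -(Real.log π / 2 : ℝ) + digamma (z / 2) / 2 := by
  have hz2 : 0 < (z / 2).re := by rw [div_ofNat_re]; positivity
  have hπ : (π : ℂ) ≠ 0 := mod_cast Real.pi_ne_zero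
  have hpow : HasDerivAt (fun s : ℂ ↦ (π : ℂ) ^ (-s / 2))
      ((π : ℂ) ^ (-z / 2) * Complex.log π * (-1 / 2)) z :=
    ((hasDerivAt_id z).neg.div_const 2).const_cpow (.inl hπ)
  have hΓ : HasDerivAt (fun s : ℂ ↦ Gamma (s / 2)) (deriv Gamma (z / 2) * (1 / 2)) z :=
    (differentiableAt_Gamma _ (ne_neg_natCast_of_re_pos hz2)).hasDerivAt.comp z
      ((hasDerivAt_id z).div_const 2)
  have hpow0 : (π : ℂ) ^ (-z / 2) ≠ 0 := cpow_ne_zero_iff.2 (.inl hπ)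
  have hΓ0 : Gamma (z / 2) ≠ 0 := Gamma_ne_zero_of_re_pos hz2
  rw [show Gammaℝ = fun s ↦ (π : ℂ) ^ (-s / 2) * Gamma (s / 2) from funext Gammaℝ_def,
    logDeriv_mul z hpow0 hΓ0 hpow.differentiableAt hΓ.differentiableAt, logDeriv_apply,
    logDeriv_apply, hpow.deriv, hΓ.deriv, digamma_def, logDeriv_apply, ofReal_div,
    ofReal_log Real.pi_pos.le]
  field_simp
  push_cast
  ring

/-- The poles of `s ↦ Gammaℝ (1 / 2 + s)` are the points `-gammaPole n`. -/
noncomputable def gammaPole (n : ℕ) : ℝ := 2 * n + 1 / 2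

lemma half_le_gammaPole (n : ℕ) : 1 / 2 ≤ gammaPole n := by
  have : (0 : ℝ) ≤ n := n.cast_nonneg
  rw [gammaPole]
  linarith

lemma gammaPole_pos (n : ℕ) : 0 < gammaPole n := one_half_pos.trans_le (half_le_gammaPole n)

lemma succ_le_two_mul_gammaPole (n : ℕ) : (n : ℝ) + 1 ≤ 2 * gammaPole n := by
  have : (0 : ℝ) ≤ n := n.cast_nonneg
  rw [gammaPole]
  linarith

lemma hasSum_one_div_sub_one_div_add_gammaPole {s : ℂ} (hs : -(1 / 2) < s.re) :
    HasSum (fun m : ℕ ↦ 1 / (2 * ((m : ℂ) + 1)) - 1 / (s + gammaPole m))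
      (logDeriv Gammaℝ (1 / 2 + s) +
        ((Real.log π / 2 + Real.eulerMascheroniConstant / 2 : ℝ) : ℂ)) := by
  have hre : (1 / 2 + s).re = 1 / 2 + s.re := by simp
  have hz2 : 0 < ((1 / 2 + s) / 2).re := by rw [div_ofNat_re, hre]; linarith
  rw [logDeriv_Gammaℝ (by rw [hre]; linarith), digamma_eq_tsum hz2]
  convert! (summable_one_div_succ_sub_one_div_add hz2).hasSum.div_const 2 using 1
  · ext m
    rw [gammaPole]
    push_cast
    rw [sub_div, div_div, div_div]
    congr 2 <;> ring
  · push_cast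
    ring

/-- The value of the logarithmic derivative of `Gammaℝ` at `1 / 2`, in the form in which it is
visibly real. -/
noncomputable def logDerivGammaHalf : ℝ :=
  ∑' m : ℕ, (1 / (2 * ((m : ℝ) + 1)) - 1 / gammaPole m) -
    (Real.log π / 2 + Real.eulerMascheroniConstant / 2)

lemma ofReal_logDerivGammaHalf : (logDerivGammaHalf : ℂ) = logDeriv Gammaℝ (1 / 2 + 0) := by
  rw [← sub_eq_iff_eq_add.2 (hasSum_one_div_sub_one_div_add_gammaPole (s := 0)
    (by norm_num)).tsum_eq, logDerivGammaHalf]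
  push_cast
  simp only [zero_add]

lemma hasSum_logDeriv_Gammaℝ {s : ℂ} (hs : -(1 / 2) < s.re) :
    HasSum (fun n : ℕ ↦ s / (gammaPole n * (s + gammaPole n)))
      (logDeriv Gammaℝ (1 / 2 + s) - logDerivGammaHalf) := by
  convert! (hasSum_one_div_sub_one_div_add_gammaPole hs).sub
    (hasSum_one_div_sub_one_div_add_gammaPole (s := 0) (by norm_num)) using 1
  · ext m
    have hpole : (gammaPole m : ℂ) ≠ 0 := mod_cast (gammaPole_pos m).ne'
    have hadd : s + gammaPole m ≠ 0 := add_ofReal_ne_zero (by linarith [half_le_gammaPole m])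
    rw [zero_add]
    field_simp
    ring
  · rw [ofReal_logDerivGammaHalf]
    ring

lemma summable_one_div_gammaPole_mul_sqrt :
    Summable fun n : ℕ ↦ 1 / (gammaPole n * √(gammaPole n)) := by
  have h := (summable_nat_add_iff 1).2
    (Real.summable_one_div_nat_rpow.2 (by norm_num : (1 : ℝ) < 3 / 2))
  refine .of_nonneg_of_le (fun n ↦ ?_) (fun n ↦ ?_) (h.mul_left (2 * √2))
  · have := gammaPole_pos n
    positivity
  have hn : 0 < (n : ℝ) + 1 := n.cast_add_one_pos
  have hpole := gammaPole_pos n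
  have hpow : ((n + 1 : ℕ) : ℝ) ^ (3 / 2 : ℝ) = ((n : ℝ) + 1) * √((n : ℝ) + 1) := by
    push_cast
    rw [show (3 / 2 : ℝ) = 1 + 1 / 2 by norm_num, Real.rpow_add hn, Real.rpow_one,
      ← Real.sqrt_eq_rpow]
  rw [hpow, mul_one_div, div_le_div_iff₀ (by positivity) (by positivity), one_mul]
  calc ((n : ℝ) + 1) * √((n : ℝ) + 1) ≤ (2 * gammaPole n) * √(2 * gammaPole n) := by
        gcongr <;> exact succ_le_two_mul_gammaPole n
    _ = 2 * √2 * (gammaPole n * √(gammaPole n)) := by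
        rw [Real.sqrt_mul zero_le_two]
        ring

lemma sqrt_norm_mul_sqrt_le_norm_add {s : ℂ} (hs : 0 ≤ s.re) {a : ℝ} (ha : 0 ≤ a) :
    √‖s‖ * √a ≤ ‖s + a‖ := by
  rw [← Real.sqrt_mul (norm_nonneg s)]
  refine Real.sqrt_le_iff.2 ⟨norm_nonneg _, ?_⟩
  have hsq : ‖s + a‖ ^ 2 = ‖s‖ ^ 2 + 2 * s.re * a + a ^ 2 := by
    rw [← normSq_eq_norm_sq, ← normSq_eq_norm_sq, normSq_apply, normSq_apply]
    simp only [add_re, ofReal_re, add_im, ofReal_im]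
    ring
  nlinarith [sq_nonneg (‖s‖ - a), norm_nonneg s, mul_nonneg hs ha]

lemma norm_div_mul_add_le {s : ℂ} (hs : 0 ≤ s.re) {a : ℝ} (ha : 0 < a) :
    ‖s / (a * (s + a))‖ ≤ √‖s‖ * (1 / (a * √a)) := by
  rcases eq_or_ne s 0 with rfl | hs0
  · simp
  rw [norm_div, norm_mul, norm_real, Real.norm_of_nonneg ha.le]
  calc ‖s‖ / (a * ‖s + a‖) ≤ ‖s‖ / (a * (√‖s‖ * √a)) := by
        gcongr
        exact sqrt_norm_mul_sqrt_le_norm_add hs ha.le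
    _ = √‖s‖ * (1 / (a * √a)) := by
        field_simp
        rw [Real.sq_sqrt (norm_nonneg s)]

lemma exists_norm_logDeriv_Gammaℝ_le : ∃ K : ℝ, ∀ s : ℂ, 0 ≤ s.re →
    ‖logDeriv Gammaℝ (1 / 2 + s)‖ ≤ K * (1 + √‖s‖) := by
  set S := ∑' n : ℕ, 1 / (gammaPole n * √(gammaPole n))
  have hS : 0 ≤ S := tsum_nonneg fun n ↦ by have := gammaPole_pos n; positivity
  refine ⟨|logDerivGammaHalf| + S, fun s hs ↦ ?_⟩
  have hsub : ‖logDeriv Gammaℝ (1 / 2 + s) - logDerivGammaHalf‖ ≤ √‖s‖ * S := by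
    rw [← (hasSum_logDeriv_Gammaℝ (by linarith)).tsum_eq]
    exact tsum_of_norm_bounded (summable_one_div_gammaPole_mul_sqrt.hasSum.mul_left _)
      fun n ↦ norm_div_mul_add_le hs (gammaPole_pos n)
  calc ‖logDeriv Gammaℝ (1 / 2 + s)‖
      ≤ ‖logDeriv Gammaℝ (1 / 2 + s) - logDerivGammaHalf‖ + ‖(logDerivGammaHalf : ℂ)‖ :=
        norm_le_norm_sub_add _ _
    _ ≤ √‖s‖ * S + |logDerivGammaHalf| := by
        rw [norm_real, Real.norm_eq_abs]
        gcongr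
    _ ≤ (|logDerivGammaHalf| + S) * (1 + √‖s‖) := by
        nlinarith [mul_nonneg (abs_nonneg logDerivGammaHalf) (Real.sqrt_nonneg ‖s‖)]

/-! ### The entire function `(s - 1) ζ(s)` on the positive real axis -/

/-- The fractional part cut off to `(1, ∞)`. Its Mellin transform at `-s`, which converges for
`0 < re s`, continues the zeta function to the right half-plane. -/
noncomputable def fractTail : ℝ → ℂ :=
  (Ioi 1).indicator fun t ↦ (Int.fract t : ℝ)

lemma fractTail_of_one_lt {t : ℝ} (ht : 1 < t) : fractTail t = (Int.fract t : ℝ) :=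
  indicator_of_mem (mem_Ioi.2 ht) _

lemma fractTail_of_le_one {t : ℝ} (ht : t ≤ 1) : fractTail t = 0 :=
  indicator_of_notMem (notMem_Ioi.2 ht) _

lemma norm_fractTail_le (t : ℝ) : ‖fractTail t‖ ≤ 1 := by
  refine (norm_indicator_le_norm_self _ _).trans ?_
  rw [norm_real, Real.norm_of_nonneg (Int.fract_nonneg t)]
  exact (Int.fract_lt_one t).le

lemma locallyIntegrableOn_fractTail : LocallyIntegrableOn fractTail (Ioi 0) := by
  have hmeas : Measurable fractTail :=
    (measurable_ofReal.comp measurable_fract).indicator measurableSet_Ioi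
  exact ((locallyIntegrable_const (1 : ℝ)).mono hmeas.aestronglyMeasurable
    (.of_forall fun t ↦ by simpa using norm_fractTail_le t)).locallyIntegrableOn _

lemma fractTail_isBigO_atTop : fractTail =O[atTop] fun x : ℝ ↦ x ^ (-(0 : ℝ)) :=
  Asymptotics.isBigO_of_le _ fun t ↦ by simpa using norm_fractTail_le t

lemma fractTail_isBigO_zero (b : ℝ) : fractTail =O[𝓝[>] 0] fun x : ℝ ↦ x ^ (-b) := by
  refine Asymptotics.IsBigO.of_bound 0 ?_
  filter_upwards [nhdsWithin_le_nhds (gt_mem_nhds (zero_lt_one' ℝ))] with t ht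
  simp [fractTail_of_le_one ht.le]

lemma mellinConvergent_fractTail_neg {s : ℂ} (hs : 0 < s.re) : MellinConvergent fractTail (-s) :=
  mellinConvergent_of_isBigO_rpow (a := 0) (b := -s.re - 1) locallyIntegrableOn_fractTail
    fractTail_isBigO_atTop (by simpa using hs) (fractTail_isBigO_zero _) (by simp)

lemma differentiableAt_mellin_fractTail_neg {s : ℂ} (hs : 0 < s.re) :
    DifferentiableAt ℂ (fun w ↦ mellin fractTail (-w)) s :=
  DifferentiableAt.fun_comp' (g := mellin fractTail) s
    (mellin_differentiableAt_of_isBigO_rpow (a := 0) (b := -s.re - 1) locallyIntegrableOn_fractTail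
      fractTail_isBigO_atTop (by simpa using hs) (fractTail_isBigO_zero _) (by simp))
    differentiableAt_id.neg

lemma mellin_fractTail_neg_eq_setIntegral (s : ℂ) :
    mellin fractTail (-s) = ∫ t : ℝ in Ioi 1, (t : ℂ) ^ (-s - 1) • fractTail t :=
  setIntegral_eq_of_subset_of_forall_sdiff_eq_zero measurableSet_Ioi
    (Ioi_subset_Ioi zero_le_one) fun t ht ↦ by rw [fractTail_of_le_one (not_lt.1 ht.2), smul_zero]

lemma sum_one_mul_cpow_eq {t : ℝ} (ht : 1 < t) (s : ℂ) :
    (∑ k ∈ Finset.Icc 1 ⌊t⌋₊, (1 : ℕ → ℂ) k) * (t : ℂ) ^ (-(s + 1)) =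
      (t : ℂ) ^ (-s) - (t : ℂ) ^ (-s - 1) • fractTail t := by
  have ht0 : (t : ℂ) ≠ 0 := ofReal_ne_zero.2 (zero_lt_one.trans ht).ne'
  have hfloor : ((⌊t⌋₊ : ℝ) : ℂ) = ((t - Int.fract t : ℝ) : ℂ) := by
    rw [Int.self_sub_fract, natCast_floor_eq_intCast_floor (zero_lt_one.trans ht).le]
  have hpow : (t : ℂ) ^ (-s) = t * (t : ℂ) ^ (-s - 1) := by
    rw [cpow_sub _ _ ht0, cpow_one, mul_div_cancel₀ _ ht0]
  push_cast at hfloor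
  simp only [Pi.one_apply, Finset.sum_const, Nat.card_Icc, add_tsub_cancel_right, nsmul_eq_mul,
    mul_one]
  rw [fractTail_of_one_lt ht, hfloor, hpow, smul_eq_mul, neg_add']
  ring

lemma riemannZeta_eq_mellin_of_one_lt {s : ℂ} (hs : 1 < s.re) :
    riemannZeta s = s / (s - 1) - s * mellin fractTail (-s) := by
  have hzeta := LSeries_eq_mul_integral (1 : ℕ → ℂ) zero_le_one hs (LSeriesSummable_one_iff.2 hs)
    (Asymptotics.isBigO_of_le _ fun n ↦ by simp)
  have hpow : IntegrableOn (fun t : ℝ ↦ (t : ℂ) ^ (-s)) (Ioi 1) :=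
    integrableOn_Ioi_cpow_of_lt (by simpa using hs) zero_lt_one
  have hmellin : IntegrableOn (fun t : ℝ ↦ (t : ℂ) ^ (-s - 1) • fractTail t) (Ioi 1) :=
    IntegrableOn.mono_set (mellinConvergent_fractTail_neg (zero_lt_one.trans hs))
      (Ioi_subset_Ioi zero_le_one)
  have hint : ∫ t : ℝ in Ioi 1, (t : ℂ) ^ (-s) = 1 / (s - 1) := by
    rw [integral_Ioi_cpow_of_lt (by simpa using hs) zero_lt_one, ofReal_one, one_cpow,
      neg_add_eq_sub, ← neg_sub s 1, neg_div_neg_eq]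
  rw [← LSeries_one_eq_riemannZeta hs, hzeta,
    setIntegral_congr_fun measurableSet_Ioi fun t ht ↦ sum_one_mul_cpow_eq ht s,
    integral_sub hpow hmellin, hint, mellin_fractTail_neg_eq_setIntegral]
  ring

lemma riemannZeta₁_eq_mellin {s : ℂ} (hs : 0 < s.re) :
    riemannZeta₁ s = s - s * (s - 1) * mellin fractTail (-s) := by
  have hleft : AnalyticOnNhd ℂ riemannZeta₁ {w : ℂ | 0 < w.re} :=
    differentiable_riemannZeta₁.differentiableOn.analyticOnNhd isOpen_re_pos
  have hright : AnalyticOnNhd ℂ (fun s ↦ s - s * (s - 1) * mellin fractTail (-s))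
      {w : ℂ | 0 < w.re} :=
    DifferentiableOn.analyticOnNhd (fun w hw ↦ (differentiableAt_id.sub ((differentiableAt_id.mul
      (differentiableAt_id.sub_const 1)).mul (differentiableAt_mellin_fractTail_neg hw))
      ).differentiableWithinAt) isOpen_re_pos
  refine hleft.eqOn_of_preconnected_of_eventuallyEq hright isPreconnected_re_pos (z₀ := 2)
    (by simp) ?_ hs
  have hnhds : {w : ℂ | 1 < w.re} ∈ 𝓝 2 :=
    (isOpen_lt continuous_const continuous_re).mem_nhds (by simp)
  filter_upwards [hnhds] with w hw
  have hw1 : w ≠ 1 := fun h ↦ by simp [h] at hw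
  have h := riemannZeta_eq_mellin_of_one_lt hw
  rw [riemannZeta_eq_inv_sub_mul hw1, inv_mul_eq_iff_eq_mul₀ (sub_ne_zero.2 hw1)] at h
  rw [h]
  field_simp [sub_ne_zero.2 hw1]

lemma riemannZeta₁_ne_zero_of_one_le_re {s : ℂ} (hs : 1 ≤ s.re) : riemannZeta₁ s ≠ 0 := by
  rcases eq_or_ne s 1 with rfl | h1
  · simp [riemannZeta₁_one]
  · intro h
    apply riemannZeta_ne_zero_of_one_le_re hs
    rw [riemannZeta_eq_inv_sub_mul h1, h, mul_zero]

lemma exists_mellin_fractTail_neg_eq_ofReal (x : ℝ) :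
    ∃ y : ℝ, 0 ≤ y ∧ mellin fractTail (-x) = y := by
  refine ⟨∫ t : ℝ in Ioi 1, t ^ (-x - 1) * Int.fract t,
    setIntegral_nonneg measurableSet_Ioi fun t ht ↦ ?_, ?_⟩
  · have ht0 : 0 < t := zero_lt_one.trans ht
    exact mul_nonneg (by positivity) (Int.fract_nonneg t)
  · rw [mellin_fractTail_neg_eq_setIntegral, ← integral_complex_ofReal]
    refine setIntegral_congr_fun measurableSet_Ioi fun t ht ↦ ?_
    simp only [fractTail_of_one_lt ht, smul_eq_mul, ofReal_mul,
      ofReal_cpow (zero_lt_one.trans ht).le, ofReal_sub, ofReal_neg, ofReal_one]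

lemma riemannZeta₁_ofReal_ne_zero {x : ℝ} (hx : 0 < x) : riemannZeta₁ x ≠ 0 := by
  rcases le_total 1 x with h | h
  · exact riemannZeta₁_ne_zero_of_one_le_re (by simpa using h)
  · obtain ⟨y, hy, hxy⟩ := exists_mellin_fractTail_neg_eq_ofReal x
    rw [riemannZeta₁_eq_mellin (by simpa using hx), hxy]
    norm_cast
    have : 0 ≤ x * (1 - x) * y := mul_nonneg (mul_nonneg hx.le (by linarith)) hy
    nlinarith

/-! ### Laplace transforms -/

section Integral

variable {α E ι : Type*} [MeasurableSpace α] [NormedAddCommGroup E] {μ : Measure α}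

lemma tsum_lintegral_enorm_ne_top {f : ι → α → E} (hf : ∀ i, Integrable (f i) μ)
    (hsum : Summable fun i ↦ ∫ a, ‖f i a‖ ∂μ) : ∑' i, ∫⁻ a, ‖f i a‖ₑ ∂μ ≠ ⊤ := by
  have h (i : ι) : ∫⁻ a, ‖f i a‖ₑ ∂μ = ENNReal.ofReal (∫ a, ‖f i a‖ ∂μ) :=
    (ofReal_integral_norm_eq_lintegral_enorm (hf i)).symm
  rw [funext h,
    ← ENNReal.ofReal_tsum_of_nonneg (fun i ↦ integral_nonneg fun a ↦ norm_nonneg _) hsum]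
  exact ENNReal.ofReal_ne_top

lemma integrable_tsum_of_summable_integral_norm [CompleteSpace E] [Countable ι] {f : ι → α → E}
    (hf : ∀ i, Integrable (f i) μ) (hsum : Summable fun i ↦ ∫ a, ‖f i a‖ ∂μ) :
    Integrable (fun a ↦ ∑' i, f i a) μ := by
  have hmeas (i : ι) : AEMeasurable (fun a ↦ ‖f i a‖ₑ) μ := (hf i).1.enorm
  have hfin := tsum_lintegral_enorm_ne_top hf hsum
  rw [← lintegral_tsum hmeas] at hfin
  have hsummable : ∀ᵐ a ∂μ, Summable fun i ↦ f i a := by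
    filter_upwards [ae_lt_top' (AEMeasurable.tsum hmeas) hfin] with a ha
    exact .of_norm (NNReal.summable_coe.2 (ENNReal.tsum_coe_ne_top_iff_summable.1 ha.ne))
  refine ⟨aestronglyMeasurable_of_tendsto_ae atTop (f := fun (T : Finset ι) a ↦ ∑ i ∈ T, f i a)
    (fun T ↦ Finset.aestronglyMeasurable_fun_sum _ fun i _ ↦ (hf i).1) ?_,
    (lintegral_mono fun a ↦ enorm_tsum_le_tsum_enorm).trans_lt hfin.lt_top⟩
  filter_upwards [hsummable] with a ha using ha.hasSum

lemma integral_Ioi_indicator_Ici_comp_sub [NormedSpace ℝ E] (F : ℝ → E) {ℓ : ℝ} (hℓ : 0 ≤ ℓ) :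
    ∫ u in Ioi 0, (Ici 0).indicator F (u - ℓ) = ∫ u in Ioi 0, F u := by
  have hvanish : ∀ u ∉ Ici (0 : ℝ), (Ici 0).indicator F (u - ℓ) = 0 := fun u hu ↦
    indicator_of_notMem (fun h ↦ hu (by simp only [mem_Ici] at h ⊢; linarith)) _
  rw [← integral_Ici_eq_integral_Ioi, setIntegral_eq_integral_of_forall_compl_eq_zero hvanish,
    integral_sub_right_eq_self (μ := volume), integral_indicator measurableSet_Ici,
    integral_Ici_eq_integral_Ioi]

end Integral

/-- The Laplace integral `∫₀^∞ f(u) e^(-su) du` converges absolutely and has value `v`. -/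
def HasLaplace (f : ℝ → ℝ) (s v : ℂ) : Prop :=
  IntegrableOn (fun u : ℝ ↦ (f u : ℂ) * cexp (-s * u)) (Ioi 0) ∧
    ∫ u : ℝ in Ioi 0, (f u : ℂ) * cexp (-s * u) = v

namespace HasLaplace

variable {f g : ℝ → ℝ} {s v w : ℂ}

lemma add (hf : HasLaplace f s v) (hg : HasLaplace g s w) :
    HasLaplace (fun u ↦ f u + g u) s (v + w) := by
  simp only [HasLaplace, ofReal_add, add_mul]
  exact ⟨hf.1.add hg.1, by rw [integral_add hf.1 hg.1, hf.2, hg.2]⟩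

lemma const_mul (c : ℝ) (hf : HasLaplace f s v) : HasLaplace (fun u ↦ c * f u) s (c * v) := by
  simp only [HasLaplace, ofReal_mul, mul_assoc]
  exact ⟨hf.1.const_mul _, by rw [integral_const_mul, hf.2]⟩

lemma sub (hf : HasLaplace f s v) (hg : HasLaplace g s w) :
    HasLaplace (fun u ↦ f u - g u) s (v - w) := by
  simpa [sub_eq_add_neg] using hf.add (hg.const_mul (-1))

lemma congr (hf : HasLaplace f s v) (h : ∀ u, 0 < u → g u = f u) : HasLaplace g s v :=
  ⟨hf.1.congr_fun (fun u hu ↦ by simp only [h u hu]) measurableSet_Ioi,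
    (setIntegral_congr_fun measurableSet_Ioi fun u hu ↦ by simp only [h u hu]).trans hf.2⟩

lemma congr_val (hf : HasLaplace f s v) (h : v = w) : HasLaplace f s w := h ▸ hf

lemma tsum_of_summable_integral_norm {ι : Type*} [Countable ι] {f : ι → ℝ → ℝ} {v : ι → ℂ}
    (hf : ∀ i, HasLaplace (f i) s (v i))
    (hsum : Summable fun i ↦ ∫ u : ℝ in Ioi 0, ‖(f i u : ℂ) * cexp (-s * u)‖) :
    HasLaplace (fun u ↦ ∑' i, f i u) s (∑' i, v i) := by
  simp only [HasLaplace, ofReal_tsum, ← tsum_mul_right, ← (hf _).2]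
  exact ⟨integrable_tsum_of_summable_integral_norm (fun i ↦ (hf i).1) hsum,
    (integral_tsum_of_summable_integral_norm (fun i ↦ (hf i).1) hsum).symm⟩

lemma tsum_of_abs_le {ι : Type*} [Countable ι] {f : ι → ℝ → ℝ} {b : ι → ℝ} {v : ι → ℂ}
    (hs : 0 < s.re) (hb : Summable b) (hfb : ∀ i u, 0 < u → |f i u| ≤ b i)
    (hf : ∀ i, HasLaplace (f i) s (v i)) :
    HasLaplace (fun u ↦ ∑' i, f i u) s (∑' i, v i) := by
  have hexp : IntegrableOn (fun u : ℝ ↦ Real.exp (-s.re * u)) (Ioi 0) :=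
    integrableOn_exp_mul_Ioi (neg_neg_of_pos hs) 0
  refine tsum_of_summable_integral_norm hf (.of_nonneg_of_le
    (fun i ↦ integral_nonneg fun u ↦ norm_nonneg _) (fun i ↦ ?_)
    (hb.mul_right (∫ u : ℝ in Ioi 0, Real.exp (-s.re * u))))
  rw [← integral_const_mul]
  refine setIntegral_mono_on (hf i).1.norm (hexp.const_mul _) measurableSet_Ioi fun u hu ↦ ?_
  rw [norm_mul, norm_real, norm_exp, re_mul_ofReal, neg_re]
  gcongr
  exact hfb i u hu

lemma indicator_comp_sub_mul_exp (k : ℝ → ℝ) (s : ℂ) (ℓ u : ℝ) :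
    (((Ici 0).indicator k (u - ℓ) : ℝ) : ℂ) * cexp (-s * u) =
      cexp (-s * ℓ) * (Ici 0).indicator (fun u : ℝ ↦ (k u : ℂ) * cexp (-s * u)) (u - ℓ) := by
  by_cases h : u - ℓ ∈ Ici 0
  · rw [indicator_of_mem h, indicator_of_mem h, mul_left_comm, ← exp_add]
    push_cast
    ring_nf
  · simp [indicator_of_notMem h]

lemma comp_sub (hf : HasLaplace f s v) {ℓ : ℝ} (hℓ : 0 ≤ ℓ) :
    HasLaplace (fun u ↦ (Ici 0).indicator f (u - ℓ)) s (cexp (-s * ℓ) * v) := by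
  have hint : Integrable ((Ici 0).indicator fun u : ℝ ↦ (f u : ℂ) * cexp (-s * u)) :=
    (integrable_indicator_iff measurableSet_Ici).2
      ((integrableOn_Ici_iff_integrableOn_Ioi (by simp)).2 hf.1)
  simp only [HasLaplace, indicator_comp_sub_mul_exp]
  refine ⟨((hint.comp_sub_right ℓ).const_mul _).integrableOn, ?_⟩
  rw [integral_const_mul, integral_Ioi_indicator_Ici_comp_sub _ hℓ, hf.2]

lemma tsum_comp_sub {ι : Type*} [Countable ι] {c ℓ : ι → ℝ} (hℓ : ∀ i, 0 ≤ ℓ i)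
    (hf : HasLaplace f s v) (hc : Summable fun i ↦ (c i : ℂ) * cexp (-s * ℓ i)) :
    HasLaplace (fun u ↦ ∑' i, c i * (Ici 0).indicator f (u - ℓ i)) s
      ((∑' i, (c i : ℂ) * cexp (-s * ℓ i)) * v) := by
  have hnorm (i : ι) : ∫ u : ℝ in Ioi 0,
      ‖((c i * (Ici 0).indicator f (u - ℓ i) : ℝ) : ℂ) * cexp (-s * u)‖ =
        ‖(c i : ℂ) * cexp (-s * ℓ i)‖ * ∫ u : ℝ in Ioi 0, ‖(f u : ℂ) * cexp (-s * u)‖ := by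
    simp only [ofReal_mul, mul_assoc, indicator_comp_sub_mul_exp, norm_mul (c i : ℂ),
      norm_mul (cexp _), norm_indicator_eq_indicator_norm, integral_const_mul]
    rw [integral_Ioi_indicator_Ici_comp_sub _ (hℓ i)]
  refine (tsum_of_summable_integral_norm (fun i ↦ (hf.comp_sub (hℓ i)).const_mul (c i)) ?_
    ).congr_val (by simp only [← mul_assoc, tsum_mul_right])
  simpa only [hnorm] using hc.norm.mul_right _

end HasLaplace

lemma ofReal_exp_mul_mul_cexp (a : ℝ) (s : ℂ) (u : ℝ) :
    (Real.exp (a * u) : ℂ) * cexp (-s * u) = cexp ((a - s) * u) := by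
  rw [ofReal_exp, ← exp_add]
  push_cast
  ring_nf

lemma hasLaplace_exp (a : ℝ) {s : ℂ} (hs : a < s.re) :
    HasLaplace (fun u ↦ Real.exp (a * u)) s (1 / (s - a)) := by
  have h : ((a : ℂ) - s).re < 0 := by simpa using hs
  simp only [HasLaplace, ofReal_exp_mul_mul_cexp]
  refine ⟨integrableOn_exp_mul_complex_Ioi h 0, ?_⟩
  rw [integral_exp_mul_complex_Ioi h 0, ofReal_zero, mul_zero, exp_zero, ← neg_sub s,
    neg_div_neg_eq]

lemma hasLaplace_const (c : ℝ) {s : ℂ} (hs : 0 < s.re) : HasLaplace (fun _ ↦ c) s (c / s) := by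
  simpa [div_eq_mul_inv] using (hasLaplace_exp 0 hs).const_mul c

lemma integrableOn_id_mul_cexp {w : ℂ} (hw : w.re < 0) :
    IntegrableOn (fun u : ℝ ↦ (u : ℂ) * cexp (w * u)) (Ioi 0) := by
  refine (integrableOn_rpow_mul_exp_neg_mul_rpow (s := 1) (p := 1) (b := -w.re) (by norm_num)
    one_pos (by simpa using hw)).mono' (by fun_prop) ?_
  filter_upwards [ae_restrict_mem measurableSet_Ioi] with u hu
  simp [norm_exp, abs_of_pos hu.out]

lemma integral_id_mul_cexp {w : ℂ} (hw : w.re < 0) :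
    ∫ u : ℝ in Ioi 0, (u : ℂ) * cexp (w * u) = 1 / w ^ 2 := by
  have hw0 : w ≠ 0 := fun h ↦ by simp [h] at hw
  have hderiv (u : ℝ) : HasDerivAt (fun u : ℝ ↦ ((u : ℂ) / w - 1 / w ^ 2) * cexp (w * u))
      (u * cexp (w * u)) u := by
    have hid : HasDerivAt (fun u : ℝ ↦ (u : ℂ)) 1 u := (hasDerivAt_id u).ofReal_comp
    refine (((hid.div_const w).sub_const (1 / w ^ 2)).mul (hid.const_mul w).cexp).congr_deriv ?_
    field_simp
    ring
  have hprim : IntegrableOn (fun u : ℝ ↦ ((u : ℂ) / w - 1 / w ^ 2) * cexp (w * u)) (Ioi 0) :=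
    (((integrableOn_id_mul_cexp hw).div_const w).sub
      ((integrableOn_exp_mul_complex_Ioi hw 0).const_mul (1 / w ^ 2))).congr
      (.of_forall fun u ↦ by simp only [Pi.sub_apply]; ring)
  have hlim := tendsto_zero_of_hasDerivAt_of_integrableOn_Ioi (fun u _ ↦ hderiv u)
    (integrableOn_id_mul_cexp hw) hprim
  rw [integral_Ioi_of_hasDerivAt_of_tendsto' (fun u _ ↦ hderiv u) (integrableOn_id_mul_cexp hw)
    hlim]
  simp

lemma hasLaplace_id_mul_exp (a : ℝ) {s : ℂ} (hs : a < s.re) :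
    HasLaplace (fun u ↦ u * Real.exp (a * u)) s (1 / (s - a) ^ 2) := by
  have hre : ((a : ℂ) - s).re < 0 := by simpa using hs
  simp only [HasLaplace, ofReal_mul, mul_assoc, ofReal_exp_mul_mul_cexp]
  exact ⟨integrableOn_id_mul_cexp hre, by rw [integral_id_mul_cexp hre, sub_sq_comm]⟩

lemma hasLaplace_id {s : ℂ} (hs : 0 < s.re) : HasLaplace (fun u ↦ u) s (1 / s ^ 2) := by
  simpa using hasLaplace_id_mul_exp 0 (s := s) (by simpa using hs)

/-! ### Weighted sums of the von Mangoldt function -/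

/-- The normalized von Mangoldt function `Λ(n) / √n`, whose Dirichlet series is `-ζ'/ζ` shifted
to the critical line. -/
noncomputable def weight (n : ℕ) : ℝ :=
  ArithmeticFunction.vonMangoldt n / √n

@[simp] lemma weight_zero : weight 0 = 0 := by simp [weight]

/-- The convolution `∑_{n ≤ e^u} Λ(n)/√n · k(u - log n)` of a kernel `k` on `[0, ∞)` with the
normalized von Mangoldt function on the logarithmic scale. -/
noncomputable def weightedSum (k : ℝ → ℝ) (u : ℝ) : ℝ :=
  ∑ n ∈ Finset.range (⌊Real.exp u⌋₊ + 1), weight n * k (u - Real.log n)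

lemma mem_range_floor_exp {n : ℕ} (hn : n ≠ 0) (u : ℝ) :
    n ∈ Finset.range (⌊Real.exp u⌋₊ + 1) ↔ Real.log n ≤ u := by
  rw [Finset.mem_range, Nat.lt_succ_iff, Nat.le_floor_iff (Real.exp_pos u).le,
    Real.log_le_iff_le_exp (by positivity)]

lemma weightedSum_eq_tsum (k : ℝ → ℝ) (u : ℝ) :
    weightedSum k u = ∑' n : ℕ, weight n * (Ici 0).indicator k (u - Real.log n) := by
  rw [tsum_eq_sum (s := Finset.range (⌊Real.exp u⌋₊ + 1))]
  · refine Finset.sum_congr rfl fun n hn ↦ ?_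
    rcases eq_or_ne n 0 with rfl | h0
    · simp
    · rw [indicator_of_mem (mem_Ici.2 (sub_nonneg.2 ((mem_range_floor_exp h0 u).1 hn)))]
  · intro n hn
    rcases eq_or_ne n 0 with rfl | h0
    · simp
    · have hlt : u - Real.log n ∉ Ici 0 := fun h ↦
        hn ((mem_range_floor_exp h0 u).2 (sub_nonneg.1 h))
      rw [indicator_of_notMem hlt, mul_zero]

lemma logDeriv_riemannZeta₁_eq {z : ℂ} (hz : 1 < z.re) :
    logDeriv riemannZeta₁ z = deriv riemannZeta z / riemannZeta z + 1 / (z - 1) := by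
  have hz1 : z ≠ 1 := fun h ↦ by simp [h] at hz
  have heq : riemannZeta₁ =ᶠ[𝓝 z] fun z ↦ (z - 1) * riemannZeta z := by
    filter_upwards [isOpen_ne.mem_nhds hz1] with y hy
    rw [riemannZeta_eq_inv_sub_mul hy, mul_inv_cancel_left₀ (sub_ne_zero.2 hy)]
  rw [(logDeriv_congr_nhds heq).eq_of_nhds, logDeriv_mul (f := (· - 1)) z (sub_ne_zero.2 hz1)
    (riemannZeta_ne_zero_of_one_le_re hz.le) (by fun_prop) (differentiableAt_riemannZeta hz1),
    logDeriv_apply, logDeriv_apply, deriv_sub_const, deriv_id'', add_comm]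

lemma term_vonMangoldt_half_add (s : ℂ) (n : ℕ) :
    LSeries.term (fun n ↦ (ArithmeticFunction.vonMangoldt n : ℂ)) (1 / 2 + s) n =
      (weight n : ℂ) * cexp (-s * Real.log n) := by
  rcases eq_or_ne n 0 with rfl | h0
  · simp
  have hn : (n : ℂ) ≠ 0 := mod_cast h0
  have hexp : cexp (-s * Real.log n) = ((n : ℂ) ^ s)⁻¹ := by
    rw [cpow_def_of_ne_zero hn, ← exp_neg, natCast_log, neg_mul, mul_comm]
  have hsqrt : ((√n : ℝ) : ℂ) = (n : ℂ) ^ (1 / 2 : ℂ) := by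
    rw [Real.sqrt_eq_rpow, ofReal_cpow n.cast_nonneg]
    push_cast
    rfl
  rw [LSeries.term_of_ne_zero h0, cpow_add _ _ hn, hexp, ← hsqrt, weight, ofReal_div,
    div_mul_eq_div_div, div_eq_mul_inv _ ((n : ℂ) ^ s)]

lemma hasSum_weight {s : ℂ} (hs : 1 / 2 < s.re) :
    HasSum (fun n : ℕ ↦ (weight n : ℂ) * cexp (-s * Real.log n))
      (1 / (s - 1 / 2) - logDeriv riemannZeta₁ (1 / 2 + s)) := by
  have hz : 1 < (1 / 2 + s).re := by
    rw [add_re]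
    norm_num at hs ⊢
    linarith
  have hL := (ArithmeticFunction.LSeriesSummable_vonMangoldt hz).LSeriesHasSum
  rw [LSeriesHasSum, ArithmeticFunction.LSeries_vonMangoldt_eq_deriv_riemannZeta_div hz,
    funext (term_vonMangoldt_half_add s)] at hL
  convert hL using 1
  rw [logDeriv_riemannZeta₁_eq hz]
  ring

lemma hasLaplace_weightedSum {k : ℝ → ℝ} {s v : ℂ} (hs : 1 / 2 < s.re) (hk : HasLaplace k s v) :
    HasLaplace (weightedSum k) s ((1 / (s - 1 / 2) - logDeriv riemannZeta₁ (1 / 2 + s)) * v) := by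
  rw [← (hasSum_weight hs).tsum_eq, funext (weightedSum_eq_tsum k)]
  exact hk.tsum_comp_sub (fun n ↦ Real.log_natCast_nonneg n) (hasSum_weight hs).summable

/-- The normalized error term `√x (∑_{n ≤ x} Λ(n)/n - log x + γ)` in Mertens' theorem at
`x = e^u`. -/
noncomputable def mertensError (u : ℝ) : ℝ :=
  Real.exp (u / 2) * (∑ n ∈ Finset.range (⌊Real.exp u⌋₊ + 1), ArithmeticFunction.vonMangoldt n / n -
    u + Real.eulerMascheroniConstant)

lemma exp_half_mul_sum_vonMangoldt_div (u : ℝ) :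
    Real.exp (u / 2) *
        ∑ n ∈ Finset.range (⌊Real.exp u⌋₊ + 1), ArithmeticFunction.vonMangoldt n / n =
      weightedSum (fun t ↦ Real.exp (1 / 2 * t)) u := by
  rw [weightedSum, Finset.mul_sum]
  refine Finset.sum_congr rfl fun n _ ↦ ?_
  rcases eq_or_ne n 0 with rfl | h0
  · simp
  have hn : (0 : ℝ) < n := by positivity
  have hexp : Real.exp (1 / 2 * (u - Real.log n)) = Real.exp (u / 2) / √n := by
    rw [mul_sub, Real.exp_sub, Real.sqrt_eq_rpow, Real.rpow_def_of_pos hn]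
    ring_nf
  rw [hexp, weight, div_mul_div_comm, Real.mul_self_sqrt hn.le]
  ring

/-- The analytic continuation of the Laplace transform of `mertensError`. Its only singularities
are the zeros of `ζ`, the pole at `1` being removed by the difference quotient. -/
noncomputable def mertensTransform (s : ℂ) : ℂ :=
  -dslope (logDeriv riemannZeta₁) 1 (1 / 2 + s)

lemma logDeriv_riemannZeta₁_one : logDeriv riemannZeta₁ 1 = Real.eulerMascheroniConstant := by
  rw [logDeriv_apply, deriv_riemannZeta₁_one, riemannZeta₁_one, div_one]

lemma mul_mertensTransform (s : ℂ) :
    (s - 1 / 2) * mertensTransform s =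
      Real.eulerMascheroniConstant - logDeriv riemannZeta₁ (1 / 2 + s) := by
  have h := sub_smul_dslope (logDeriv riemannZeta₁) 1 (1 / 2 + s)
  rw [smul_eq_mul, logDeriv_riemannZeta₁_one] at h
  rw [mertensTransform]
  linear_combination -h

lemma hasLaplace_mertensError {s : ℂ} (hs : 1 / 2 < s.re) :
    HasLaplace mertensError s (mertensTransform s) := by
  have hhalf : ((1 / 2 : ℝ) : ℂ) = 1 / 2 := by norm_num
  have hsum := hasLaplace_weightedSum hs (hasLaplace_exp (1 / 2) hs)
  have hid := hasLaplace_id_mul_exp (1 / 2) hs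
  have hconst := (hasLaplace_exp (1 / 2) hs).const_mul Real.eulerMascheroniConstant
  rw [hhalf] at hsum hid hconst
  have hne : s - 1 / 2 ≠ 0 := fun h ↦ by
    rw [sub_eq_zero.1 h] at hs
    norm_num at hs
  refine (((hsum.sub hid).add hconst).congr fun u _ ↦ ?_).congr_val (mul_left_cancel₀ hne ?_)
  · rw [← exp_half_mul_sum_vonMangoldt_div, mertensError, show 1 / 2 * u = u / 2 by ring]
    ring
  · rw [mul_mertensTransform]
    generalize logDeriv riemannZeta₁ (1 / 2 + s) = L
    generalize s - 1 / 2 = w at hne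
    field_simp
    ring

/-! ### Landau's theorem -/

lemma eq_ofReal_of_analyticAt {F G : ℂ → ℂ} {a b : ℝ} (hF : ∀ x : ℝ, a < x → AnalyticAt ℂ F x)
    (hG : ∀ x : ℝ, a < x → AnalyticAt ℂ G x) (h : ∀ x : ℝ, b < x → F x = G x) {x : ℝ}
    (hx : a < x) : F x = G x := by
  have hcomp {K : ℂ → ℂ} (hK : ∀ x : ℝ, a < x → AnalyticAt ℂ K x) :
      AnalyticOnNhd ℝ (fun x : ℝ ↦ K x) (Ioi a) := fun x hx ↦
    (hK x hx).restrictScalars.comp (ofRealCLM.analyticAt x)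
  refine (hcomp hF).eqOn_of_preconnected_of_eventuallyEq (hcomp hG) isPreconnected_Ioi
    (z₀ := max a b + 1) (mem_Ioi.2 ?_) ?_ hx
  · linarith [le_max_left a b]
  · filter_upwards [lt_mem_nhds (show b < max a b + 1 by linarith [le_max_right a b])] with y hy
    exact h y hy

section ComplexMGF

variable {Ω : Type*} [MeasurableSpace Ω] {X : Ω → ℝ} {ν : Measure Ω}

lemma hasSum_exp_taylor (t h x : ℝ) :
    HasSum (fun n : ℕ ↦ (n.factorial : ℝ)⁻¹ * ((-h) ^ n * (x ^ n * Real.exp (t * x))))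
      (Real.exp ((t - h) * x)) := by
  have hexp := (NormedSpace.exp_series_hasSum_exp' (𝕂 := ℝ) (-h * x)).mul_right (Real.exp (t * x))
  rw [← Real.exp_eq_exp_ℝ, ← Real.exp_add, show -h * x + t * x = (t - h) * x by ring] at hexp
  refine hexp.congr_fun fun n ↦ ?_
  rw [smul_eq_mul, mul_pow]
  ring

-- For `X ≤ 0` and `0 ≤ h` the Taylor series of `e^((t - h) X)` at `t` has nonnegative terms, so
-- convergence of the Taylor series of `g` forces integrability.
lemma sub_mem_integrableExpSet (hX : ∀ᵐ ω ∂ν, X ω ≤ 0) {g : ℂ → ℂ} {t h r : ℝ}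
    (ht : t ∈ interior (integrableExpSet X ν)) (hg : DifferentiableOn ℂ g (Metric.ball t r))
    (heq : complexMGF X ν =ᶠ[𝓝 (t : ℂ)] g) (hh : 0 ≤ h) (hr : h < r) :
    t - h ∈ integrableExpSet X ν := by
  set f : ℕ → Ω → ℝ := fun n ω ↦
    (n.factorial : ℝ)⁻¹ * ((-h) ^ n * (X ω ^ n * Real.exp (t * X ω))) with hf
  have hint (n : ℕ) : Integrable (f n) ν :=
    ((integrable_pow_mul_exp_of_mem_interior_integrableExpSet ht n).const_mul _).const_mul _
  have hnorm (n : ℕ) : ∫ ω, ‖f n ω‖ ∂ν = ∫ ω, f n ω ∂ν := by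
    refine integral_congr_ae ?_
    filter_upwards [hX] with ω hω
    have hmul : 0 ≤ -h * X ω := by nlinarith
    rw [hf, Real.norm_of_nonneg]
    simp only [← mul_assoc ((-h) ^ n), ← mul_pow]
    positivity
  have hball : ((t - h : ℝ) : ℂ) ∈ Metric.ball (t : ℂ) r := by
    rwa [Metric.mem_ball, dist_eq, ← ofReal_sub, norm_real, sub_sub_cancel_left, norm_neg,
      Real.norm_of_nonneg hh]
  have hsum : Summable fun n ↦ ∫ ω, ‖f n ω‖ ∂ν := by
    rw [← summable_ofReal]
    refine (hasSum_taylorSeries_on_ball hg hball).summable.congr fun n ↦ ?_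
    rw [hnorm, ← heq.iteratedDeriv_eq, iteratedDeriv_complexMGF (by simpa using ht), hf,
      integral_const_mul, integral_const_mul, ofReal_mul, ofReal_mul, ← integral_complex_ofReal]
    simp
  exact (integrable_tsum_of_summable_integral_norm hint hsum).congr
    (.of_forall fun ω ↦ (hasSum_exp_taylor t h (X ω)).tsum_eq)

lemma analyticAt_complexMGF_of_Ioi_subset {a : ℝ} (ha : Ioi a ⊆ integrableExpSet X ν) {x : ℝ}
    (hx : a < x) : AnalyticAt ℂ (complexMGF X ν) x :=
  analyticOnNhd_complexMGF _ (interior_maximal ha isOpen_Ioi (by simpa using hx))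

lemma complexMGF_eventuallyEq_of_Ioi_subset {g : ℂ → ℂ} {a σ₀ : ℝ}
    (ha : Ioi a ⊆ integrableExpSet X ν) (hg : ∀ x : ℝ, a < x → AnalyticAt ℂ g x)
    (heq : ∀ σ : ℝ, σ₀ < σ → complexMGF X ν σ = g σ) {t : ℝ} (ht : a < t) :
    complexMGF X ν =ᶠ[𝓝 (t : ℂ)] g := by
  have hM (x : ℝ) (hx : a < x) := analyticAt_complexMGF_of_Ioi_subset ha hx
  refine ((hM t ht).frequently_eq_iff_eventually_eq (hg t ht)).1
    ((tendsto_ofReal_nhdsNE t).frequently (Eventually.frequently ?_))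
  filter_upwards [nhdsWithin_le_nhds (lt_mem_nhds ht)] with x hx
  exact eq_ofReal_of_analyticAt hM hg heq hx

lemma exists_lt_Ioi_subset_integrableExpSet (hX : ∀ᵐ ω ∂ν, X ω ≤ 0) {g : ℂ → ℂ} {a σ₀ : ℝ}
    (ha : Ioi a ⊆ integrableExpSet X ν) (hg : ∀ x : ℝ, a ≤ x → AnalyticAt ℂ g x)
    (heq : ∀ σ : ℝ, σ₀ < σ → complexMGF X ν σ = g σ) :
    ∃ b < a, Ioi b ⊆ integrableExpSet X ν := by
  obtain ⟨r, hr, hball⟩ := (hg a le_rfl).exists_ball_analyticOnNhd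
  have hat : a < a + r / 4 := by linarith
  have hsub : Metric.ball ((a + r / 4 : ℝ) : ℂ) (r / 2) ⊆ Metric.ball (a : ℂ) r := by
    refine Metric.ball_subset_ball' ?_
    rw [dist_eq, ← ofReal_sub, norm_real, add_sub_cancel_left, Real.norm_of_nonneg (by positivity)]
    linarith
  have hmem := sub_mem_integrableExpSet (h := 3 * r / 8) hX
    (interior_maximal ha isOpen_Ioi hat) (hball.mono hsub).differentiableOn
    (complexMGF_eventuallyEq_of_Ioi_subset ha (fun x hx ↦ hg x hx.le) heq hat)
    (by positivity) (by linarith)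
  refine ⟨a + r / 4 - 3 * r / 8, by linarith, fun x hx ↦ ?_⟩
  exact integrable_exp_mul_of_le_of_le hmem (ha (lt_max_of_lt_right (lt_add_one a))) (le_of_lt hx)
    (le_max_left x (a + 1))

/-- **Landau's theorem**: the abscissa of convergence of the moment generating function of a
nonpositive variable is a singularity of any analytic continuation. -/
lemma Ioi_subset_integrableExpSet_of_analyticAt (hX : ∀ᵐ ω ∂ν, X ω ≤ 0) {g : ℂ → ℂ}
    {c σ₀ : ℝ} (hg : ∀ x : ℝ, c < x → AnalyticAt ℂ g x) (hσ₀ : Ioi σ₀ ⊆ integrableExpSet X ν)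
    (heq : ∀ σ : ℝ, σ₀ < σ → complexMGF X ν σ = g σ) : Ioi c ⊆ integrableExpSet X ν := by
  set B : Set ℝ := {b | c ≤ b ∧ Ioi b ⊆ integrableExpSet X ν}
  have hne : B.Nonempty :=
    ⟨max c σ₀, le_max_left _ _, (Ioi_subset_Ioi (le_max_right _ _)).trans hσ₀⟩
  have hbdd : BddBelow B := ⟨c, fun b hb ↦ hb.1⟩
  have hinf : Ioi (sInf B) ⊆ integrableExpSet X ν := fun σ hσ ↦ by
    obtain ⟨b, hb, hbσ⟩ := exists_lt_of_csInf_lt hne hσ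
    exact hb.2 hbσ
  rcases (le_csInf hne fun b hb ↦ hb.1 : c ≤ sInf B).eq_or_lt with h | h
  · rwa [h]
  · obtain ⟨b, hb, hsub⟩ :=
      exists_lt_Ioi_subset_integrableExpSet hX hinf (fun x hx ↦ hg x (h.trans_le hx)) heq
    have hmem : max c b ∈ B :=
      ⟨le_max_left _ _, (Ioi_subset_Ioi (le_max_right _ _)).trans hsub⟩
    exact absurd (csInf_le hbdd hmem) (not_le.2 (max_lt h hb))

end ComplexMGF

/-- The measure on `(0, ∞)` with density `H`. The moment generating function of `u ↦ -u` under it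
is the Laplace transform of `H`. -/
noncomputable def laplaceMeasure (H : ℝ → ℝ) : Measure ℝ :=
  (volume.restrict (Ioi 0)).withDensity fun u ↦ ENNReal.ofReal (H u)

lemma HasLaplace.aemeasurable {H : ℝ → ℝ} {s v : ℂ} (h : HasLaplace H s v) :
    AEMeasurable H (volume.restrict (Ioi 0)) := by
  have hmeas : AEMeasurable (fun u : ℝ ↦ ((H u : ℂ) * cexp (-s * u) * cexp (s * u)).re)
      (volume.restrict (Ioi 0)) :=
    (h.1.1.aemeasurable.mul (by fun_prop)).re
  refine hmeas.congr (.of_forall fun u ↦ ?_)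
  simp only [mul_assoc, ← exp_add, neg_mul, neg_add_cancel, exp_zero, mul_one, ofReal_re]

section LaplaceMeasure

variable {H : ℝ → ℝ}

lemma ae_neg_le_zero_laplaceMeasure : ∀ᵐ u ∂laplaceMeasure H, -u ≤ (0 : ℝ) := by
  refine (withDensity_absolutelyContinuous _ _).ae_le ?_
  filter_upwards [ae_restrict_mem measurableSet_Ioi] with u hu
  exact neg_nonpos.2 (le_of_lt hu)

lemma toNNReal_smul_cexp_mul_neg (hH : ∀ u, 0 < u → 0 ≤ H u) {u : ℝ} (hu : 0 < u) (s : ℂ) :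
    (H u).toNNReal • cexp (s * (-u : ℝ)) = (H u : ℂ) * cexp (-s * u) := by
  rw [NNReal.smul_def, Real.coe_toNNReal _ (hH u hu), real_smul, ofReal_neg, neg_mul_comm]

lemma integrable_cexp_laplaceMeasure (hmeas : AEMeasurable H (volume.restrict (Ioi 0)))
    (hH : ∀ u, 0 < u → 0 ≤ H u) {s : ℂ} :
    Integrable (fun u : ℝ ↦ cexp (s * (-u : ℝ))) (laplaceMeasure H) ↔
      IntegrableOn (fun u : ℝ ↦ (H u : ℂ) * cexp (-s * u)) (Ioi 0) := by
  refine (integrable_withDensity_iff_integrable_smul₀ hmeas.real_toNNReal).trans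
    (integrable_congr ?_)
  filter_upwards [ae_restrict_mem measurableSet_Ioi] with u hu
  exact toNNReal_smul_cexp_mul_neg hH hu s

lemma complexMGF_laplaceMeasure (hmeas : AEMeasurable H (volume.restrict (Ioi 0)))
    (hH : ∀ u, 0 < u → 0 ≤ H u) (s : ℂ) :
    complexMGF (fun u : ℝ ↦ -u) (laplaceMeasure H) s =
      ∫ u : ℝ in Ioi 0, (H u : ℂ) * cexp (-s * u) :=
  (integral_withDensity_eq_integral_smul₀ hmeas.real_toNNReal _).trans
    (setIntegral_congr_fun measurableSet_Ioi fun _ hu ↦ toNNReal_smul_cexp_mul_neg hH hu s)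

lemma mem_integrableExpSet_laplaceMeasure (hmeas : AEMeasurable H (volume.restrict (Ioi 0)))
    (hH : ∀ u, 0 < u → 0 ≤ H u) {σ : ℝ} :
    σ ∈ integrableExpSet (fun u : ℝ ↦ -u) (laplaceMeasure H) ↔
      IntegrableOn (fun u : ℝ ↦ (H u : ℂ) * cexp (-σ * u)) (Ioi 0) := by
  rw [← integrable_cexp_laplaceMeasure hmeas hH]
  simp only [← ofReal_mul, ← ofReal_exp]
  refine ⟨fun h ↦ h.ofReal, fun h ↦ ?_⟩
  have hre := h.re
  simp only [RCLike.re_eq_complex_re, ofReal_re] at hre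
  exact hre

end LaplaceMeasure

lemma exists_hasLaplace_of_analyticAt {H : ℝ → ℝ} (hH : ∀ u, 0 < u → 0 ≤ H u) {G : ℂ → ℂ}
    (hG : ∀ x : ℝ, 0 < x → AnalyticAt ℂ G x) {σ₀ : ℝ}
    (hσ₀ : ∀ σ : ℝ, σ₀ < σ → HasLaplace H σ (G σ)) :
    ∃ L : ℂ → ℂ, DifferentiableOn ℂ L {s | 0 < s.re} ∧ (∀ s : ℂ, 0 < s.re → HasLaplace H s (L s)) ∧
      (∀ x : ℝ, 0 < x → L x = G x) ∧ ∀ s : ℂ, 0 < s.re → ‖L s‖ ≤ ‖G s.re‖ := by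
  have hmeas := (hσ₀ (σ₀ + 1) (lt_add_one _)).aemeasurable
  set ν := laplaceMeasure H
  have hmgf : ∀ σ : ℝ, σ₀ < σ → complexMGF (fun u : ℝ ↦ -u) ν σ = G σ := fun σ hσ ↦
    (complexMGF_laplaceMeasure hmeas hH σ).trans (hσ₀ σ hσ).2
  have hsub : Ioi 0 ⊆ integrableExpSet (fun u : ℝ ↦ -u) ν :=
    Ioi_subset_integrableExpSet_of_analyticAt ae_neg_le_zero_laplaceMeasure hG
      (fun σ hσ ↦ (mem_integrableExpSet_laplaceMeasure hmeas hH).2 (hσ₀ σ hσ).1) hmgf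
  have hint (s : ℂ) (hs : 0 < s.re) : s.re ∈ interior (integrableExpSet (fun u : ℝ ↦ -u) ν) :=
    interior_maximal hsub isOpen_Ioi hs
  have hreal (x : ℝ) (hx : 0 < x) : complexMGF (fun u : ℝ ↦ -u) ν x = G x :=
    eq_ofReal_of_analyticAt (fun _ hy ↦ analyticAt_complexMGF_of_Ioi_subset hsub hy) hG hmgf hx
  refine ⟨complexMGF (fun u : ℝ ↦ -u) ν, fun s hs ↦
    (analyticOnNhd_complexMGF s (hint s hs)).differentiableAt.differentiableWithinAt,
    fun s hs ↦ ⟨(integrable_cexp_laplaceMeasure hmeas hH).1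
      (integrable_cexp_mul_of_re_mem_interior_integrableExpSet (hint s hs)),
      (complexMGF_laplaceMeasure hmeas hH s).symm⟩, hreal, fun s hs ↦ ?_⟩
  rw [← hreal s.re hs, complexMGF_ofReal, norm_real, Real.norm_of_nonneg mgf_nonneg]
  exact norm_complexMGF_le_mgf

/-! ### Consequences of a one-sided bound -/

lemma analyticAt_mertensTransform {s : ℂ} (hs : riemannZeta₁ (1 / 2 + s) ≠ 0) :
    AnalyticAt ℂ mertensTransform s := by
  set V : Set ℂ := {z | riemannZeta₁ z ≠ 0}
  have hV : IsOpen V := isOpen_ne.preimage differentiable_riemannZeta₁.continuous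
  have hζ (z : ℂ) : AnalyticAt ℂ riemannZeta₁ z := differentiable_riemannZeta₁.analyticAt z
  have hlog : DifferentiableOn ℂ (logDeriv riemannZeta₁) V := fun z hz ↦
    ((hζ z).deriv.div (hζ z) hz).differentiableAt.differentiableWithinAt
  have hone : V ∈ 𝓝 1 := hV.mem_nhds (by simp [V, riemannZeta₁_one])
  have hslope := ((differentiableOn_dslope hone).2 hlog).analyticAt (hV.mem_nhds hs)
  exact (hslope.comp_of_eq (f := fun s ↦ 1 / 2 + s) (by fun_prop) rfl).neg

lemma analyticAt_mertensTransform_ofReal {x : ℝ} (hx : 0 ≤ x) :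
    AnalyticAt ℂ mertensTransform x := by
  have h := riemannZeta₁_ofReal_ne_zero (x := 1 / 2 + x) (by positivity)
  push_cast at h
  exact analyticAt_mertensTransform h

-- A zero of `F` of order `n` would be a zero of `F'` of order `n - 1`, but one of `f F = F'` of
-- order at least `n`.
lemma ne_zero_of_logDeriv_eventuallyEq {U : Set ℂ} (hUo : IsOpen U) (hU : IsPreconnected U)
    {F f : ℂ → ℂ} (hF : AnalyticOnNhd ℂ F U) (hf : AnalyticOnNhd ℂ f U) {z₀ : ℂ} (hz₀ : z₀ ∈ U)
    (hne : F z₀ ≠ 0) (hlog : logDeriv F =ᶠ[𝓝 z₀] f) {z : ℂ} (hz : z ∈ U) : F z ≠ 0 := by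
  intro hzero
  have hode : deriv F =ᶠ[𝓝 z₀] f * F := by
    filter_upwards [hlog, (hF z₀ hz₀).continuousAt.eventually_ne hne] with w hw hw0
    rw [Pi.mul_apply, ← hw, logDeriv_apply, div_mul_cancel₀ _ hw0]
  have heq := hF.deriv.eqOn_of_preconnected_of_eventuallyEq (hf.mul hF) hU hz₀ hode
  have hderiv : analyticOrderAt (deriv F) z = analyticOrderAt f z + analyticOrderAt F z := by
    rw [analyticOrderAt_congr (heq.eventuallyEq_of_mem (hUo.mem_nhds hz))]
    exact analyticOrderAt_mul (hf z hz) (hF z hz)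
  have horder : analyticOrderAt (deriv F) z + 1 = analyticOrderAt F z := by
    simpa [hzero] using (hF z hz).analyticOrderAt_deriv_add_one
  have htop : analyticOrderAt F z ≠ ⊤ :=
    hF.analyticOrderAt_ne_top_of_isPreconnected hU hz₀ hz
      (by simp [(hF z₀ hz₀).analyticOrderAt_eq_zero.2 hne])
  refine (ENat.lt_add_one_iff htop).2 le_rfl |>.not_ge ?_
  calc analyticOrderAt F z + 1 ≤ analyticOrderAt f z + analyticOrderAt F z + 1 := by gcongr; simp
    _ = analyticOrderAt F z := by rw [← hderiv, horder]

lemma logDeriv_riemannZeta₁_half_add (s : ℂ) :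
    logDeriv (fun s ↦ riemannZeta₁ (1 / 2 + s)) s = logDeriv riemannZeta₁ (1 / 2 + s) := by
  rw [logDeriv_apply, logDeriv_apply, deriv_comp_const_add]

lemma norm_const_mul_one_div_add_one_div_sq_le (K : ℝ) {σ : ℝ} (hσ : 0 < σ) (hσ1 : σ ≤ 1) {w : ℂ}
    (hw : σ ≤ ‖w‖) : ‖(K : ℂ) * (1 / w + 1 / w ^ 2)‖ ≤ 2 * |K| / σ ^ 2 := by
  have hsum : ‖1 / w + 1 / w ^ 2‖ ≤ 1 / σ ^ 2 + 1 / σ ^ 2 := by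
    refine (norm_add_le _ _).trans ?_
    simp only [norm_div, norm_one, norm_pow]
    gcongr
    nlinarith
  calc ‖(K : ℂ) * (1 / w + 1 / w ^ 2)‖ ≤ |K| * (1 / σ ^ 2 + 1 / σ ^ 2) := by
        rw [norm_mul, norm_real, Real.norm_eq_abs]
        gcongr
    _ = 2 * |K| / σ ^ 2 := by ring

section OneSidedBound

variable {ε K : ℝ}

lemma hasLaplace_const_mul_one_add (K : ℝ) {s : ℂ} (hs : 0 < s.re) :
    HasLaplace (fun u ↦ K * (1 + u)) s (K * (1 / s + 1 / s ^ 2)) :=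
  (((hasLaplace_const 1 hs).add (hasLaplace_id hs)).const_mul K).congr_val (by rw [ofReal_one])

lemma exists_norm_mertensTransform_ofReal_le :
    ∃ B, ∀ x ∈ Icc (0 : ℝ) 1, ‖mertensTransform x‖ ≤ B :=
  isCompact_Icc.exists_bound_of_continuousOn (f := fun x : ℝ ↦ mertensTransform x) fun _ hx ↦
    ((analyticAt_mertensTransform_ofReal hx.1).continuousAt.comp
      continuous_ofReal.continuousAt).continuousWithinAt

-- Landau's theorem for the nonnegative function `K (1 + u) - ε mertensError u`.
lemma exists_hasLaplace_mertensError (hε : ε ≠ 0)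
    (h : ∀ u, 0 < u → ε * mertensError u ≤ K * (1 + u)) :
    ∃ f : ℂ → ℂ, DifferentiableOn ℂ f {s | 0 < s.re} ∧
      (∀ s : ℂ, 0 < s.re → HasLaplace mertensError s (f s)) ∧
      ∃ M, ∀ s : ℂ, 0 < s.re → s.re ≤ 1 → ‖f s‖ ≤ M / s.re ^ 2 := by
  set G : ℂ → ℂ := fun s ↦ K * (1 / s + 1 / s ^ 2) - ε * mertensTransform s
  have hGan (x : ℝ) (hx : 0 < x) : AnalyticAt ℂ G x := by
    have hx0 : (x : ℂ) ≠ 0 := ofReal_ne_zero.2 hx.ne'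
    exact (analyticAt_const.mul ((analyticAt_const.div analyticAt_id hx0).add
      (analyticAt_const.div (analyticAt_id.pow 2) (pow_ne_zero 2 hx0)))).sub
      (analyticAt_const.mul (analyticAt_mertensTransform_ofReal hx.le))
  have hGσ (σ : ℝ) (hσ : 1 / 2 < σ) :
      HasLaplace (fun u ↦ K * (1 + u) - ε * mertensError u) σ (G σ) :=
    (hasLaplace_const_mul_one_add K (by rw [ofReal_re]; linarith)).sub
      ((hasLaplace_mertensError (by rwa [ofReal_re])).const_mul ε)
  obtain ⟨L, hLd, hL, -, hLG⟩ :=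
    exists_hasLaplace_of_analyticAt (fun u hu ↦ sub_nonneg.2 (h u hu)) hGan hGσ
  obtain ⟨B, hB⟩ := exists_norm_mertensTransform_ofReal_le
  refine ⟨fun s ↦ (ε⁻¹ : ℝ) * (K * (1 / s + 1 / s ^ 2) - L s), fun s hs ↦ ?_, fun s hs ↦ ?_,
    |ε⁻¹| * (4 * |K| + |ε| * B), fun s hs hs1 ↦ ?_⟩
  · have hdiff : DifferentiableAt ℂ (fun s : ℂ ↦ 1 / s + 1 / s ^ 2) s := by
      have hs0 := ne_zero_of_re_pos hs
      fun_prop (disch := simpa using hs0)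
    exact ((hdiff.differentiableWithinAt.const_mul _).sub (hLd s hs)).const_mul _
  · refine (((hasLaplace_const_mul_one_add K hs).sub (hL s hs)).const_mul ε⁻¹).congr fun u _ ↦ ?_
    field_simp
    ring
  · have hσ : ‖(s.re : ℂ)‖ = s.re := by rw [norm_real, Real.norm_of_nonneg hs.le]
    have hB' : ‖mertensTransform s.re‖ ≤ B / s.re ^ 2 :=
      (hB _ ⟨hs.le, hs1⟩).trans (le_div_self ((norm_nonneg _).trans (hB 0 (by simp)))
        (by positivity) (pow_le_one₀ hs.le hs1))
    calc ‖(ε⁻¹ : ℝ) * (K * (1 / s + 1 / s ^ 2) - L s)‖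
        ≤ |ε⁻¹| * (2 * |K| / s.re ^ 2 + (2 * |K| / s.re ^ 2 + |ε| * (B / s.re ^ 2))) := by
          rw [norm_mul, norm_real, Real.norm_eq_abs]
          gcongr
          refine norm_sub_le_of_le (norm_const_mul_one_div_add_one_div_sq_le K hs hs1
            (re_le_norm s)) ((hLG s hs).trans (norm_sub_le_of_le
            (norm_const_mul_one_div_add_one_div_sq_le K hs hs1 hσ.ge) ?_))
          rw [norm_mul, norm_real, Real.norm_eq_abs]
          gcongr
      _ = |ε⁻¹| * (4 * |K| + |ε| * B) / s.re ^ 2 := by ring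

lemma riemannZeta₁_half_add_ne_zero_of_le (hε : ε ≠ 0)
    (h : ∀ u, 0 < u → ε * mertensError u ≤ K * (1 + u)) {s : ℂ} (hs : 0 < s.re) :
    riemannZeta₁ (1 / 2 + s) ≠ 0 := by
  obtain ⟨f, hfd, hf, -⟩ := exists_hasLaplace_mertensError hε h
  have hfe {s : ℂ} (hs : 1 / 2 < s.re) : f s = mertensTransform s :=
    (hf s (by linarith)).2.symm.trans (hasLaplace_mertensError hs).2
  refine ne_zero_of_logDeriv_eventuallyEq (F := fun s ↦ riemannZeta₁ (1 / 2 + s))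
    (f := fun s ↦ Real.eulerMascheroniConstant - (s - 1 / 2) * f s) isOpen_re_pos
    isPreconnected_re_pos (fun z _ ↦ ?_) ?_ (z₀ := 1) (by simp) ?_ ?_ hs
  · exact (differentiable_riemannZeta₁.comp (differentiable_id.const_add _)).analyticAt z
  · refine DifferentiableOn.analyticOnNhd ?_ isOpen_re_pos
    exact ((differentiableOn_id.sub_const _).mul hfd).const_sub _
  · exact riemannZeta₁_ne_zero_of_one_le_re (by norm_num)
  · have hmem : {w : ℂ | 1 / 2 < w.re} ∈ 𝓝 (1 : ℂ) :=
      (isOpen_lt continuous_const continuous_re).mem_nhds (by norm_num)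
    filter_upwards [hmem] with w hw
    rw [logDeriv_riemannZeta₁_half_add, hfe hw, mul_mertensTransform, sub_sub_cancel]

lemma exists_hasLaplace_mertensTransform_of_le (hε : ε ≠ 0)
    (h : ∀ u, 0 < u → ε * mertensError u ≤ K * (1 + u)) :
    (∀ s : ℂ, 0 < s.re → HasLaplace mertensError s (mertensTransform s)) ∧
      ∃ M, ∀ s : ℂ, 0 < s.re → s.re ≤ 1 → ‖mertensTransform s‖ ≤ M / s.re ^ 2 := by
  obtain ⟨f, hfd, hf, M, hM⟩ := exists_hasLaplace_mertensError hε h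
  have heq : EqOn mertensTransform f {s | 0 < s.re} := by
    refine AnalyticOnNhd.eqOn_of_preconnected_of_eventuallyEq
      (fun s hs ↦ analyticAt_mertensTransform (riemannZeta₁_half_add_ne_zero_of_le hε h hs))
      (hfd.analyticOnNhd isOpen_re_pos) isPreconnected_re_pos (z₀ := 1) (by simp) ?_
    have hmem : {w : ℂ | 1 / 2 < w.re} ∈ 𝓝 (1 : ℂ) :=
      (isOpen_lt continuous_const continuous_re).mem_nhds (by norm_num)
    filter_upwards [hmem] with w hw
    have hw : 1 / 2 < w.re := hw
    exact (hasLaplace_mertensError hw).2.symm.trans (hf w (by linarith)).2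
  exact ⟨fun s hs ↦ (hf s hs).congr_val (heq hs).symm, M, fun s hs hs1 ↦ heq hs ▸ hM s hs hs1⟩

lemma integrableOn_mertensError_mul_exp_of_le (hε : ε ≠ 0)
    (h : ∀ u, 0 < u → ε * mertensError u ≤ K * (1 + u)) {σ : ℝ} (hσ : 0 < σ) :
    IntegrableOn (fun u ↦ mertensError u * Real.exp (-σ * u)) (Ioi 0) := by
  have hre := ((exists_hasLaplace_mertensTransform_of_le hε h).1 σ (by rwa [ofReal_re])).1.re
  refine hre.congr (.of_forall fun u ↦ ?_)
  simp only [RCLike.re_eq_complex_re]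
  rw [← ofReal_neg, ← ofReal_mul, ← ofReal_exp, ← ofReal_mul, ofReal_re]

lemma exists_norm_logDeriv_riemannZeta₁_le_of_le (hε : ε ≠ 0)
    (h : ∀ u, 0 < u → ε * mertensError u ≤ K * (1 + u)) :
    ∃ M, ∀ s : ℂ, 0 < s.re → s.re ≤ 1 →
      ‖logDeriv riemannZeta₁ (1 / 2 + s)‖ ≤ M * (1 + ‖s‖) / s.re ^ 2 := by
  obtain ⟨-, M, hM⟩ := exists_hasLaplace_mertensTransform_of_le hε h
  set γ := Real.eulerMascheroniConstant
  refine ⟨|γ| + M, fun s hs hs1 ↦ ?_⟩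
  have hs0 := norm_nonneg s
  have hhalf : ‖s - 1 / 2‖ ≤ 1 + ‖s‖ := by
    refine (norm_sub_le _ _).trans ?_
    norm_num
    linarith
  have hγ : |γ| ≤ |γ| * (1 + ‖s‖) / s.re ^ 2 := by
    rw [mul_div_assoc]
    refine le_mul_of_one_le_right (abs_nonneg γ) ((one_le_div (by positivity)).2 ?_)
    linarith [pow_le_one₀ (n := 2) hs.le hs1]
  calc ‖logDeriv riemannZeta₁ (1 / 2 + s)‖ = ‖(γ : ℂ) - (s - 1 / 2) * mertensTransform s‖ := by
        rw [mul_mertensTransform, sub_sub_cancel]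
    _ ≤ |γ| * (1 + ‖s‖) / s.re ^ 2 + (1 + ‖s‖) * (M / s.re ^ 2) := by
        refine norm_sub_le_of_le (by rwa [norm_real, Real.norm_eq_abs]) ?_
        rw [norm_mul]
        gcongr
        exact hM s hs hs1
    _ = (|γ| + M) * (1 + ‖s‖) / s.re ^ 2 := by ring

end OneSidedBound

lemma exists_norm_logDeriv_riemannZeta₁_le_of_one_le_re :
    ∃ M, ∀ s : ℂ, 1 ≤ s.re → ‖logDeriv riemannZeta₁ (1 / 2 + s)‖ ≤ M := by
  set b : ℕ → ℝ := fun n ↦ ‖(weight n : ℂ) * cexp (-1 * Real.log n)‖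
  have hb : Summable b := (hasSum_weight (s := 1) (by norm_num)).summable.norm
  refine ⟨2 + ∑' n, b n, fun s hs ↦ ?_⟩
  have hseries : ‖1 / (s - 1 / 2) - logDeriv riemannZeta₁ (1 / 2 + s)‖ ≤ ∑' n, b n := by
    rw [← (hasSum_weight (s := s) (by linarith)).tsum_eq]
    refine tsum_of_norm_bounded hb.hasSum fun n ↦ ?_
    have hlog := Real.log_natCast_nonneg n
    have hre : (-s * (Real.log n : ℂ)).re ≤ (-1 * (Real.log n : ℂ)).re := by
      rw [re_mul_ofReal, re_mul_ofReal, neg_re, neg_re, one_re]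
      nlinarith
    simp only [b]
    rw [norm_mul, norm_mul, norm_exp, norm_exp]
    gcongr
  have hpole : ‖1 / (s - 1 / 2)‖ ≤ 2 := by
    have hre : 1 / 2 ≤ (s - 1 / 2).re := by
      norm_num
      linarith
    rw [norm_div, norm_one]
    exact (one_div_le_one_div_of_le one_half_pos (hre.trans (re_le_norm _))).trans (by norm_num)
  calc ‖logDeriv riemannZeta₁ (1 / 2 + s)‖
      = ‖1 / (s - 1 / 2) - (1 / (s - 1 / 2) - logDeriv riemannZeta₁ (1 / 2 + s))‖ := by
        rw [sub_sub_cancel]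
    _ ≤ 2 + ∑' n, b n := norm_sub_le_of_le hpole hseries

/-! ### Partial fractions for even entire functions with imaginary zeros -/

section Zeros

variable {f : ℂ → ℂ} {a : ℂ}

lemma analyticOrderAt_ne_top_of_ne_zero (hf : Differentiable ℂ f) (ha : f a ≠ 0) (z : ℂ) :
    analyticOrderAt f z ≠ ⊤ := fun h ↦
  ha (congrFun ((AnalyticOnNhd.analyticOrderAt_eq_top_iff_eq_zero z
    fun w ↦ hf.analyticAt w).1 h) a)

lemma finite_zeros_norm_le (hf : Differentiable ℂ f) (ha : f a ≠ 0) (R : ℝ) :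
    {z : ℂ | f z = 0 ∧ ‖z‖ ≤ R}.Finite := by
  by_contra hinf
  obtain ⟨z, -, hz⟩ := Infinite.exists_accPt_of_subset_isCompact hinf
    (isCompact_closedBall (0 : ℂ) R) fun z hz ↦ by simpa using hz.2
  have hne : ∀ᶠ w in 𝓝[≠] z, f w ≠ 0 :=
    (hf.analyticAt z).eventually_eq_zero_or_eventually_ne_zero.resolve_left fun h ↦
      analyticOrderAt_ne_top_of_ne_zero hf ha z (analyticOrderAt_eq_top.2 h)
  rw [accPt_iff_frequently_nhdsNE] at hz
  exact hz (hne.mono fun w hw hw' ↦ hw hw'.1)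

lemma countable_zeros (hf : Differentiable ℂ f) (ha : f a ≠ 0) : {z | f z = 0}.Countable := by
  refine (countable_iUnion fun n : ℕ ↦ (finite_zeros_norm_le hf ha n).countable).mono fun z hz ↦ ?_
  obtain ⟨n, hn⟩ := exists_nat_ge ‖z‖
  exact mem_iUnion.2 ⟨n, hz, hn⟩

lemma analyticOrderNatAt_eq_zero_of_ne_zero (ha : f a ≠ 0) : analyticOrderNatAt f a = 0 := by
  by_contra h
  exact ha (apply_eq_zero_of_analyticOrderNatAt_ne_zero h)

lemma exists_eq_sub_pow_mul {ρ : ℂ} {n : ℕ} (hf : Differentiable ℂ f)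
    (hn : analyticOrderAt f ρ = n) :
    ∃ g : ℂ → ℂ, Differentiable ℂ g ∧ g ρ ≠ 0 ∧ ∀ z, f z = (z - ρ) ^ n * g z := by
  induction n generalizing f with
  | zero => exact ⟨f, hf, (hf.analyticAt ρ).analyticOrderAt_eq_zero.1 hn, by simp⟩
  | succ n ih =>
    have hzero : f ρ = 0 := apply_eq_zero_of_analyticOrderAt_ne_zero (by simp [hn])
    have hslope : Differentiable ℂ (dslope f ρ) := fun z ↦
      ((differentiableOn_dslope univ_mem).2 hf.differentiableOn z (mem_univ z)).differentiableAt
        univ_mem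
    have hfactor (z : ℂ) : f z = (z - ρ) * dslope f ρ z := by
      have h := sub_smul_dslope f ρ z
      rw [hzero, sub_zero, smul_eq_mul] at h
      exact h.symm
    have horder : analyticOrderAt (dslope f ρ) ρ = n := by
      have h : analyticOrderAt f ρ =
          analyticOrderAt (· - ρ) ρ + analyticOrderAt (dslope f ρ) ρ := by
        conv_lhs => rw [show f = (· - ρ) * dslope f ρ from funext hfactor]
        exact analyticOrderAt_mul (by fun_prop) (hslope.analyticAt ρ)
      rw [hn, analyticOrderAt_id_sub_const_self, Nat.cast_add_one, add_comm] at h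
      exact (ENat.add_right_injective_of_ne_top ENat.one_ne_top h).symm
    obtain ⟨g, hg, hgρ, hfg⟩ := ih hslope horder
    exact ⟨g, hg, hgρ, fun z ↦ by rw [hfactor, hfg, pow_succ', mul_assoc]⟩

lemma exists_eq_prod_mul (hf : Differentiable ℂ f) (ha : f a ≠ 0) (S : Finset ℂ) :
    ∃ g : ℂ → ℂ, Differentiable ℂ g ∧ (∀ ρ ∈ S, g ρ ≠ 0) ∧
      ∀ z, f z = (∏ ρ ∈ S, (z - ρ) ^ analyticOrderNatAt f ρ) * g z := by
  induction S using Finset.induction_on with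
  | empty => exact ⟨f, hf, by simp, by simp⟩
  | insert ρ S hρ ih =>
    obtain ⟨g, hg, hgS, hfg⟩ := ih
    set P : ℂ → ℂ := fun z ↦ ∏ σ ∈ S, (z - σ) ^ analyticOrderNatAt f σ
    have hP : Differentiable ℂ P := by fun_prop
    have hPρ : P ρ ≠ 0 := Finset.prod_ne_zero_iff.2 fun σ hσ ↦
      pow_ne_zero _ (sub_ne_zero.2 (ne_of_mem_of_not_mem hσ hρ).symm)
    have horder : analyticOrderAt g ρ = analyticOrderNatAt f ρ := by
      rw [Nat.cast_analyticOrderNatAt (analyticOrderAt_ne_top_of_ne_zero hf ha ρ),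
        show f = P * g from funext hfg, analyticOrderAt_mul (hP.analyticAt ρ) (hg.analyticAt ρ),
        (hP.analyticAt ρ).analyticOrderAt_eq_zero.2 hPρ, zero_add]
    obtain ⟨G, hG, hGρ, hgG⟩ := exists_eq_sub_pow_mul hg horder
    refine ⟨G, hG, Finset.forall_mem_insert _ _ _ |>.2 ⟨hGρ, fun σ hσ h ↦ ?_⟩, fun z ↦ ?_⟩
    · exact hgS σ hσ (by rw [hgG, h, mul_zero])
    · rw [Finset.prod_insert hρ, hfg z, hgG z]
      ring

lemma logDeriv_eq_sum_add_logDeriv {g : ℂ → ℂ} {S : Finset ℂ} {n : ℂ → ℕ} {z : ℂ}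
    (hg : DifferentiableAt ℂ g z) (hfg : ∀ w, f w = (∏ ρ ∈ S, (w - ρ) ^ n ρ) * g w)
    (hz : f z ≠ 0) : logDeriv f z = ∑ ρ ∈ S, (n ρ : ℂ) / (z - ρ) + logDeriv g z := by
  rw [hfg] at hz
  rw [funext hfg, logDeriv_mul (f := fun w ↦ ∏ ρ ∈ S, (w - ρ) ^ n ρ) z (left_ne_zero_of_mul hz)
      (right_ne_zero_of_mul hz) (by fun_prop) hg,
    logDeriv_prod (f := fun ρ w ↦ (w - ρ) ^ n ρ)
      (Finset.prod_ne_zero_iff.1 (left_ne_zero_of_mul hz)) fun ρ _ ↦ by fun_prop]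
  congr 1
  refine Finset.sum_congr rfl fun ρ _ ↦ ?_
  rw [logDeriv_fun_pow (by fun_prop), logDeriv_apply, deriv_sub_const, deriv_id'', mul_one_div]

end Zeros

section CircleIntegral

variable {R : ℝ} {h : ℂ → ℂ} {s ρ : ℂ}

lemma circleIntegrable_div_sub (hR : 0 ≤ R) (hh : ContinuousOn h (Metric.sphere 0 R))
    (hs : ‖s‖ ≠ R) : CircleIntegrable (fun ζ ↦ h ζ / (ζ - s)) 0 R := by
  refine ContinuousOn.circleIntegrable hR (hh.div (by fun_prop) fun z hz h0 ↦ hs ?_)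
  rwa [← sub_eq_zero.1 h0, ← mem_sphere_zero_iff_norm]

lemma circleIntegral_div_sub (hh : ∀ z ∈ Metric.closedBall (0 : ℂ) R, DifferentiableAt ℂ h z)
    (hs : ‖s‖ < R) : (∮ ζ in C(0, R), h ζ / (ζ - s)) = 2 * π * I * h s :=
  circleIntegral_div_sub_of_differentiable_on_off_countable countable_empty
    (by simpa using hs) (fun z hz ↦ (hh z hz).continuousAt.continuousWithinAt)
    fun z hz ↦ hh z (Metric.ball_subset_closedBall hz.1)

lemma circleIntegral_div_sub_div_sub (hh : Differentiable ℂ h) (hs : ‖s‖ < R) (hρ : ‖ρ‖ < R)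
    (hne : s ≠ ρ) :
    (∮ ζ in C(0, R), h ζ / (ζ - ρ) / (ζ - s)) = 2 * π * I * ((h s - h ρ) / (s - ρ)) := by
  have hR : 0 ≤ R := (norm_nonneg s).trans hs.le
  have hcont : ContinuousOn h (Metric.sphere 0 R) := hh.continuous.continuousOn
  have hsplit : EqOn (fun ζ ↦ h ζ / (ζ - ρ) / (ζ - s))
      (fun ζ ↦ 1 / (s - ρ) * (h ζ / (ζ - s) - h ζ / (ζ - ρ))) (Metric.sphere 0 R) := fun ζ hζ ↦ by
    rw [mem_sphere_zero_iff_norm] at hζ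
    have hζs : ζ - s ≠ 0 := sub_ne_zero.2 fun h ↦ hs.ne (h ▸ hζ)
    have hζρ : ζ - ρ ≠ 0 := sub_ne_zero.2 fun h ↦ hρ.ne (h ▸ hζ)
    have hsρ : s - ρ ≠ 0 := sub_ne_zero.2 hne
    field_simp
    ring
  rw [circleIntegral.integral_congr hR hsplit, circleIntegral.integral_const_mul,
    circleIntegral.integral_sub (circleIntegrable_div_sub hR hcont hs.ne)
      (circleIntegrable_div_sub hR hcont hρ.ne),
    circleIntegral_div_sub (fun z _ ↦ hh z) hs, circleIntegral_div_sub (fun z _ ↦ hh z) hρ]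
  ring

lemma circleIntegral_sum_div_sub_div_sub_add {P : ℂ → ℂ} (hP : Differentiable ℂ P)
    (hh : ∀ z ∈ Metric.closedBall (0 : ℂ) R, DifferentiableAt ℂ h z) (hs : ‖s‖ < R)
    {S : Finset ℂ} (hρ : ∀ ρ ∈ S, ‖ρ‖ < R) (hne : ∀ ρ ∈ S, s ≠ ρ) (c : ℂ → ℂ) :
    (∮ ζ in C(0, R), (∑ ρ ∈ S, c ρ * (P ζ / (ζ - ρ) / (ζ - s)) + h ζ / (ζ - s))) =
      2 * π * I * (∑ ρ ∈ S, c ρ * ((P s - P ρ) / (s - ρ)) + h s) := by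
  have hR : 0 ≤ R := (norm_nonneg s).trans hs.le
  have hint : ∀ ρ ∈ S, CircleIntegrable (fun ζ ↦ c ρ * (P ζ / (ζ - ρ) / (ζ - s))) 0 R := by
    intro ρ hρS
    have hcont : ContinuousOn (fun ζ ↦ P ζ / (ζ - ρ)) (Metric.sphere 0 R) :=
      hP.continuous.continuousOn.div (by fun_prop) fun z hz h0 ↦ (hρ ρ hρS).ne
        (by rwa [← sub_eq_zero.1 h0, ← mem_sphere_zero_iff_norm])
    exact (circleIntegrable_div_sub hR hcont hs.ne).const_smul (a := c ρ)
  have hinth : CircleIntegrable (fun ζ ↦ h ζ / (ζ - s)) 0 R := circleIntegrable_div_sub hR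
    (fun z hz ↦ (hh z (Metric.sphere_subset_closedBall hz)).continuousAt.continuousWithinAt) hs.ne
  rw [circleIntegral.integral_add (CircleIntegrable.fun_sum S hint) hinth,
    circleIntegral_div_sub hh hs, circleIntegral.integral_fun_sum hint, mul_add, Finset.mul_sum]
  congr 1
  refine Finset.sum_congr rfl fun ρ hρS ↦ ?_
  rw [circleIntegral.integral_const_mul,
    circleIntegral_div_sub_div_sub hP hs (hρ ρ hρS) (hne ρ hρS)]
  ring

lemma circleIntegral_logDeriv_mul_div_sub {f P : ℂ → ℂ} (hf : Differentiable ℂ f)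
    (hP : Differentiable ℂ P) (hs : ‖s‖ < R) (hfs : f s ≠ 0) {S : Finset ℂ}
    (hS : ∀ z, z ∈ S ↔ f z = 0 ∧ ‖z‖ ≤ R) (hSR : ∀ z, ‖z‖ = R → f z ≠ 0) :
    (∮ ζ in C(0, R), logDeriv f ζ * P ζ / (ζ - s)) =
      2 * π * I * (logDeriv f s * P s - ∑ ρ ∈ S, analyticOrderNatAt f ρ * (P ρ / (s - ρ))) := by
  obtain ⟨g, hg, hgS, hfg⟩ := exists_eq_prod_mul hf hfs S
  have hgd : ∀ z ∈ Metric.closedBall (0 : ℂ) R, DifferentiableAt ℂ (fun z ↦ logDeriv g z * P z) z :=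
    fun z hz ↦ ((hg.analyticAt z).deriv.div (hg.analyticAt z) fun h ↦ hgS z ((hS z).2
      ⟨by rw [hfg, h, mul_zero], by simpa using hz⟩) h).differentiableAt.mul (hP z)
  have hlog (z : ℂ) (hz : f z ≠ 0) := logDeriv_eq_sum_add_logDeriv (hg z) hfg hz
  have hsplit : EqOn (fun ζ ↦ logDeriv f ζ * P ζ / (ζ - s))
      (fun ζ ↦ ∑ ρ ∈ S, analyticOrderNatAt f ρ * (P ζ / (ζ - ρ) / (ζ - s)) +
        logDeriv g ζ * P ζ / (ζ - s)) (Metric.sphere 0 R) := fun ζ hζ ↦ by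
    beta_reduce
    rw [hlog ζ (hSR ζ (by simpa using hζ)), add_mul, add_div, Finset.sum_mul, Finset.sum_div]
    congr 1
    exact Finset.sum_congr rfl fun ρ _ ↦ by ring
  rw [circleIntegral.integral_congr ((norm_nonneg s).trans hs.le) hsplit,
    circleIntegral_sum_div_sub_div_sub_add hP hgd hs
      (fun ρ hρ ↦ ((hS ρ).1 hρ).2.lt_of_ne fun h ↦ hSR ρ h ((hS ρ).1 hρ).1)
      (fun ρ hρ h ↦ hfs (h ▸ ((hS ρ).1 hρ).1)) (fun ρ ↦ analyticOrderNatAt f ρ),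
    hlog s hfs, add_mul, Finset.sum_mul, add_sub_right_comm, ← Finset.sum_sub_distrib]
  congr 2
  exact Finset.sum_congr rfl fun ρ _ ↦ by ring

end CircleIntegral

/-- Even entire functions with zeros on the imaginary axis only, and with the bound, uniform up to
the parameter `K`, on the logarithmic derivative in the right half-plane that the partial fraction
expansion requires. It is satisfied by `xi` under the one-sided bound to be refuted. -/
structure EvenImagZeros (f : ℂ → ℂ) (K : ℝ) : Prop where
  differentiable : Differentiable ℂ f
  even (s : ℂ) : f (-s) = f s
  apply_zero_ne_zero : f 0 ≠ 0
  re_eq_zero {ρ : ℂ} (hρ : f ρ = 0) : ρ.re = 0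
  norm_logDeriv_le_of_one_le_re {s : ℂ} (hs : 1 ≤ s.re) : ‖logDeriv f s‖ ≤ K * (1 + √‖s‖)
  norm_logDeriv_le_of_re_le_one {s : ℂ} (hs : 0 < s.re) (hs' : s.re ≤ 1) :
    ‖logDeriv f s‖ ≤ K * (1 + ‖s‖) / s.re ^ 2

/-- The polynomial `(1 + ζ² / R²)²`. Its double zeros at `± i R` compensate the growth of the
logarithmic derivative where the circle `|ζ| = R` meets the imaginary axis. -/
noncomputable def mollifier (R : ℝ) (ζ : ℂ) : ℂ := (1 + ζ ^ 2 / (R : ℂ) ^ 2) ^ 2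

lemma differentiable_mollifier (R : ℝ) : Differentiable ℂ (mollifier R) := by
  unfold mollifier
  fun_prop

lemma mollifier_neg (R : ℝ) (ζ : ℂ) : mollifier R (-ζ) = mollifier R ζ := by
  rw [mollifier, mollifier, neg_sq]

lemma norm_mollifier {ζ : ℂ} {R : ℝ} (hR : 0 < R) (hζ : ‖ζ‖ = R) :
    ‖mollifier R ζ‖ = 4 * ζ.re ^ 2 / R ^ 2 := by
  have hR' : (R : ℂ) ≠ 0 := ofReal_ne_zero.2 hR.ne'
  have hsq : (R : ℂ) ^ 2 = ζ * (starRingEnd ℂ) ζ := by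
    rw [mul_conj, normSq_eq_norm_sq, hζ, ofReal_pow]
  have hroot : 1 + ζ ^ 2 / (R : ℂ) ^ 2 = ζ * (2 * ζ.re : ℝ) / (R : ℂ) ^ 2 := by
    rw [← add_conj, mul_add, ← hsq]
    field_simp
    ring
  rw [mollifier, hroot, norm_pow, norm_div, norm_mul, norm_pow, norm_real, norm_real, hζ,
    Real.norm_eq_abs, Real.norm_eq_abs, div_pow, mul_pow, sq_abs, abs_of_pos hR]
  field_simp
  ring

lemma tendsto_mollifier {R : ℕ → ℝ} (hR : Tendsto R atTop atTop) (s : ℂ) :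
    Tendsto (fun n ↦ mollifier (R n) s) atTop (𝓝 1) := by
  have hzero : Tendsto (fun n ↦ s ^ 2 / (R n : ℂ) ^ 2) atTop (𝓝 0) := by
    rw [tendsto_zero_iff_norm_tendsto_zero]
    simp only [norm_div, norm_pow, norm_real, Real.norm_eq_abs, sq_abs]
    exact ((tendsto_pow_atTop two_ne_zero).comp hR).const_div_atTop _
  simpa [mollifier] using (hzero.const_add 1).pow 2

lemma norm_one_div_sub_sub_one_div_add_le {R : ℝ} {ζ s : ℂ} (hR : 0 < R) (hζ : ‖ζ‖ = R)
    (hs : 2 * ‖s‖ ≤ R) : ‖1 / (ζ - s) - 1 / (ζ + s)‖ ≤ 8 * ‖s‖ / R ^ 2 := by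
  have hsub : R / 2 ≤ ‖ζ - s‖ := by linarith [norm_sub_norm_le ζ s]
  have hadd : R / 2 ≤ ‖ζ + s‖ := by linarith [norm_sub_le_norm_add ζ s]
  have hsub0 : ζ - s ≠ 0 := norm_pos_iff.1 (by linarith)
  have hadd0 : ζ + s ≠ 0 := norm_pos_iff.1 (by linarith)
  have hdiff : 1 / (ζ - s) - 1 / (ζ + s) = 2 * s / ((ζ - s) * (ζ + s)) := by
    field_simp
    ring
  rw [hdiff, norm_div, norm_mul, norm_mul, RCLike.norm_ofNat]
  calc 2 * ‖s‖ / (‖ζ - s‖ * ‖ζ + s‖) ≤ 2 * ‖s‖ / (R / 2 * (R / 2)) := by gcongr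
    _ = 8 * ‖s‖ / R ^ 2 := by
      field_simp
      ring

lemma exists_le_norm_sq_add_sq {s : ℂ} (hs : 0 < s.re) :
    ∃ c : ℝ, 0 < c ∧ ∀ t : ℝ, c * (1 + t ^ 2) ≤ ‖s ^ 2 + (t : ℂ) ^ 2‖ := by
  set c : ℝ := s.re / (1 + ‖s‖ + s.re)
  have hlinear (t : ℝ) : c * (1 + |t|) ≤ ‖s + t * I‖ := by
    have hre : s.re ≤ ‖s + t * I‖ := by simpa using re_le_norm (s + t * I)
    have him : |t| - ‖s‖ ≤ ‖s + t * I‖ := by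
      simpa [add_comm] using norm_sub_le_norm_add (t * I) s
    rw [div_mul_eq_mul_div, div_le_iff₀ (by positivity)]
    nlinarith [norm_nonneg s]
  refine ⟨c ^ 2, by positivity, fun t ↦ ?_⟩
  have hfactor : s ^ 2 + (t : ℂ) ^ 2 = (s + t * I) * (s + (-t : ℝ) * I) := by
    push_cast
    linear_combination (t : ℂ) ^ 2 * I_sq
  rw [hfactor, norm_mul]
  calc c ^ 2 * (1 + t ^ 2) ≤ c ^ 2 * (1 + |t|) ^ 2 := by
        gcongr
        nlinarith [sq_abs t, abs_nonneg t]
    _ = c * (1 + |t|) * (c * (1 + |-t|)) := by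
        rw [abs_neg]
        ring
    _ ≤ ‖s + t * I‖ * ‖s + (-t : ℝ) * I‖ := by
        gcongr
        exacts [hlinear t, hlinear (-t)]

/-- The order of `f` at `ρ`, damped by the value `(1 - ‖ρ‖² / R²)²` of the mollifier at a point
`ρ` of the imaginary axis, and cut off outside the disc of radius `R`. -/
noncomputable def mollifiedOrder (f : ℂ → ℂ) (R : ℝ) (ρ : ℂ) : ℝ :=
  analyticOrderNatAt f ρ * max 0 (1 - ‖ρ‖ ^ 2 / R ^ 2) ^ 2

section MollifiedOrder

variable (f : ℂ → ℂ) (R : ℝ) (ρ : ℂ)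

lemma mollifiedOrder_nonneg : 0 ≤ mollifiedOrder f R ρ := by
  unfold mollifiedOrder
  positivity

lemma mollifiedOrder_le : mollifiedOrder f R ρ ≤ analyticOrderNatAt f ρ :=
  mul_le_of_le_one_right (by positivity) (pow_le_one₀ (le_max_left _ _)
    (max_le zero_le_one (sub_le_self _ (by positivity))))

lemma tendsto_mollifiedOrder {R : ℕ → ℝ} (hR : Tendsto R atTop atTop) :
    Tendsto (fun n ↦ mollifiedOrder f (R n) ρ) atTop (𝓝 (analyticOrderNatAt f ρ)) := by
  have hzero : Tendsto (fun n ↦ ‖ρ‖ ^ 2 / R n ^ 2) atTop (𝓝 0) :=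
    ((tendsto_pow_atTop two_ne_zero).comp hR).const_div_atTop _
  simpa [mollifiedOrder] using
    (((tendsto_const_nhds (x := 0)).max (hzero.const_sub 1)).pow 2).const_mul
      (analyticOrderNatAt f ρ : ℝ)

variable {f R ρ}

lemma mollifiedOrder_of_norm_le (hR : 0 < R) (hρ : ‖ρ‖ ≤ R) :
    mollifiedOrder f R ρ = analyticOrderNatAt f ρ * (1 - ‖ρ‖ ^ 2 / R ^ 2) ^ 2 := by
  rw [mollifiedOrder, max_eq_right]
  rw [sub_nonneg, div_le_one (by positivity)]
  gcongr

lemma mollifiedOrder_of_lt_norm (hR : 0 < R) (hρ : R < ‖ρ‖) : mollifiedOrder f R ρ = 0 := by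
  rw [mollifiedOrder, max_eq_left, zero_pow two_ne_zero, mul_zero]
  rw [sub_nonpos, one_le_div (by positivity)]
  gcongr

lemma mollifiedOrder_of_ne_zero (hρ : f ρ ≠ 0) : mollifiedOrder f R ρ = 0 := by
  rw [mollifiedOrder, analyticOrderNatAt_eq_zero_of_ne_zero hρ, Nat.cast_zero, zero_mul]

end MollifiedOrder

namespace EvenImagZeros

variable {f : ℂ → ℂ} {K R : ℝ} {s ρ : ℂ}

lemma const_nonneg (hf : EvenImagZeros f K) : 0 ≤ K := by
  have h := (norm_nonneg _).trans (hf.norm_logDeriv_le_of_one_le_re (s := 1) (by simp))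
  exact nonneg_of_mul_nonneg_left h (by positivity)

lemma logDeriv_neg (hf : EvenImagZeros f K) (s : ℂ) : logDeriv f (-s) = -logDeriv f s := by
  have h := deriv_comp_neg f s
  rw [funext hf.even] at h
  rw [logDeriv_apply, logDeriv_apply, hf.even, h, neg_div, neg_neg]

lemma sq_eq_neg_norm_sq (hf : EvenImagZeros f K) (hρ : f ρ = 0) : ρ ^ 2 = -(‖ρ‖ : ℂ) ^ 2 := by
  have hρI : ρ = ρ.im * I := Complex.ext (by simp [hf.re_eq_zero hρ]) (by simp)
  have hnorm : ‖ρ‖ = |ρ.im| := by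
    conv_lhs => rw [hρI]
    simp
  rw [hnorm, ← ofReal_pow, sq_abs]
  conv_lhs => rw [hρI, mul_pow, I_sq]
  rw [ofReal_pow, mul_neg_one]

lemma ne_zero_of_re_pos (hf : EvenImagZeros f K) (hs : 0 < s.re) : f s ≠ 0 :=
  fun h ↦ hs.ne' (hf.re_eq_zero h)

lemma norm_logDeriv_mul_mollifier_le (hf : EvenImagZeros f K) (hR : 1 ≤ R) {ζ : ℂ}
    (hζ : ‖ζ‖ = R) : ‖logDeriv f ζ * mollifier R ζ‖ ≤ 8 * K * √R := by
  have hK := hf.const_nonneg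
  have hsqrt : 1 ≤ √R := Real.one_le_sqrt.2 hR
  wlog hre : 0 ≤ ζ.re generalizing ζ
  · have h := this (ζ := -ζ) (by rwa [norm_neg]) (by rw [neg_re]; linarith)
    rwa [hf.logDeriv_neg, mollifier_neg, neg_mul, norm_neg] at h
  rw [norm_mul, norm_mollifier (by linarith) hζ]
  rcases le_or_gt 1 ζ.re with hone | hone
  · have hle : ζ.re ≤ R := hζ ▸ re_le_norm ζ
    calc ‖logDeriv f ζ‖ * (4 * ζ.re ^ 2 / R ^ 2) ≤ K * (1 + √R) * (4 * R ^ 2 / R ^ 2) := by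
          gcongr
          exact hζ ▸ hf.norm_logDeriv_le_of_one_le_re hone
      _ = K * (1 + √R) * 4 := by field_simp
      _ ≤ 8 * K * √R := by nlinarith
  · rcases hre.eq_or_lt with hzero | hpos
    · rw [← hzero, zero_pow two_ne_zero, mul_zero, zero_div, mul_zero]
      positivity
    · calc ‖logDeriv f ζ‖ * (4 * ζ.re ^ 2 / R ^ 2) ≤
            K * (1 + ‖ζ‖) / ζ.re ^ 2 * (4 * ζ.re ^ 2 / R ^ 2) := by
            gcongr
            exact hf.norm_logDeriv_le_of_re_le_one hpos hone.le
        _ = 4 * K * ((1 + R) / R ^ 2) := by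
            rw [hζ]
            field_simp
        _ ≤ 4 * K * 2 := by
            gcongr
            rw [div_le_iff₀ (by positivity)]
            nlinarith
        _ ≤ 8 * K * √R := by nlinarith

lemma norm_circleIntegral_sub_le (hf : EvenImagZeros f K) (hR : 1 ≤ R) (hs : 2 * ‖s‖ ≤ R)
    (hfR : ∀ z, ‖z‖ = R → f z ≠ 0) :
    ‖(∮ ζ in C(0, R), logDeriv f ζ * mollifier R ζ / (ζ - s)) -
      ∮ ζ in C(0, R), logDeriv f ζ * mollifier R ζ / (ζ - -s)‖ ≤
      4 * π * (32 * K * ‖s‖ / √R) := by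
  have hsR : ‖s‖ < R := by linarith [norm_nonneg s]
  have hcont : ContinuousOn (fun ζ ↦ logDeriv f ζ * mollifier R ζ) (Metric.sphere 0 R) :=
    fun z hz ↦ (((hf.differentiable.analyticAt z).deriv.div (hf.differentiable.analyticAt z)
      (hfR z (by simpa using hz))).continuousAt.mul
        (differentiable_mollifier R).continuous.continuousAt).continuousWithinAt
  rw [← circleIntegral.integral_sub (circleIntegrable_div_sub (by linarith) hcont hsR.ne)
    (circleIntegrable_div_sub (by linarith) hcont (by rw [norm_neg]; exact hsR.ne))]
  have hbound : ∀ ζ ∈ Metric.sphere (0 : ℂ) R, ‖logDeriv f ζ * mollifier R ζ / (ζ - s) -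
      logDeriv f ζ * mollifier R ζ / (ζ - -s)‖ ≤ 8 * K * √R * (8 * ‖s‖ / R ^ 2) := fun ζ hζ ↦ by
    rw [mem_sphere_zero_iff_norm] at hζ
    rw [sub_neg_eq_add, ← mul_one_div _ (ζ - s), ← mul_one_div _ (ζ + s), ← mul_sub, norm_mul]
    have hlog := hf.norm_logDeriv_mul_mollifier_le hR hζ
    exact mul_le_mul hlog (norm_one_div_sub_sub_one_div_add_le (by linarith) hζ hs)
      (norm_nonneg _) ((norm_nonneg _).trans hlog)
  refine (circleIntegral.norm_integral_le_of_norm_le_const (by linarith) hbound).trans_eq ?_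
  have hsq : √R ^ 2 = R := Real.sq_sqrt (by linarith)
  have hsqrt : √R ≠ 0 := (Real.sqrt_pos.2 (by linarith)).ne'
  field_simp
  rw [hsq]
  ring

lemma mollifier_div_sub_sub_div_neg_sub (hf : EvenImagZeros f K) (hR : 0 < R) (hfs : f s ≠ 0)
    (hρ : f ρ = 0) (hρR : ‖ρ‖ ≤ R) :
    (analyticOrderNatAt f ρ : ℂ) * (mollifier R ρ / (s - ρ)) -
        analyticOrderNatAt f ρ * (mollifier R ρ / (-s - ρ)) =
      2 * (mollifiedOrder f R ρ * (s / (s ^ 2 + ‖ρ‖ ^ 2))) := by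
  have hsq := hf.sq_eq_neg_norm_sq hρ
  have hsub : s - ρ ≠ 0 := sub_ne_zero.2 fun h ↦ hfs (h ▸ hρ)
  have hneg : -s - ρ ≠ 0 := sub_ne_zero.2 fun h ↦ hfs (by rw [← hf.even, h, hρ])
  have hfactor : s ^ 2 + (‖ρ‖ : ℂ) ^ 2 = -((s - ρ) * (-s - ρ)) := by linear_combination hsq
  rw [hfactor, mollifier, mollifiedOrder_of_norm_le hR hρR, hsq]
  push_cast
  field_simp
  ring

lemma norm_logDeriv_sub_sum_le (hf : EvenImagZeros f K) (hR : 1 ≤ R) (hs : 2 * ‖s‖ ≤ R)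
    (hfs : f s ≠ 0) {S : Finset ℂ} (hS : ∀ z, z ∈ S ↔ f z = 0 ∧ ‖z‖ ≤ R)
    (hfR : ∀ z, ‖z‖ = R → f z ≠ 0) :
    ‖logDeriv f s * mollifier R s -
      ∑ ρ ∈ S, (mollifiedOrder f R ρ : ℂ) * (s / (s ^ 2 + ‖ρ‖ ^ 2))‖ ≤ 32 * K * ‖s‖ / √R := by
  have hsR : ‖s‖ < R := by linarith [norm_nonneg s]
  have hresidue : (∮ ζ in C(0, R), logDeriv f ζ * mollifier R ζ / (ζ - s)) -
      (∮ ζ in C(0, R), logDeriv f ζ * mollifier R ζ / (ζ - -s)) =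
      (4 * π : ℝ) * I * (logDeriv f s * mollifier R s -
        ∑ ρ ∈ S, (mollifiedOrder f R ρ : ℂ) * (s / (s ^ 2 + ‖ρ‖ ^ 2))) := by
    have hsum := Finset.sum_congr rfl fun ρ hρ ↦ hf.mollifier_div_sub_sub_div_neg_sub
      (R := R) (s := s) (by linarith) hfs ((hS ρ).1 hρ).1 ((hS ρ).1 hρ).2
    rw [Finset.sum_sub_distrib, ← Finset.mul_sum] at hsum
    rw [circleIntegral_logDeriv_mul_div_sub hf.differentiable (differentiable_mollifier R) hsR
        hfs hS hfR,
      circleIntegral_logDeriv_mul_div_sub hf.differentiable (differentiable_mollifier R)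
        (by rwa [norm_neg]) (by rwa [hf.even]) hS hfR, hf.logDeriv_neg, mollifier_neg]
    push_cast
    linear_combination (-2 * π * I) * hsum
  have h := hf.norm_circleIntegral_sub_le hR hs hfR
  rw [hresidue, norm_mul, norm_mul, norm_I, mul_one, norm_real, Real.norm_of_nonneg
    (by positivity)] at h
  exact le_of_mul_le_mul_left h (by positivity)

lemma hasSum_mollifiedOrder_mul (hR : 0 < R) {S : Finset ℂ}
    (hS : ∀ z, z ∈ S ↔ f z = 0 ∧ ‖z‖ ≤ R) (φ : ℂ → ℂ) :
    HasSum (fun ρ ↦ (mollifiedOrder f R ρ : ℂ) * φ ρ)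
      (∑ ρ ∈ S, (mollifiedOrder f R ρ : ℂ) * φ ρ) := by
  refine hasSum_sum_of_ne_finset_zero fun ρ hρ ↦ ?_
  rw [hS, not_and_or, not_le] at hρ
  rw [hρ.elim mollifiedOrder_of_ne_zero (mollifiedOrder_of_lt_norm hR), ofReal_zero, zero_mul]

lemma exists_radii (hf : EvenImagZeros f K) :
    ∃ R : ℕ → ℝ, Tendsto R atTop atTop ∧ (∀ n, 1 ≤ R n) ∧ ∀ n z, ‖z‖ = R n → f z ≠ 0 := by
  have hradius (n : ℕ) : ∃ R : ℝ, n + 1 ≤ R ∧ ∀ z, ‖z‖ = R → f z ≠ 0 := by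
    have hfin := finite_zeros_norm_le hf.differentiable hf.apply_zero_ne_zero (n + 2)
    obtain ⟨R, hR, hRf⟩ := (Icc_infinite
      (show (n + 1 : ℝ) < n + 2 by linarith)).exists_notMem_finite (hfin.image (‖·‖))
    exact ⟨R, hR.1, fun z hz h ↦ hRf ⟨z, ⟨h, hz.trans_le hR.2⟩, hz⟩⟩
  choose R hR hRf using hradius
  exact ⟨R, tendsto_atTop_mono (fun n ↦ by linarith [hR n]) tendsto_natCast_atTop_atTop,
    fun n ↦ by linarith [hR n, n.cast_nonneg (α := ℝ)], hRf⟩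

lemma exists_tendsto_tsum_mollifiedOrder (hf : EvenImagZeros f K) :
    ∃ R : ℕ → ℝ, Tendsto R atTop atTop ∧
      (∀ n (φ : ℂ → ℂ), Summable fun ρ ↦ (mollifiedOrder f (R n) ρ : ℂ) * φ ρ) ∧
      ∀ s : ℂ, 0 < s.re → Tendsto
        (fun n ↦ ∑' ρ, (mollifiedOrder f (R n) ρ : ℂ) * (s / (s ^ 2 + ‖ρ‖ ^ 2))) atTop
        (𝓝 (logDeriv f s)) := by
  obtain ⟨R, hRlim, hR, hRf⟩ := hf.exists_radii
  have hfin (n : ℕ) := finite_zeros_norm_le hf.differentiable hf.apply_zero_ne_zero (R n)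
  have hS (n : ℕ) (z : ℂ) : z ∈ (hfin n).toFinset ↔ f z = 0 ∧ ‖z‖ ≤ R n := by simp
  have hsum (n : ℕ) (φ : ℂ → ℂ) :=
    hasSum_mollifiedOrder_mul (zero_lt_one.trans_le (hR n)) (hS n) φ
  refine ⟨R, hRlim, fun n φ ↦ (hsum n φ).summable, fun s hs ↦ ?_⟩
  have herror : Tendsto (fun n ↦ logDeriv f s * mollifier (R n) s -
      ∑' ρ, (mollifiedOrder f (R n) ρ : ℂ) * (s / (s ^ 2 + ‖ρ‖ ^ 2))) atTop (𝓝 0) := by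
    refine squeeze_zero_norm' ?_
      ((Real.tendsto_sqrt_atTop.comp hRlim).const_div_atTop (32 * K * ‖s‖))
    filter_upwards [hRlim.eventually_ge_atTop (2 * ‖s‖)] with n hn
    rw [(hsum n _).tsum_eq]
    exact hf.norm_logDeriv_sub_sum_le (hR n) hn (hf.ne_zero_of_re_pos hs) (hS n) (hRf n)
  simpa using ((tendsto_mollifier hRlim s).const_mul (logDeriv f s)).sub herror

lemma summable_analyticOrderNatAt_div (hf : EvenImagZeros f K) :
    Summable fun ρ : ℂ ↦ (analyticOrderNatAt f ρ : ℝ) / (1 + ‖ρ‖ ^ 2) := by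
  obtain ⟨R, hR, hsummable, hlim⟩ := hf.exists_tendsto_tsum_mollifiedOrder
  refine summable_of_sum_le (c := ‖logDeriv f 1‖) (fun ρ ↦ by positivity) fun T ↦ ?_
  refine le_of_tendsto_of_tendsto' (tendsto_finsetSum _ fun ρ _ ↦
    (tendsto_mollifiedOrder f ρ hR).div_const _) (hlim 1 (by simp)).norm fun n ↦ ?_
  have hterm (ρ : ℂ) : (mollifiedOrder f (R n) ρ : ℂ) * (1 / (1 ^ 2 + ‖ρ‖ ^ 2)) =
      ((mollifiedOrder f (R n) ρ / (1 + ‖ρ‖ ^ 2) : ℝ) : ℂ) := by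
    push_cast
    rw [one_pow, mul_one_div]
  have hsum := hsummable n fun ρ ↦ 1 / (1 ^ 2 + ‖ρ‖ ^ 2)
  simp only [hterm] at hsum ⊢
  rw [← ofReal_tsum, norm_real]
  exact ((summable_ofReal.1 hsum).sum_le_tsum T fun ρ _ ↦
    div_nonneg (mollifiedOrder_nonneg f (R n) ρ) (by positivity)).trans (le_abs_self _)

lemma hasSum_logDeriv (hf : EvenImagZeros f K) (hs : 0 < s.re) :
    HasSum (fun ρ : ℂ ↦ (analyticOrderNatAt f ρ : ℂ) * (s / (s ^ 2 + ‖ρ‖ ^ 2)))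
      (logDeriv f s) := by
  obtain ⟨R, hR, -, hlim⟩ := hf.exists_tendsto_tsum_mollifiedOrder
  obtain ⟨c, hc, hcs⟩ := exists_le_norm_sq_add_sq hs
  have hbound {x : ℝ} (ρ : ℂ) (hx : 0 ≤ x) (hx' : x ≤ analyticOrderNatAt f ρ) :
      ‖(x : ℂ) * (s / (s ^ 2 + ‖ρ‖ ^ 2))‖ ≤
        ‖s‖ / c * (analyticOrderNatAt f ρ / (1 + ‖ρ‖ ^ 2)) := by
    rw [norm_mul, norm_div, norm_real, Real.norm_of_nonneg hx]
    calc x * (‖s‖ / ‖s ^ 2 + (‖ρ‖ : ℂ) ^ 2‖) ≤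
          analyticOrderNatAt f ρ * (‖s‖ / (c * (1 + ‖ρ‖ ^ 2))) := by
          gcongr
          exact hcs _
      _ = ‖s‖ / c * (analyticOrderNatAt f ρ / (1 + ‖ρ‖ ^ 2)) := by field_simp
  have hmajorant := hf.summable_analyticOrderNatAt_div.mul_left (‖s‖ / c)
  have hdom := tendsto_tsum_of_dominated_convergence hmajorant
    (fun ρ ↦ ((continuous_ofReal.tendsto _).comp (tendsto_mollifiedOrder f ρ hR)).mul_const
      (s / (s ^ 2 + ‖ρ‖ ^ 2)))
    (Eventually.of_forall fun n ρ ↦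
      hbound ρ (mollifiedOrder_nonneg f (R n) ρ) (mollifiedOrder_le f (R n) ρ))
  have hsummable : Summable fun ρ : ℂ ↦
      (analyticOrderNatAt f ρ : ℂ) * (s / (s ^ 2 + ‖ρ‖ ^ 2)) :=
    hmajorant.of_norm_bounded fun ρ ↦ by
      simpa only [ofReal_natCast] using hbound ρ (Nat.cast_nonneg _) le_rfl
  rw [← tendsto_nhds_unique hdom (hlim s hs)]
  simpa only [ofReal_natCast] using hsummable.hasSum

lemma hasSum_logDeriv_zeros (hf : EvenImagZeros f K) (hs : 0 < s.re) :
    HasSum (fun ρ : {ρ // f ρ = 0} ↦ (analyticOrderNatAt f ρ : ℂ) * (s / (s ^ 2 + ‖(ρ : ℂ)‖ ^ 2)))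
      (logDeriv f s) := by
  refine (hasSum_subtype_iff_of_support_subset (s := {ρ | f ρ = 0}) fun ρ hρ ↦ ?_).2
    (hf.hasSum_logDeriv hs)
  by_contra h
  exact hρ (mul_eq_zero_of_left (Nat.cast_eq_zero.2 (analyticOrderNatAt_eq_zero_of_ne_zero h)) _)

end EvenImagZeros

/-! ### The completed zeta function -/

/-- Riemann's entire function `ξ`, up to a constant factor and centred at the critical line:
`xi s = (1/2 + s) (s - 1/2) Λ(1/2 + s)`, where `Λ` is the completed zeta function. -/
noncomputable def xi (s : ℂ) : ℂ :=
  (1 / 2 + s) * (s - 1 / 2) * completedRiemannZeta₀ (1 / 2 + s) + 1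

lemma differentiable_xi : Differentiable ℂ xi := by
  have hΛ : Differentiable ℂ fun s : ℂ ↦ completedRiemannZeta₀ (1 / 2 + s) :=
    differentiable_completedZeta₀.comp (by fun_prop)
  unfold xi
  fun_prop

lemma xi_neg (s : ℂ) : xi (-s) = xi s := by
  have hΛ := completedRiemannZeta₀_one_sub (1 / 2 + s)
  rw [show (1 : ℂ) - (1 / 2 + s) = 1 / 2 + -s by ring] at hΛ
  rw [xi, xi, hΛ]
  ring

lemma re_half_add_pos {s : ℂ} (hs : -(1 / 2) < s.re) : 0 < (1 / 2 + s).re := by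
  norm_num at hs ⊢
  linarith

lemma xi_eq {s : ℂ} (hs : -(1 / 2) < s.re) :
    xi s = (1 / 2 + s) * Gammaℝ (1 / 2 + s) * riemannZeta₁ (1 / 2 + s) := by
  have hre := re_half_add_pos hs
  obtain rfl | hs' := eq_or_ne s (1 / 2)
  · norm_num [xi]
  have h0 : 1 / 2 + s ≠ 0 := ne_zero_of_re_pos hre
  have hsub : s - 1 / 2 ≠ 0 := sub_ne_zero.2 hs'
  have hone : 1 / 2 + s ≠ 1 := fun h ↦ hsub (by linear_combination h)
  have hζ := riemannZeta_eq_inv_sub_mul hone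
  rw [riemannZeta_def_of_ne_zero h0, completedRiemannZeta_eq,
    show 1 / 2 + s - 1 = s - 1 / 2 by ring, show 1 - (1 / 2 + s) = -(s - 1 / 2) by ring,
    div_eq_iff (Gammaℝ_ne_zero_of_re_pos hre)] at hζ
  have hΛ : completedRiemannZeta₀ (1 / 2 + s) = 1 / (1 / 2 + s) - 1 / (s - 1 / 2) +
      (s - 1 / 2)⁻¹ * riemannZeta₁ (1 / 2 + s) * Gammaℝ (1 / 2 + s) := by
    rw [← hζ, div_neg]
    ring
  rw [xi, hΛ, mul_add, mul_sub, mul_one_div, mul_one_div, mul_div_cancel_left₀ _ h0,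
    mul_div_cancel_right₀ _ hsub]
  linear_combination (1 / 2 + s) * riemannZeta₁ (1 / 2 + s) * Gammaℝ (1 / 2 + s) *
    mul_inv_cancel₀ hsub

lemma differentiableAt_Gammaℝ {z : ℂ} (hz : 0 < z.re) : DifferentiableAt ℂ Gammaℝ z := by
  simpa only [Pi.inv_def, inv_inv] using
    (differentiable_Gammaℝ_inv z).inv (inv_ne_zero (Gammaℝ_ne_zero_of_re_pos hz))

lemma logDeriv_xi {s : ℂ} (hs : -(1 / 2) < s.re) (hζ : riemannZeta₁ (1 / 2 + s) ≠ 0) :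
    logDeriv xi s =
      1 / (1 / 2 + s) + logDeriv Gammaℝ (1 / 2 + s) + logDeriv riemannZeta₁ (1 / 2 + s) := by
  have hre := re_half_add_pos hs
  have h0 : 1 / 2 + s ≠ 0 := ne_zero_of_re_pos hre
  have hG := Gammaℝ_ne_zero_of_re_pos hre
  have hGd := differentiableAt_Gammaℝ hre
  have hζd : DifferentiableAt ℂ riemannZeta₁ (1 / 2 + s) := differentiable_riemannZeta₁ _
  have hxi : xi =ᶠ[𝓝 s] (fun z ↦ z * Gammaℝ z * riemannZeta₁ z) ∘ fun s ↦ 1 / 2 + s := by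
    filter_upwards [(isOpen_lt continuous_const continuous_re).mem_nhds hs] with w hw
    exact xi_eq hw
  rw [(logDeriv_congr_nhds hxi).self_of_nhds, logDeriv_comp (by fun_prop) (by fun_prop),
    logDeriv_mul (f := fun z ↦ z * Gammaℝ z) (g := riemannZeta₁) _ (mul_ne_zero h0 hG) hζ
      (by fun_prop) hζd,
    logDeriv_mul (f := fun z ↦ z) (g := Gammaℝ) _ h0 hG (by fun_prop) hGd]
  simp [logDeriv_apply]

lemma norm_one_div_half_add_le {s : ℂ} (hs : 0 ≤ s.re) : ‖1 / (1 / 2 + s)‖ ≤ 2 := by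
  have hre : 1 / 2 ≤ ‖1 / 2 + s‖ := by
    have h := re_le_norm (1 / 2 + s)
    norm_num at h ⊢
    linarith
  rw [norm_div, norm_one, div_le_iff₀ (by linarith)]
  linarith

section OneSidedBound

variable {ε K : ℝ}

lemma xi_ne_zero_of_le (hε : ε ≠ 0) (h : ∀ u, 0 < u → ε * mertensError u ≤ K * (1 + u)) {s : ℂ}
    (hs : 0 < s.re) : xi s ≠ 0 := by
  have hre := re_half_add_pos (by linarith : -(1 / 2) < s.re)
  rw [xi_eq (by linarith)]
  exact mul_ne_zero (mul_ne_zero (ne_zero_of_re_pos hre) (Gammaℝ_ne_zero_of_re_pos hre))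
    (riemannZeta₁_half_add_ne_zero_of_le hε h hs)

lemma xi_zero_ne_zero : xi 0 ≠ 0 := by
  have hζ := riemannZeta₁_ofReal_ne_zero (x := 1 / 2) (by norm_num)
  push_cast at hζ
  rw [xi_eq (by norm_num), add_zero]
  exact mul_ne_zero (mul_ne_zero (by norm_num) (Gammaℝ_ne_zero_of_re_pos (by norm_num))) hζ

lemma exists_norm_logDeriv_xi_le_of_one_le_re (hε : ε ≠ 0)
    (h : ∀ u, 0 < u → ε * mertensError u ≤ K * (1 + u)) :
    ∃ B, ∀ s : ℂ, 1 ≤ s.re → ‖logDeriv xi s‖ ≤ B * (1 + √‖s‖) := by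
  obtain ⟨G, hG⟩ := exists_norm_logDeriv_Gammaℝ_le
  obtain ⟨M, hM⟩ := exists_norm_logDeriv_riemannZeta₁_le_of_one_le_re
  have hM0 : 0 ≤ M := (norm_nonneg _).trans (hM 1 (by simp))
  refine ⟨2 + G + M, fun s hs ↦ ?_⟩
  rw [logDeriv_xi (by linarith) (riemannZeta₁_half_add_ne_zero_of_le hε h (by linarith))]
  calc _ ≤ 2 + G * (1 + √‖s‖) + M := norm_add₃_le.trans <| by
        gcongr; exacts [norm_one_div_half_add_le (by linarith), hG s (by linarith), hM s hs]
    _ ≤ (2 + G + M) * (1 + √‖s‖) := by nlinarith [Real.sqrt_nonneg ‖s‖]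

lemma exists_norm_logDeriv_xi_le_of_re_le_one (hε : ε ≠ 0)
    (h : ∀ u, 0 < u → ε * mertensError u ≤ K * (1 + u)) :
    ∃ B, ∀ s : ℂ, 0 < s.re → s.re ≤ 1 → ‖logDeriv xi s‖ ≤ B * (1 + ‖s‖) / s.re ^ 2 := by
  obtain ⟨G, hG⟩ := exists_norm_logDeriv_Gammaℝ_le
  obtain ⟨M, hM⟩ := exists_norm_logDeriv_riemannZeta₁_le_of_le hε h
  have hG0 : 0 ≤ G := by simpa using (norm_nonneg _).trans (hG 0 (by simp))
  refine ⟨2 + 2 * G + M, fun s hs hs' ↦ ?_⟩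
  have hsqrt : √‖s‖ ≤ 1 + ‖s‖ := by
    rw [Real.sqrt_le_left (by positivity)]
    nlinarith [norm_nonneg s]
  have hsmall : 2 + G * (1 + √‖s‖) ≤ (2 + 2 * G) * (1 + ‖s‖) / s.re ^ 2 :=
    calc 2 + G * (1 + √‖s‖) ≤ (2 + 2 * G) * (1 + ‖s‖) := by nlinarith [norm_nonneg s]
      _ ≤ (2 + 2 * G) * (1 + ‖s‖) / s.re ^ 2 :=
        le_div_self (by positivity) (by positivity) (pow_le_one₀ hs.le hs')
  rw [logDeriv_xi (by linarith) (riemannZeta₁_half_add_ne_zero_of_le hε h hs)]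
  calc _ ≤ 2 + G * (1 + √‖s‖) + M * (1 + ‖s‖) / s.re ^ 2 := norm_add₃_le.trans <| by
        gcongr; exacts [norm_one_div_half_add_le hs.le, hG s hs.le, hM s hs hs']
    _ ≤ (2 + 2 * G) * (1 + ‖s‖) / s.re ^ 2 + M * (1 + ‖s‖) / s.re ^ 2 := by gcongr
    _ = (2 + 2 * G + M) * (1 + ‖s‖) / s.re ^ 2 := by ring

lemma exists_evenImagZeros_xi_of_le (hε : ε ≠ 0)
    (h : ∀ u, 0 < u → ε * mertensError u ≤ K * (1 + u)) : ∃ B, EvenImagZeros xi B := by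
  obtain ⟨B₁, hB₁⟩ := exists_norm_logDeriv_xi_le_of_one_le_re hε h
  obtain ⟨B₂, hB₂⟩ := exists_norm_logDeriv_xi_le_of_re_le_one hε h
  refine ⟨max B₁ B₂, differentiable_xi, xi_neg, xi_zero_ne_zero, fun {ρ} hρ ↦ ?_,
    fun hs ↦ (hB₁ _ hs).trans (by gcongr; exact le_max_left _ _),
    fun hs hs' ↦ (hB₂ _ hs hs').trans (by gcongr; exact le_max_right _ _)⟩
  rcases lt_trichotomy ρ.re 0 with hneg | hzero | hpos
  · rw [← xi_neg] at hρ
    exact absurd hρ (xi_ne_zero_of_le hε h (by simpa using hneg))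
  · exact hzero
  · exact absurd hρ (xi_ne_zero_of_le hε h hpos)

end OneSidedBound

/-- Positive frequencies `γ i` with multiplicities `m i`, so rare that
`∑ m i / (R ^ 2 + γ i ^ 2) ≤ B / √R`; this is all that is used of the ordinates of the zeta zeros
once the explicit formula is established. Convergence at `R = 1` gives convergence for all `R`. -/
structure SparseFrequencies {ι : Type*} (γ : ι → ℝ) (m : ι → ℕ) (B : ℝ) : Prop where
  pos (i : ι) : 0 < γ i
  summable {R : ℝ} (hR : 1 ≤ R) : Summable fun i ↦ (m i : ℝ) / (R ^ 2 + γ i ^ 2)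
  tsum_le {R : ℝ} (hR : 1 ≤ R) : ∑' i, (m i : ℝ) / (R ^ 2 + γ i ^ 2) ≤ B / √R

lemma EvenImagZeros.sparseFrequencies {f : ℂ → ℂ} {K : ℝ} (hf : EvenImagZeros f K) :
    SparseFrequencies (fun ρ : {ρ // f ρ = 0} ↦ ‖(ρ : ℂ)‖) (fun ρ ↦ analyticOrderNatAt f ρ)
      (2 * K) := by
  have hsum {R : ℝ} (hR : 1 ≤ R) : HasSum
      (fun ρ : {ρ // f ρ = 0} ↦ (analyticOrderNatAt f ρ : ℝ) / (R ^ 2 + ‖(ρ : ℂ)‖ ^ 2))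
      ((logDeriv f R).re / R) := by
    have hR0 : 0 < R := by linarith
    refine ((hasSum_re (hf.hasSum_logDeriv_zeros (by simpa using hR0))).div_const R).congr_fun
      fun ρ ↦ ?_
    norm_cast
    field_simp
  refine ⟨fun ρ ↦ norm_pos_iff.2 fun h ↦ hf.apply_zero_ne_zero (by simpa [h] using ρ.2),
    fun hR ↦ (hsum hR).summable, fun {R} hR ↦ ?_⟩
  have hR0 : 0 < R := by linarith
  have hsqrt : 1 ≤ √R := Real.one_le_sqrt.2 hR
  have hre : (logDeriv f R).re ≤ K * (1 + √R) := by
    simpa [abs_of_pos hR0] using (re_le_norm _).trans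
      (hf.norm_logDeriv_le_of_one_le_re (s := R) (by simpa using hR))
  have hK := hf.const_nonneg
  rw [(hsum hR).tsum_eq]
  calc (logDeriv f R).re / R ≤ K * (√R + √R) / R := by gcongr; exact hre.trans (by gcongr)
    _ = 2 * K * (√R / R) := by ring
    _ = 2 * K / √R := by rw [Real.sqrt_div_self', mul_one_div]

/-! ### The explicit formula -/

section LaplaceUniqueness

open scoped FourierTransform

variable {f : ℝ → ℝ} {σ : ℝ}

lemma fourier_indicator_mul_cexp_eq_zero (hf : ∀ s : ℂ, s.re = σ → HasLaplace f s 0) :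
    𝓕 ((Ioi 0).indicator fun u : ℝ ↦ (f u : ℂ) * cexp (-σ * u)) = 0 := by
  ext w
  rw [Real.fourier_real_eq_integral_exp_smul, Pi.zero_apply,
    ← (hf (σ + (2 * π * w : ℝ) * I) (by simp)).2, ← integral_indicator measurableSet_Ioi]
  congr 1 with v
  by_cases hv : v ∈ Ioi (0 : ℝ)
  · rw [indicator_of_mem hv, indicator_of_mem hv, smul_eq_mul, mul_left_comm, ← exp_add]
    congr 2
    push_cast
    ring
  · rw [indicator_of_notMem hv, indicator_of_notMem hv, smul_zero]

lemma eq_zero_of_hasLaplace_zero (hf : ∀ s : ℂ, s.re = σ → HasLaplace f s 0)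
    (hc : ContinuousOn f (Ioi 0)) {u : ℝ} (hu : 0 < u) : f u = 0 := by
  set g : ℝ → ℂ := (Ioi 0).indicator fun u : ℝ ↦ (f u : ℂ) * cexp (-σ * u)
  have hg : Integrable g := (integrable_indicator_iff measurableSet_Ioi).2 (hf σ (by simp)).1
  have hgu : ContinuousAt g u := by
    have hfu := hc.continuousAt (Ioi_mem_nhds hu)
    refine (show ContinuousAt (fun u : ℝ ↦ (f u : ℂ) * cexp (-σ * u)) u by fun_prop).congr ?_
    filter_upwards [Ioi_mem_nhds hu] with v hv
    simp only [g, indicator_of_mem hv]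
  have hF : 𝓕 g = 0 := fourier_indicator_mul_cexp_eq_zero hf
  have hinv := hg.fourierInv_fourier_eq (by rw [hF]; exact integrable_zero _ _ _) hgu
  rw [hF, Real.fourierInv_eq'] at hinv
  simpa [g, hu, exp_ne_zero] using hinv.symm

end LaplaceUniqueness

lemma weightedSum_eq_sum_comp_max {k : ℝ → ℝ} (hk : k 0 = 0) {u : ℝ} {N : ℕ}
    (hN : Real.exp u < N) :
    weightedSum k u = ∑ n ∈ Finset.range N, weight n * k (max (u - Real.log n) 0) := by
  have hsub : Finset.range (⌊Real.exp u⌋₊ + 1) ⊆ Finset.range N :=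
    Finset.range_mono ((Nat.floor_lt (Real.exp_pos u).le).2 hN)
  rw [weightedSum, ← Finset.sum_subset hsub fun n _ hn ↦ ?_]
  · refine Finset.sum_congr rfl fun n hn ↦ ?_
    rcases eq_or_ne n 0 with rfl | h0
    · simp
    · rw [max_eq_left (sub_nonneg.2 ((mem_range_floor_exp h0 u).1 hn))]
  · rcases eq_or_ne n 0 with rfl | h0
    · simp
    · rw [mem_range_floor_exp h0, not_le] at hn
      rw [max_eq_right (by linarith), hk, mul_zero]

lemma continuous_weightedSum {k : ℝ → ℝ} (hk : Continuous k) (hk0 : k 0 = 0) :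
    Continuous (weightedSum k) := by
  refine continuous_iff_continuousAt.2 fun u ↦ ?_
  obtain ⟨N, hN⟩ := exists_nat_gt (Real.exp (u + 1))
  have hsum : Continuous fun u ↦ ∑ n ∈ Finset.range N, weight n * k (max (u - Real.log n) 0) := by
    fun_prop
  refine hsum.continuousAt.congr ?_
  filter_upwards [Iio_mem_nhds (lt_add_one u)] with v hv
  exact (weightedSum_eq_sum_comp_max hk0 ((Real.exp_lt_exp.2 hv).trans hN)).symm

/-- The contribution to the explicit formula of the poles of the Gamma factor, i.e. of the trivial
zeros of the zeta function. -/
noncomputable def gammaPoleSum (u : ℝ) : ℝ :=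
  ∑' n, (1 - Real.exp (-gammaPole n * u)) / gammaPole n ^ 2

lemma summable_one_div_gammaPole_sq : Summable fun n ↦ 1 / gammaPole n ^ 2 := by
  refine (summable_const_div_succ_sq 4).of_nonneg_of_le (fun n ↦ by positivity) fun n ↦ ?_
  have hpos := gammaPole_pos n
  have hle := succ_le_two_mul_gammaPole n
  rw [div_le_div_iff₀ (by positivity) (by positivity)]
  nlinarith

lemma abs_gammaPoleSum_term_le (n : ℕ) {u : ℝ} (hu : 0 ≤ u) :
    |(1 - Real.exp (-gammaPole n * u)) / gammaPole n ^ 2| ≤ 1 / gammaPole n ^ 2 := by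
  have hexp : Real.exp (-gammaPole n * u) ≤ 1 :=
    Real.exp_le_one_iff.2 (by nlinarith [gammaPole_pos n])
  rw [abs_div, abs_of_nonneg (sub_nonneg.2 hexp), abs_sq]
  gcongr
  linarith [Real.exp_pos (-gammaPole n * u)]

lemma summable_gammaPoleSum_term {u : ℝ} (hu : 0 ≤ u) :
    Summable fun n ↦ (1 - Real.exp (-gammaPole n * u)) / gammaPole n ^ 2 :=
  .of_norm_bounded summable_one_div_gammaPole_sq fun n ↦ abs_gammaPoleSum_term_le n hu

lemma abs_gammaPoleSum_le {u : ℝ} (hu : 0 ≤ u) :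
    |gammaPoleSum u| ≤ ∑' n, 1 / gammaPole n ^ 2 := by
  rw [gammaPoleSum, ← Real.norm_eq_abs]
  exact tsum_of_norm_bounded summable_one_div_gammaPole_sq.hasSum fun n ↦
    abs_gammaPoleSum_term_le n hu

lemma continuousOn_gammaPoleSum : ContinuousOn gammaPoleSum (Ici 0) :=
  continuousOn_tsum (fun n ↦ by fun_prop) summable_one_div_gammaPole_sq fun n _ hu ↦
    abs_gammaPoleSum_term_le n hu

lemma hasLaplace_gammaPoleSum {s : ℂ} (hs : 0 < s.re) :
    HasLaplace gammaPoleSum s ((logDeriv Gammaℝ (1 / 2 + s) - logDerivGammaHalf) / s ^ 2) := by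
  have hsum := (hasSum_logDeriv_Gammaℝ (by linarith : -(1 / 2) < s.re)).div_const (s ^ 2)
  rw [← hsum.tsum_eq]
  refine .tsum_of_abs_le hs summable_one_div_gammaPole_sq
    (fun n u hu ↦ abs_gammaPoleSum_term_le n hu.le) fun n ↦ ?_
  have hpos := gammaPole_pos n
  have hs0 : s ≠ 0 := ne_zero_of_re_pos hs
  have hpole : (gammaPole n : ℂ) ≠ 0 := mod_cast hpos.ne'
  have hadd : s + gammaPole n ≠ 0 := add_ofReal_ne_zero (by linarith)
  refine ((((hasLaplace_const 1 hs).sub (hasLaplace_exp (-gammaPole n) (by linarith))).const_mul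
    (1 / gammaPole n ^ 2)).congr fun u _ ↦ by ring).congr_val ?_
  push_cast
  rw [sub_neg_eq_add]
  field_simp
  ring

/-- The smoothed sum `∑_{n ≤ e^u} Λ(n)/√n (u - log n)` minus the contributions of the pole of the
zeta function and of its functional equation; by the explicit formula it is bounded. -/
noncomputable def smoothedError (u : ℝ) : ℝ :=
  weightedSum (fun t ↦ t) u -
    (4 * (Real.exp (1 / 2 * u) + Real.exp (-(1 / 2) * u)) - 8 + logDerivGammaHalf * u)

lemma continuous_smoothedError : Continuous smoothedError :=
  (continuous_weightedSum continuous_id rfl).sub (by fun_prop)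

lemma hasLaplace_smoothedError {s : ℂ} (hs : 1 / 2 < s.re) :
    HasLaplace smoothedError s
      ((-1 / (1 / 2 + s) - logDeriv riemannZeta₁ (1 / 2 + s) - logDerivGammaHalf) / s ^ 2) := by
  have hs0 : 0 < s.re := by linarith
  have hexp := ((hasLaplace_exp (1 / 2) hs).add
    (hasLaplace_exp (-(1 / 2)) (by linarith : -(1 / 2) < s.re))).const_mul 4
  refine ((hasLaplace_weightedSum hs (hasLaplace_id hs0)).sub
    ((hexp.sub (hasLaplace_const 8 hs0)).add
      ((hasLaplace_id hs0).const_mul logDerivGammaHalf))).congr_val ?_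
  have h0 : s ≠ 0 := ne_zero_of_re_pos hs0
  have hsub : s - 1 / 2 ≠ 0 := ne_zero_of_re_pos (by norm_num at hs ⊢; exact hs)
  have hadd : 1 / 2 + s ≠ 0 := ne_zero_of_re_pos (re_half_add_pos (by linarith))
  have hprod : (s - 1 / 2) * (1 / 2 + s) ≠ 0 := mul_ne_zero hsub hadd
  have hpoles : (1 / (s - 1 / 2) + 1 / (1 / 2 + s)) / s ^ 2 =
      4 * (1 / (s - 1 / 2) + 1 / (1 / 2 + s)) - 8 / s := by
    rw [div_add_div _ _ hsub hadd]
    generalize hw : (s - 1 / 2) * (1 / 2 + s) = w at hprod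
    field_simp
    linear_combination (-16 * s) * hw
  push_cast
  rw [sub_neg_eq_add, add_comm s (1 / 2)]
  linear_combination hpoles

section ZeroSum

variable {ι : Type*} {γ : ι → ℝ} {m : ι → ℕ} {B : ℝ}

/-- The contribution `∑ m i (1 - cos (γ i u)) / γ i ^ 2` to the explicit formula of the zeros
`1 / 2 ± i γ i` with multiplicities `m i`. -/
noncomputable def zeroSum (γ : ι → ℝ) (m : ι → ℕ) (u : ℝ) : ℝ :=
  ∑' i, (m i : ℝ) / γ i ^ 2 * (1 - Real.cos (γ i * u))

lemma zeroSum_neg (γ : ι → ℝ) (m : ι → ℕ) (u : ℝ) : zeroSum γ m (-u) = zeroSum γ m u := by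
  simp [zeroSum]

lemma abs_zeroSum_term_le (c : ℝ) (n : ℕ) (u : ℝ) :
    |(n : ℝ) / c ^ 2 * (1 - Real.cos (c * u))| ≤ n / c ^ 2 * 2 := by
  have hcos := Real.neg_one_le_cos (c * u)
  rw [abs_mul, abs_of_nonneg (by positivity), abs_of_nonneg (by linarith [Real.cos_le_one (c * u)])]
  gcongr
  linarith

lemma hasLaplace_cos (t : ℝ) {s : ℂ} (hs : 0 < s.re) :
    HasLaplace (fun u ↦ Real.cos (t * u)) s (s / (s ^ 2 + t ^ 2)) := by
  have hcos (u : ℝ) : ((Real.cos (t * u) : ℝ) : ℂ) * cexp (-s * u) =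
      1 / 2 * (cexp ((t * I - s) * u) + cexp ((-t * I - s) * u)) := by
    push_cast
    rw [Complex.cos, div_mul_eq_mul_div, add_mul, ← exp_add, ← exp_add]
    ring_nf
  have hpos : (t * I - s).re < 0 := by simpa using hs
  have hneg : (-t * I - s).re < 0 := by simpa using hs
  have hpos0 : t * I - s ≠ 0 := fun h ↦ hpos.ne (by rw [h, zero_re])
  have hneg0 : -t * I - s ≠ 0 := fun h ↦ hneg.ne (by rw [h, zero_re])
  have hden : s ^ 2 + (t : ℂ) ^ 2 = (t * I - s) * (-t * I - s) := by
    linear_combination (t : ℂ) ^ 2 * I_sq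
  have hint₁ := integrableOn_exp_mul_complex_Ioi hpos 0
  have hint₂ := integrableOn_exp_mul_complex_Ioi hneg 0
  simp only [HasLaplace, hcos]
  refine ⟨(hint₁.add hint₂).const_mul _, ?_⟩
  rw [integral_const_mul, integral_add hint₁ hint₂, integral_exp_mul_complex_Ioi hpos,
    integral_exp_mul_complex_Ioi hneg]
  simp only [ofReal_zero, mul_zero, exp_zero]
  rw [div_add_div _ _ hpos0 hneg0, ← hden]
  ring

namespace SparseFrequencies

lemma const_nonneg (h : SparseFrequencies γ m B) : 0 ≤ B := by
  simpa using (tsum_nonneg fun _ ↦ by positivity).trans (h.tsum_le le_rfl)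

lemma summable_div_sq (h : SparseFrequencies γ m B) : Summable fun i ↦ (m i : ℝ) / γ i ^ 2 := by
  have hsum := h.summable le_rfl
  refine .of_norm_bounded_eventually (hsum.mul_left 2) ?_
  filter_upwards [hsum.tendsto_cofinite_zero.eventually_lt_const one_half_pos] with i hi
  have hpos := h.pos i
  rcases Nat.eq_zero_or_pos (m i) with hm | hm
  · simp [hm]
  have hm1 : (1 : ℝ) ≤ m i := mod_cast hm
  rw [div_lt_div_iff₀ (by positivity) (by norm_num)] at hi
  rw [Real.norm_of_nonneg (by positivity), mul_div_assoc',
    div_le_div_iff₀ (by positivity) (by positivity)]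
  nlinarith

lemma summable_zeroSum_term (h : SparseFrequencies γ m B) (u : ℝ) :
    Summable fun i ↦ (m i : ℝ) / γ i ^ 2 * (1 - Real.cos (γ i * u)) :=
  .of_norm_bounded (h.summable_div_sq.mul_right 2) fun _ ↦ abs_zeroSum_term_le _ _ u

lemma abs_zeroSum_le (h : SparseFrequencies γ m B) (u : ℝ) :
    |zeroSum γ m u| ≤ (∑' i, (m i : ℝ) / γ i ^ 2) * 2 := by
  rw [zeroSum, ← Real.norm_eq_abs]
  exact tsum_of_norm_bounded (h.summable_div_sq.hasSum.mul_right 2) fun _ ↦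
    abs_zeroSum_term_le _ _ u

lemma continuous_zeroSum (h : SparseFrequencies γ m B) : Continuous (zeroSum γ m) :=
  continuous_tsum (fun i ↦ by fun_prop) (h.summable_div_sq.mul_right 2) fun _ u ↦
    abs_zeroSum_term_le _ _ u

lemma hasLaplace_zeroSum [Countable ι] (h : SparseFrequencies γ m B) {s V : ℂ} (hs : 0 < s.re)
    (hV : HasSum (fun i ↦ (m i : ℂ) * (s / (s ^ 2 + γ i ^ 2))) V) :
    HasLaplace (zeroSum γ m) s (V / s ^ 2) := by
  rw [← (hV.div_const (s ^ 2)).tsum_eq]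
  refine .tsum_of_abs_le hs (h.summable_div_sq.mul_right 2)
    (fun _ u _ ↦ abs_zeroSum_term_le _ _ u) fun i ↦ ?_
  have hs0 : s ≠ 0 := ne_zero_of_re_pos hs
  have hγ : (γ i : ℂ) ≠ 0 := mod_cast (h.pos i).ne'
  have hden : s ^ 2 + (γ i : ℂ) ^ 2 ≠ 0 := by
    obtain ⟨c, hc, hle⟩ := exists_le_norm_sq_add_sq hs
    exact norm_pos_iff.1 ((by positivity : 0 < c * (1 + γ i ^ 2)).trans_le (hle (γ i)))
  refine (((hasLaplace_const 1 hs).sub (hasLaplace_cos (γ i) hs)).const_mul _).congr_val ?_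
  push_cast
  field_simp
  ring

end SparseFrequencies

theorem smoothedError_eq [Countable ι] (h : SparseFrequencies γ m B)
    (hξ : ∀ s : ℂ, 0 < s.re →
      HasSum (fun i ↦ (m i : ℂ) * (s / (s ^ 2 + γ i ^ 2))) (logDeriv xi s)) {u : ℝ} (hu : 0 < u) :
    smoothedError u = gammaPoleSum u - zeroSum γ m u := by
  have hcont : ContinuousOn (fun u ↦ smoothedError u - (gammaPoleSum u - zeroSum γ m u)) (Ioi 0) :=
    continuous_smoothedError.continuousOn.sub
      ((continuousOn_gammaPoleSum.mono Ioi_subset_Ici_self).sub h.continuous_zeroSum.continuousOn)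
  refine sub_eq_zero.1 (eq_zero_of_hasLaplace_zero (σ := 1) (fun s hs ↦ ?_) hcont hu)
  have hs0 : 0 < s.re := by linarith
  refine ((hasLaplace_smoothedError (by linarith)).sub
    ((hasLaplace_gammaPoleSum hs0).sub (h.hasLaplace_zeroSum hs0 (hξ s hs0)))).congr_val ?_
  rw [logDeriv_xi (by linarith) (riemannZeta₁_ne_zero_of_one_le_re (by norm_num; linarith))]
  ring

end ZeroSum

/-! ### Almost periods -/

/-- **Dirichlet's theorem on simultaneous approximation**. -/
lemma exists_nat_forall_abs_mul_sub_int_le {ι : Type*} (S : Finset ι) (x : ι → ℝ) {q : ℕ}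
    (hq : 0 < q) :
    ∃ k : ℕ, 1 ≤ k ∧ k ≤ q ^ S.card ∧ ∀ i ∈ S, ∃ p : ℤ, |k * x i - p| ≤ 1 / q := by
  classical
  have hq0 : (0 : ℝ) < q := mod_cast hq
  have hbox (y : ℝ) : ⌊q * Int.fract y⌋₊ < q := by
    rw [Nat.floor_lt (by positivity)]
    exact mul_lt_of_lt_one_right hq0 (Int.fract_lt_one y)
  let box (j : Fin (q ^ S.card + 1)) (i : S) : Fin q := ⟨⌊q * Int.fract (j * x i)⌋₊, hbox _⟩
  obtain ⟨j₁, j₂, hne, heq⟩ := Fintype.exists_ne_map_eq_of_card_lt box (by simp)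
  wlog hlt : j₁ < j₂ generalizing j₁ j₂
  · exact this j₂ j₁ hne.symm heq.symm (hne.lt_or_gt.resolve_left hlt)
  refine ⟨j₂ - j₁, by lia, by lia, fun i hi ↦ ⟨⌊j₂ * x i⌋ - ⌊j₁ * x i⌋, ?_⟩⟩
  have hfloor : ⌊q * Int.fract (j₁ * x i)⌋₊ = ⌊q * Int.fract (j₂ * x i)⌋₊ :=
    congr_arg Fin.val (congr_fun heq ⟨i, hi⟩)
  have hclose : |q * Int.fract (j₂ * x i) - q * Int.fract (j₁ * x i)| < 1 :=
    Int.abs_sub_lt_one_of_floor_eq_floor (by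
      rw [← Int.natCast_floor_eq_floor (by positivity),
        ← Int.natCast_floor_eq_floor (by positivity), hfloor])
  rw [← mul_sub, abs_mul, abs_of_pos hq0, mul_comm, ← lt_div_iff₀ hq0] at hclose
  refine le_of_eq_of_le (congr_arg _ ?_) hclose.le
  rw [Nat.cast_sub (mod_cast hlt.le), ← Int.self_sub_floor, ← Int.self_sub_floor]
  push_cast
  ring

lemma abs_cos_add_sub_cos_le (x v : ℝ) (k : ℤ) :
    |Real.cos (x + v) - Real.cos v| ≤ |x - k * (2 * π)| := by
  rw [← Real.cos_sub_int_mul_two_pi (x + v) k]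
  refine (Real.abs_cos_sub_cos_le _ _).trans_eq (congr_arg _ ?_)
  ring

lemma exists_almost_period_cos {ι : Type*} (S : Finset ι) (γ : ι → ℝ) {q : ℕ} (hq : 0 < q) {Y : ℝ}
    (hY : 0 < Y) :
    ∃ u, Y ≤ u ∧ u ≤ q ^ S.card * Y ∧
      ∀ i ∈ S, ∀ v, |Real.cos (γ i * (u + v)) - Real.cos (γ i * v)| ≤ 2 * π / q := by
  obtain ⟨k, hk1, hkq, happrox⟩ :=
    exists_nat_forall_abs_mul_sub_int_le S (fun i ↦ γ i * Y / (2 * π)) hq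
  refine ⟨k * Y, le_mul_of_one_le_left hY.le (mod_cast hk1), ?_, fun i hi v ↦ ?_⟩
  · gcongr
    exact_mod_cast hkq
  obtain ⟨p, hp⟩ := happrox i hi
  have hperiod : γ i * (k * Y) - p * (2 * π) = (k * (γ i * Y / (2 * π)) - p) * (2 * π) := by
    field_simp
  calc
    _ ≤ |γ i * (k * Y) - p * (2 * π)| := by
      rw [mul_add]
      exact abs_cos_add_sub_cos_le _ _ p
    _ = |k * (γ i * Y / (2 * π)) - p| * (2 * π) := by
      rw [hperiod, abs_mul, abs_of_pos Real.two_pi_pos]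
    _ ≤ 1 / q * (2 * π) := by gcongr
    _ = 2 * π / q := by ring

namespace SparseFrequencies

variable {ι : Type*} {γ : ι → ℝ} {m : ι → ℕ} {B R : ℝ}

lemma card_le (h : SparseFrequencies γ m B) (hR : 1 ≤ R) {S : Finset ι}
    (hS : ∀ i ∈ S, m i ≠ 0 ∧ γ i ≤ R) : S.card ≤ 2 * B * R ^ 2 / √R := by
  have hterm (i : ι) (hi : i ∈ S) : 1 / (2 * R ^ 2) ≤ (m i : ℝ) / (R ^ 2 + γ i ^ 2) := by
    have hm : (1 : ℝ) ≤ m i := mod_cast Nat.one_le_iff_ne_zero.2 (hS i hi).1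
    have hle := (hS i hi).2
    have hpos := h.pos i
    gcongr
    nlinarith
  have hcard : (S.card : ℝ) * (1 / (2 * R ^ 2)) ≤ B / √R := by
    rw [← nsmul_eq_mul]
    exact ((S.card_nsmul_le_sum _ _ hterm).trans
      ((h.summable hR).sum_le_tsum S fun _ _ ↦ by positivity)).trans (h.tsum_le hR)
  rw [mul_one_div, div_le_iff₀ (by positivity)] at hcard
  exact hcard.trans_eq (by ring)

lemma finite_setOf_le (h : SparseFrequencies γ m B) (hR : 1 ≤ R) :
    {i | m i ≠ 0 ∧ γ i ≤ R}.Finite := by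
  by_contra hinf
  obtain ⟨k, hk⟩ := exists_nat_gt (2 * B * R ^ 2 / √R)
  obtain ⟨S, hS, hcard⟩ := Set.Infinite.exists_subset_card_eq hinf k
  exact (h.card_le hR fun i hi ↦ hS hi).not_gt (hcard ▸ hk)

lemma div_sq_le (h : SparseFrequencies γ m B) (hR : 0 ≤ R) {i : ι} (hi : ¬(m i ≠ 0 ∧ γ i ≤ R)) :
    (m i : ℝ) / γ i ^ 2 ≤ 2 * (m i / (R ^ 2 + γ i ^ 2)) := by
  have hpos := h.pos i
  rcases eq_or_ne (m i) 0 with hm | hm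
  · simp [hm]
  have hlt : R ≤ γ i := (not_le.1 fun hle ↦ hi ⟨hm, hle⟩).le
  have hsq : R ^ 2 + γ i ^ 2 ≤ 2 * γ i ^ 2 := by nlinarith
  rw [mul_div_assoc', div_le_div_iff₀ (by positivity) (by positivity)]
  nlinarith [mul_le_mul_of_nonneg_left hsq (Nat.cast_nonneg (α := ℝ) (m i))]

lemma abs_zeroSum_add_sub_le (h : SparseFrequencies γ m B) (hR : 1 ≤ R) {u δ : ℝ} (hδ : 0 ≤ δ)
    (hu : ∀ i, m i ≠ 0 ∧ γ i ≤ R → ∀ v, |Real.cos (γ i * (u + v)) - Real.cos (γ i * v)| ≤ δ)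
    (v : ℝ) :
    |zeroSum γ m (u + v) - zeroSum γ m v| ≤ δ * ∑' i, (m i : ℝ) / γ i ^ 2 + 4 * (B / √R) := by
  have hterm (i : ι) : ‖(m i : ℝ) / γ i ^ 2 * (1 - Real.cos (γ i * (u + v))) -
      m i / γ i ^ 2 * (1 - Real.cos (γ i * v))‖ ≤
        δ * (m i / γ i ^ 2) + 4 * (m i / (R ^ 2 + γ i ^ 2)) := by
    have hnonneg : 0 ≤ (m i : ℝ) / γ i ^ 2 := by positivity
    have htail : 0 ≤ (m i : ℝ) / (R ^ 2 + γ i ^ 2) := by positivity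
    rw [← mul_sub, sub_sub_sub_cancel_left, norm_mul, Real.norm_of_nonneg hnonneg, norm_sub_rev,
      Real.norm_eq_abs]
    by_cases hi : m i ≠ 0 ∧ γ i ≤ R
    · nlinarith [hu i hi v]
    · have hcos := (abs_sub (Real.cos (γ i * (u + v))) (Real.cos (γ i * v))).trans
        (add_le_add (Real.abs_cos_le_one _) (Real.abs_cos_le_one _))
      nlinarith [h.div_sq_le (by linarith) hi]
  have hmain := h.summable_div_sq.hasSum.mul_left δ
  have htail := (h.summable hR).hasSum.mul_left 4
  rw [zeroSum, zeroSum, ← (h.summable_zeroSum_term _).tsum_sub (h.summable_zeroSum_term _),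
    ← Real.norm_eq_abs]
  refine (tsum_of_norm_bounded (hmain.add htail) hterm).trans ?_
  gcongr
  exact h.tsum_le hR

theorem exists_almost_period_zeroSum (h : SparseFrequencies γ m B) :
    ∃ K, ∀ T : ℕ, 1 ≤ T → ∀ Y, 0 < Y → ∃ u, Y ≤ u ∧
      Real.log u ≤ Real.log Y + 2 * B * T ^ 3 * Real.log T ∧
      ∀ v, |zeroSum γ m (u + v) - zeroSum γ m v| ≤ K / T := by
  refine ⟨2 * π * (∑' i, (m i : ℝ) / γ i ^ 2) + 4 * B, fun T hT Y hY ↦ ?_⟩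
  have hT1 : (1 : ℝ) ≤ T := mod_cast hT
  have hsqrt : √((T : ℝ) ^ 2) = T := Real.sqrt_sq (by linarith)
  have hR : 1 ≤ (T : ℝ) ^ 2 := one_le_pow₀ hT1
  have hfin := h.finite_setOf_le hR
  obtain ⟨u, hYu, huY, hu⟩ := exists_almost_period_cos hfin.toFinset γ hT hY
  refine ⟨u, hYu, ?_, fun v ↦ ?_⟩
  · have hcard := h.card_le hR (S := hfin.toFinset) (by simp)
    rw [hsqrt] at hcard
    have hlog := Real.log_le_log (hY.trans_le hYu) huY
    rw [Real.log_mul (by positivity) hY.ne', Real.log_pow, add_comm] at hlog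
    refine hlog.trans ?_
    gcongr
    refine hcard.trans_eq ?_
    field_simp
  · have hle := h.abs_zeroSum_add_sub_le hR (by positivity)
      (fun i hi ↦ hu i (hfin.mem_toFinset.2 hi)) v
    rw [hsqrt] at hle
    exact hle.trans_eq (by ring)

end SparseFrequencies

/-! ### The primitive of the error term -/

lemma hasDerivWithinAt_weightedSum {k k' : ℝ → ℝ} (hk : ∀ t, HasDerivAt k (k' t) t) (u : ℝ) :
    HasDerivWithinAt (weightedSum k) (weightedSum k' u) (Ici u) u := by
  have hderiv : HasDerivAt
      (fun v ↦ ∑ n ∈ Finset.range (⌊Real.exp u⌋₊ + 1), weight n * k (v - Real.log n))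
      (weightedSum k' u) u :=
    .fun_sum fun n _ ↦ (HasDerivAt.comp_sub_const u _ (hk _)).const_mul _
  refine hderiv.hasDerivWithinAt.congr_of_eventuallyEq ?_ rfl
  have hlt : ∀ᶠ v in 𝓝[≥] u, Real.exp v < ⌊Real.exp u⌋₊ + 1 :=
    Real.continuous_exp.continuousWithinAt.eventually_lt_const (Nat.lt_floor_add_one _)
  filter_upwards [hlt, self_mem_nhdsWithin] with v hv huv
  have hfloor : ⌊Real.exp v⌋₊ = ⌊Real.exp u⌋₊ :=
    le_antisymm (Nat.lt_succ_iff.1 ((Nat.floor_lt (Real.exp_pos v).le).2 (mod_cast hv)))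
      (Nat.floor_mono (Real.exp_le_exp.2 huv))
  rw [weightedSum, hfloor]

lemma intervalIntegrable_mertensError {a b : ℝ} (ha : 0 ≤ a) (hab : a ≤ b) :
    IntervalIntegrable mertensError volume a b := by
  rw [intervalIntegrable_iff_integrableOn_Ioc_of_le hab]
  have hLaplace : IntegrableOn (fun u : ℝ ↦ (mertensError u : ℂ) * cexp (-1 * u)) (Icc a b) :=
    ((integrableOn_Ici_iff_integrableOn_Ioi (by simp)).2
      (hasLaplace_mertensError (s := 1) (by norm_num)).1).mono_set fun x hx ↦ ha.trans hx.1
  have hmul := hLaplace.mul_continuousOn (g' := fun u : ℝ ↦ cexp u) (by fun_prop) isCompact_Icc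
  refine IntegrableOn.congr_fun (hmul.mono_set Ioc_subset_Icc_self).re (fun u _ ↦ ?_)
    measurableSet_Ioc
  rw [mul_assoc, ← exp_add]
  simp

lemma mertensError_eq (u : ℝ) :
    mertensError u = weightedSum (fun t ↦ Real.exp (1 / 2 * t)) u -
      (u - Real.eulerMascheroniConstant) * Real.exp (1 / 2 * u) := by
  rw [mertensError, ← exp_half_mul_sum_vonMangoldt_div, show u / 2 = 1 / 2 * u by ring]
  ring

/-- A continuous primitive of `mertensError`. -/
noncomputable def mertensPrimitive (u : ℝ) : ℝ :=
  weightedSum (fun t ↦ 2 * (Real.exp (1 / 2 * t) - 1)) u -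
    (2 * u - 4 - 2 * Real.eulerMascheroniConstant) * Real.exp (1 / 2 * u)

lemma continuous_mertensPrimitive : Continuous mertensPrimitive :=
  (continuous_weightedSum (by fun_prop) (by simp)).sub (by fun_prop)

lemma hasDerivAt_exp_const_mul (c u : ℝ) :
    HasDerivAt (fun u ↦ Real.exp (c * u)) (c * Real.exp (c * u)) u := by
  simpa [mul_comm] using ((hasDerivAt_id u).const_mul c).exp

lemma hasDerivWithinAt_mertensPrimitive (u : ℝ) :
    HasDerivWithinAt mertensPrimitive (mertensError u) (Ici u) u := by
  have hkernel (t : ℝ) :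
      HasDerivAt (fun t ↦ 2 * (Real.exp (1 / 2 * t) - 1)) (Real.exp (1 / 2 * t)) t :=
    (((hasDerivAt_exp_const_mul (1 / 2) t).sub_const 1).const_mul 2).congr_deriv (by ring)
  have hmain := ((((hasDerivAt_id u).const_mul 2).sub_const 4).sub_const
    (2 * Real.eulerMascheroniConstant)).fun_mul (hasDerivAt_exp_const_mul (1 / 2) u)
  refine ((hasDerivWithinAt_weightedSum hkernel u).sub hmain.hasDerivWithinAt).congr_deriv ?_
  rw [mertensError_eq, id]
  ring

lemma integral_mertensError {a b : ℝ} (ha : 0 ≤ a) (hab : a ≤ b) :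
    ∫ u in a..b, mertensError u = mertensPrimitive b - mertensPrimitive a :=
  intervalIntegral.integral_eq_sub_of_hasDeriv_right continuous_mertensPrimitive.continuousOn
    (fun x _ ↦ (hasDerivWithinAt_mertensPrimitive x).mono Ioi_subset_Ici_self)
    (intervalIntegrable_mertensError ha hab)

section Decay

variable {σ u : ℝ}

lemma abs_mertensPrimitive_le (hσ : 0 ≤ σ)
    (hint : IntegrableOn (fun u ↦ mertensError u * Real.exp (-σ * u)) (Ioi 0)) (hu : 0 ≤ u) :
    |mertensPrimitive u| ≤ |mertensPrimitive 0| +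
      Real.exp (σ * u) * ∫ v in Ioi 0, |mertensError v * Real.exp (-σ * v)| := by
  have hIoc : Ioc 0 u ⊆ Ioi 0 := fun v hv ↦ hv.1
  have hpoint : ∀ v ∈ Ioc 0 u,
      ‖mertensError v‖ ≤ Real.exp (σ * u) * |mertensError v * Real.exp (-σ * v)| := fun v hv ↦ by
    rw [abs_mul, Real.abs_exp, mul_left_comm, ← Real.exp_add]
    exact le_mul_of_one_le_right (abs_nonneg _) (Real.one_le_exp (by nlinarith [hv.2]))
  have hintegral : |∫ v in 0..u, mertensError v| ≤
      Real.exp (σ * u) * ∫ v in Ioi 0, |mertensError v * Real.exp (-σ * v)| := by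
    rw [intervalIntegral.integral_of_le hu, ← Real.norm_eq_abs]
    refine (norm_integral_le_of_norm_le ((hint.mono_set hIoc).abs.const_mul _)
      ((ae_restrict_iff' measurableSet_Ioc).2 (.of_forall hpoint))).trans ?_
    rw [integral_const_mul]
    exact mul_le_mul_of_nonneg_left
      (setIntegral_mono_set hint.abs (.of_forall fun _ ↦ abs_nonneg _) hIoc.eventuallyLE)
      (Real.exp_pos _).le
  rw [integral_mertensError le_rfl hu] at hintegral
  linarith [abs_sub_abs_le_abs_sub (mertensPrimitive u) (mertensPrimitive 0)]

lemma tendsto_exp_neg_mul_atTop {c : ℝ} (hc : 0 < c) :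
    Tendsto (fun u ↦ Real.exp (-c * u)) atTop (𝓝 0) :=
  Real.tendsto_exp_atBot.comp (tendsto_id.const_mul_atTop_of_neg (neg_neg_of_pos hc))

lemma tendsto_exp_neg_mul_mertensPrimitive {c : ℝ} (hσ : 0 ≤ σ) (hc : σ < c)
    (hint : IntegrableOn (fun u ↦ mertensError u * Real.exp (-σ * u)) (Ioi 0)) :
    Tendsto (fun u ↦ Real.exp (-c * u) * mertensPrimitive u) atTop (𝓝 0) := by
  have hlim := ((tendsto_exp_neg_mul_atTop (hσ.trans_lt hc)).mul_const |mertensPrimitive 0|).add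
    ((tendsto_exp_neg_mul_atTop (sub_pos.2 hc)).mul_const
      (∫ v in Ioi 0, |mertensError v * Real.exp (-σ * v)|))
  simp only [zero_mul, add_zero] at hlim
  refine squeeze_zero_norm' ?_ hlim
  filter_upwards [eventually_ge_atTop 0] with u hu
  rw [norm_mul, Real.norm_of_nonneg (Real.exp_pos _).le, Real.norm_eq_abs]
  refine (mul_le_mul_of_nonneg_left (abs_mertensPrimitive_le hσ hint hu)
    (Real.exp_pos _).le).trans_eq ?_
  rw [mul_add, ← mul_assoc, ← Real.exp_add]
  ring_nf

end Decay

/-! ### The primitive and the smoothed sum -/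

lemma abs_le_of_right_deriv_eq_half_add {V S : ℝ → ℝ} {K : ℝ} (hV : Continuous V)
    (hV' : ∀ u, 0 ≤ u → HasDerivWithinAt V ((V u + S u) / 2) (Ici u) u)
    (hS : ∀ u, 0 ≤ u → |S u| ≤ K)
    (hlim : Tendsto (fun u ↦ Real.exp (-(1 / 2) * u) * V u) atTop (𝓝 0)) {u : ℝ} (hu : 0 ≤ u) :
    |V u| ≤ K := by
  let F (t : ℝ) : ℝ := Real.exp (-(1 / 2) * t) * V t
  let G (t : ℝ) : ℝ := K * (Real.exp (-(1 / 2) * u) - Real.exp (-(1 / 2) * t))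
  have hF : Continuous F := by fun_prop
  have hF' (t : ℝ) (ht : 0 ≤ t) :
      HasDerivWithinAt F (Real.exp (-(1 / 2) * t) * S t / 2) (Ici t) t :=
    ((hasDerivAt_exp_const_mul (-(1 / 2)) t).hasDerivWithinAt.fun_mul (hV' t ht)).congr_deriv
      (by ring)
  have hG' (t : ℝ) : HasDerivAt G (Real.exp (-(1 / 2) * t) * K / 2) t :=
    (((hasDerivAt_exp_const_mul (-(1 / 2)) t).const_sub _).const_mul K).congr_deriv (by ring)
  have hFG (t : ℝ) (ht : u ≤ t) : ‖F t - F u‖ ≤ G t := by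
    refine image_norm_le_of_norm_deriv_right_le_deriv_boundary
      (hF.sub continuous_const).continuousOn (fun v hv ↦ (hF' v (hu.trans hv.1)).sub_const _)
      (by simp [F, G]) hG' (fun v hv ↦ ?_) (right_mem_Icc.2 ht)
    rw [norm_div, norm_mul, Real.norm_of_nonneg (Real.exp_pos _).le, Real.norm_two]
    gcongr
    exact hS v (hu.trans hv.1)
  have hlimit : ‖0 - F u‖ ≤ K * (Real.exp (-(1 / 2) * u) - 0) :=
    le_of_tendsto_of_tendsto (hlim.sub_const _).norm
      (((tendsto_exp_neg_mul_atTop one_half_pos).const_sub _).const_mul K)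
      ((eventually_ge_atTop u).mono hFG)
  rw [zero_sub, norm_neg, sub_zero, norm_mul, Real.norm_of_nonneg (Real.exp_pos _).le, mul_comm]
    at hlimit
  exact le_of_mul_le_mul_right hlimit (Real.exp_pos _)

lemma hasDerivWithinAt_smoothedError (u : ℝ) :
    HasDerivWithinAt smoothedError (weightedSum (fun _ ↦ 1) u -
      (2 * (Real.exp (1 / 2 * u) - Real.exp (-(1 / 2) * u)) + logDerivGammaHalf)) (Ici u) u := by
  have hmain := ((((hasDerivAt_exp_const_mul (1 / 2) u).add
    (hasDerivAt_exp_const_mul (-(1 / 2)) u)).const_mul 4).sub_const 8).add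
      ((hasDerivAt_id u).const_mul logDerivGammaHalf)
  refine ((hasDerivWithinAt_weightedSum hasDerivAt_id' u).sub
    hmain.hasDerivWithinAt).congr_deriv ?_
  ring

/-- The difference of `mertensPrimitive` and `smoothedError`, up to elementary terms chosen such
that its derivative is half its sum with `smoothedError`. -/
noncomputable def primitiveDefect (u : ℝ) : ℝ :=
  mertensPrimitive u - smoothedError u - 2 * Real.exp (-(1 / 2) * u) + 2 * logDerivGammaHalf

lemma continuous_primitiveDefect : Continuous primitiveDefect :=
  ((continuous_mertensPrimitive.sub continuous_smoothedError).sub (by fun_prop)).add_const _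

lemma hasDerivWithinAt_primitiveDefect (u : ℝ) :
    HasDerivWithinAt primitiveDefect ((primitiveDefect u + smoothedError u) / 2) (Ici u) u := by
  have hsum : weightedSum (fun t ↦ 2 * (Real.exp (1 / 2 * t) - 1)) u =
      2 * weightedSum (fun t ↦ Real.exp (1 / 2 * t)) u - 2 * weightedSum (fun _ ↦ 1) u := by
    simp only [weightedSum, Finset.mul_sum, ← Finset.sum_sub_distrib]
    exact Finset.sum_congr rfl fun n _ ↦ by ring
  refine ((((hasDerivWithinAt_mertensPrimitive u).sub (hasDerivWithinAt_smoothedError u)).sub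
    ((hasDerivAt_exp_const_mul (-(1 / 2)) u).const_mul 2).hasDerivWithinAt).add_const
      _).congr_deriv ?_
  rw [primitiveDefect, mertensError_eq, mertensPrimitive, hsum]
  ring

section BoundedSmoothedError

variable {K : ℝ}

lemma abs_primitiveDefect_le (hS : ∀ u, 0 ≤ u → |smoothedError u| ≤ K)
    (hint : IntegrableOn (fun u ↦ mertensError u * Real.exp (-(1 / 4) * u)) (Ioi 0)) {u : ℝ}
    (hu : 0 ≤ u) :
    |primitiveDefect u| ≤ K := by
  refine abs_le_of_right_deriv_eq_half_add continuous_primitiveDefect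
    (fun u _ ↦ hasDerivWithinAt_primitiveDefect u) hS ?_ hu
  have hexp := tendsto_exp_neg_mul_atTop one_half_pos
  have hprim := tendsto_exp_neg_mul_mertensPrimitive (c := 1 / 2) (by norm_num) (by norm_num) hint
  have hsmooth : Tendsto (fun u ↦ Real.exp (-(1 / 2) * u) * smoothedError u) atTop (𝓝 0) :=
    hexp.zero_mul_isBoundedUnder_le
      (isBoundedUnder_of_eventually_le ((eventually_ge_atTop 0).mono hS))
  have hlim := ((hprim.sub hsmooth).sub ((hexp.mul hexp).const_mul 2)).add
    (hexp.mul_const (2 * logDerivGammaHalf))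
  simp only [mul_zero, zero_mul, sub_zero, add_zero] at hlim
  refine hlim.congr fun u ↦ ?_
  rw [primitiveDefect]
  ring

lemma abs_primitiveDefect_sub_le (hS : ∀ u, 0 ≤ u → |smoothedError u| ≤ K)
    (hint : IntegrableOn (fun u ↦ mertensError u * Real.exp (-(1 / 4) * u)) (Ioi 0)) {a b : ℝ}
    (ha : 0 ≤ a) (hab : a ≤ b) :
    |primitiveDefect b - primitiveDefect a| ≤ K * (b - a) := by
  refine norm_image_sub_le_of_norm_deriv_right_le_segment continuous_primitiveDefect.continuousOn
    (fun u _ ↦ hasDerivWithinAt_primitiveDefect u) (fun u hu ↦ ?_) b (right_mem_Icc.2 hab)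
  have hu0 := ha.trans hu.1
  rw [Real.norm_eq_abs, abs_div, abs_two]
  linarith [abs_add_le (primitiveDefect u) (smoothedError u), hS u hu0,
    abs_primitiveDefect_le hS hint hu0]

end BoundedSmoothedError

lemma exp_sub_exp_le (x y : ℝ) : Real.exp x - Real.exp y ≤ (x - y) * Real.exp x := by
  have hexp : Real.exp y = Real.exp x * Real.exp (y - x) := by rw [← Real.exp_add]; ring_nf
  nlinarith [Real.add_one_le_exp (y - x), Real.exp_pos x]

lemma abs_gammaPoleSum_sub_le {a b : ℝ} (ha : 1 ≤ a) (hab : a ≤ b) :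
    |gammaPoleSum b - gammaPoleSum a| ≤ (∑' n, 1 / gammaPole n ^ 2) * (b - a) := by
  rw [gammaPoleSum, gammaPoleSum, ← (summable_gammaPoleSum_term (by linarith)).tsum_sub
    (summable_gammaPoleSum_term (by linarith)), ← Real.norm_eq_abs]
  refine tsum_of_norm_bounded (summable_one_div_gammaPole_sq.hasSum.mul_right (b - a)) fun n ↦ ?_
  have hpos := gammaPole_pos n
  generalize gammaPole n = t at hpos
  have hmono : Real.exp (-t * b) ≤ Real.exp (-t * a) := Real.exp_le_exp.2 (by nlinarith)
  have hdecay : t * Real.exp (-t * a) ≤ 1 := by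
    rw [neg_mul, Real.exp_neg, ← div_eq_mul_inv, div_le_one (Real.exp_pos _)]
    nlinarith [Real.add_one_le_exp (t * a)]
  have hdiff : Real.exp (-t * a) - Real.exp (-t * b) ≤ b - a := by
    nlinarith [exp_sub_exp_le (-t * a) (-t * b)]
  rw [Real.norm_eq_abs, ← sub_div, sub_sub_sub_cancel_left,
    abs_of_nonneg (div_nonneg (sub_nonneg.2 hmono) (by positivity)), one_div_mul_eq_div]
  gcongr

lemma weight_one : weight 1 = 0 := by simp [weight]

lemma weightedSum_eq_zero {u : ℝ} (k : ℝ → ℝ) (hu : u < Real.log 2) : weightedSum k u = 0 := by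
  refine Finset.sum_eq_zero fun n hn ↦ ?_
  rcases Nat.lt_or_ge n 2 with h | h
  · interval_cases n <;> simp [weight_one]
  · have hlog : Real.log 2 ≤ Real.log n := Real.log_le_log (by norm_num) (mod_cast h)
    exact absurd ((mem_range_floor_exp (by lia) u).1 hn) (by linarith)

section ExplicitFormula

variable {ι : Type*} {γ : ι → ℝ} {m : ι → ℕ} {B : ℝ}

lemma SparseFrequencies.abs_smoothedError_le (h : SparseFrequencies γ m B)
    (hS : ∀ u, 0 < u → smoothedError u = gammaPoleSum u - zeroSum γ m u) {u : ℝ} (hu : 0 ≤ u) :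
    |smoothedError u| ≤ ∑' n, 1 / gammaPole n ^ 2 + (∑' i, (m i : ℝ) / γ i ^ 2) * 2 := by
  rcases hu.eq_or_lt with rfl | hpos
  · rw [smoothedError, weightedSum_eq_zero _ (Real.log_pos one_lt_two)]
    norm_num
    positivity
  · rw [hS u hpos]
    exact (abs_sub _ _).trans (add_le_add (abs_gammaPoleSum_le hu) (h.abs_zeroSum_le u))

lemma SparseFrequencies.exists_abs_integral_mertensError_add_le (h : SparseFrequencies γ m B)
    (hS : ∀ u, 0 < u → smoothedError u = gammaPoleSum u - zeroSum γ m u)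
    (hint : IntegrableOn (fun u ↦ mertensError u * Real.exp (-(1 / 4) * u)) (Ioi 0)) :
    ∃ K, ∀ a b, 1 ≤ a → a ≤ b →
      |(∫ u in a..b, mertensError u) + (zeroSum γ m b - zeroSum γ m a)| ≤ K * (b - a) := by
  obtain ⟨K, hK⟩ : ∃ K, ∀ u, 0 ≤ u → |smoothedError u| ≤ K := ⟨_, fun _ ↦ h.abs_smoothedError_le hS⟩
  refine ⟨K + ∑' n, 1 / gammaPole n ^ 2 + 1, fun a b ha hab ↦ ?_⟩
  have hdefect := abs_primitiveDefect_sub_le hK hint (by linarith) hab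
  have hpoles := abs_gammaPoleSum_sub_le ha hab
  have hmono : Real.exp (-(1 / 2) * b) ≤ Real.exp (-(1 / 2) * a) := Real.exp_le_exp.2 (by linarith)
  have hexp : |2 * (Real.exp (-(1 / 2) * b) - Real.exp (-(1 / 2) * a))| ≤ b - a := by
    have hle_one : Real.exp (-(1 / 2) * a) ≤ 1 := Real.exp_le_one_iff.2 (by linarith)
    rw [abs_le]
    constructor <;> nlinarith [exp_sub_exp_le (-(1 / 2) * a) (-(1 / 2) * b)]
  have hdecomp : (∫ u in a..b, mertensError u) + (zeroSum γ m b - zeroSum γ m a) =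
      (primitiveDefect b - primitiveDefect a) + (gammaPoleSum b - gammaPoleSum a) +
        2 * (Real.exp (-(1 / 2) * b) - Real.exp (-(1 / 2) * a)) := by
    rw [integral_mertensError (by linarith) hab, primitiveDefect, primitiveDefect,
      hS a (by linarith), hS b (by linarith)]
    ring
  rw [hdecomp]
  linarith [abs_add_three (primitiveDefect b - primitiveDefect a)
    (gammaPoleSum b - gammaPoleSum a) (2 * (Real.exp (-(1 / 2) * b) - Real.exp (-(1 / 2) * a)))]

end ExplicitFormula

/-! ### The singularity at the origin -/

lemma log_le_sum_inv_succ (T : ℕ) : Real.log T ≤ ∑ n ∈ Finset.range T, ((n : ℝ) + 1)⁻¹ := by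
  have hharmonic := log_add_one_le_harmonic T
  rw [harmonic] at hharmonic
  push_cast at hharmonic
  rcases T.eq_zero_or_pos with rfl | hT
  · simp
  · exact (Real.log_le_log (by positivity) (by linarith)).trans hharmonic

lemma le_one_sub_exp_div_sq_sub {t T : ℝ} (ht : 0 < t) (hT : 0 < T) :
    Real.exp (-t * (2 / T)) * (1 / (t * T)) ≤
      (1 - Real.exp (-t * (2 / T))) / t ^ 2 - (1 - Real.exp (-t * (1 / T))) / t ^ 2 := by
  have hexp : Real.exp (-t * (1 / T)) = Real.exp (-t * (2 / T)) * Real.exp (t / T) := by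
    rw [← Real.exp_add]
    ring_nf
  have hcancel : 1 / (t * T) * t ^ 2 = t / T := by field_simp
  rw [← sub_div, hexp, le_div_iff₀ (by positivity), mul_assoc, hcancel]
  nlinarith [Real.exp_pos (-t * (2 / T)), Real.add_one_le_exp (t / T)]

lemma log_div_le_gammaPoleSum_sub {T : ℕ} (hT : 1 ≤ T) :
    Real.exp (-4) / 2 * Real.log T / T ≤ gammaPoleSum (2 / T) - gammaPoleSum (1 / T) := by
  have hT0 : (0 : ℝ) < T := mod_cast hT
  have hsum₂ := summable_gammaPoleSum_term (by positivity : 0 ≤ 2 / (T : ℝ))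
  have hsum₁ := summable_gammaPoleSum_term (by positivity : 0 ≤ 1 / (T : ℝ))
  have hterm (n : ℕ) := le_one_sub_exp_div_sq_sub (gammaPole_pos n) hT0
  rw [gammaPoleSum, gammaPoleSum, ← hsum₂.tsum_sub hsum₁]
  refine le_trans ?_ ((hsum₂.sub hsum₁).sum_le_tsum (Finset.range T) fun n _ ↦ le_trans (by
    have hpos := gammaPole_pos n
    positivity) (hterm n))
  calc
    _ ≤ Real.exp (-4) / 2 * (∑ n ∈ Finset.range T, ((n : ℝ) + 1)⁻¹) / T := by
      gcongr
      exact log_le_sum_inv_succ T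
    _ = ∑ n ∈ Finset.range T, Real.exp (-4) * (1 / (2 * (n + 1) * T)) := by
      rw [Finset.mul_sum, Finset.sum_div]
      exact Finset.sum_congr rfl fun n _ ↦ by field_simp
    _ ≤ _ := Finset.sum_le_sum fun n hn ↦ le_trans ?_ (hterm n)
  have hpos := gammaPole_pos n
  have hnT : (n : ℝ) + 1 ≤ T := mod_cast Finset.mem_range.1 hn
  have hpole : gammaPole n ≤ 2 * (n + 1) := by rw [gammaPole]; linarith
  gcongr
  rw [neg_mul, neg_le_neg_iff, mul_div_assoc', div_le_iff₀ hT0]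
  linarith

/-- There are no prime powers below `2`, so for small `u` the unbounded slope of `gammaPoleSum` at
the origin has to be compensated by `zeroSum`. -/
lemma log_sub_le_zeroSum_sub {ι : Type*} {γ : ι → ℝ} {m : ι → ℕ}
    (hS : ∀ u, 0 < u → smoothedError u = gammaPoleSum u - zeroSum γ m u) {T : ℕ} (hT : 3 ≤ T) :
    (Real.exp (-4) / 2 * Real.log T - |logDerivGammaHalf|) / T ≤
      zeroSum γ m (2 / T) - zeroSum γ m (1 / T) := by
  have hT3 : (3 : ℝ) ≤ T := mod_cast hT
  have hT0 : (0 : ℝ) < T := by linarith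
  have hlog₂ : 2 / (T : ℝ) < Real.log 2 := by
    rw [div_lt_iff₀ hT0]
    nlinarith [Real.log_two_gt_d9]
  have hlog₁ : 1 / (T : ℝ) < Real.log 2 := lt_trans (by gcongr; norm_num) hlog₂
  have hS₂ := hS (2 / T) (by positivity)
  have hS₁ := hS (1 / T) (by positivity)
  rw [smoothedError, weightedSum_eq_zero _ hlog₂] at hS₂
  rw [smoothedError, weightedSum_eq_zero _ hlog₁] at hS₁
  have hcosh : Real.exp (1 / 2 * (1 / T)) + Real.exp (-(1 / 2) * (1 / T)) ≤
      Real.exp (1 / 2 * (2 / T)) + Real.exp (-(1 / 2) * (2 / T)) := by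
    have hle : Real.cosh (1 / 2 * (1 / T)) ≤ Real.cosh (1 / 2 * (2 / T)) := by
      rw [Real.cosh_le_cosh, abs_of_pos (by positivity), abs_of_pos (by positivity)]
      gcongr
      norm_num
    rw [Real.cosh_eq, Real.cosh_eq, ← neg_mul, ← neg_mul] at hle
    linarith
  have hlinear : -|logDerivGammaHalf| / T ≤
      logDerivGammaHalf * (2 / T) - logDerivGammaHalf * (1 / T) := by
    have hdiff : logDerivGammaHalf * (2 / T) - logDerivGammaHalf * (1 / T) =
      logDerivGammaHalf / T := by ring
    rw [hdiff]
    gcongr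
    exact neg_abs_le _
  rw [sub_eq_add_neg, add_div]
  linarith [log_div_le_gammaPoleSum_sub (T := T) (by lia)]

/-! ### Large values of the error term -/

lemma exists_le_of_mul_le_integral {f : ℝ → ℝ} {a b c : ℝ} (hab : a < b)
    (hf : IntervalIntegrable f volume a b) (h : c * (b - a) ≤ ∫ v in a..b, f v) :
    ∃ v ∈ Ioc a b, c ≤ f v := by
  have hvol : volume (Ioc a b) ≠ 0 := by simpa using hab
  obtain ⟨v, hv, hle⟩ := exists_setAverage_le hvol measure_Ioc_lt_top.ne
    ((intervalIntegrable_iff_integrableOn_Ioc_of_le hab.le).1 hf)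
  refine ⟨v, hv, le_trans ?_ hle⟩
  rwa [← uIoc_of_le hab.le, interval_average_eq_div, le_div_iff₀ (sub_pos.2 hab)]

section ExplicitFormula

variable {ι : Type*} {γ : ι → ℝ} {m : ι → ℕ} {B δ K u : ℝ} {T : ℕ}

/-- As `zeroSum` is even, its large increment to the right of the origin comes with one of the
opposite sign to the left, and an almost period transports both. -/
lemma exists_le_neg_mul_zeroSum_sub
    (hS : ∀ u, 0 < u → smoothedError u = gammaPoleSum u - zeroSum γ m u) (hδ : δ = 1 ∨ δ = -1)
    (hT : 3 ≤ T) (hu : ∀ v, |zeroSum γ m (u + v) - zeroSum γ m v| ≤ K / T) :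
    ∃ a, u - 1 ≤ a ∧ a + 1 / T ≤ u + 1 ∧
      (Real.exp (-4) / 2 * Real.log T - |logDerivGammaHalf| - 2 * K) / T ≤
        -δ * (zeroSum γ m (a + 1 / T) - zeroSum γ m a) := by
  have hT3 : (3 : ℝ) ≤ T := mod_cast hT
  have hpos : 0 < 1 / (T : ℝ) := by positivity
  have hle : 2 / (T : ℝ) ≤ 1 := (div_le_one (by positivity)).2 (by linarith)
  have hadd : 1 / (T : ℝ) + 1 / T = 2 / T := by ring
  have horigin := log_sub_le_zeroSum_sub hS hT
  have hdiv : (Real.exp (-4) / 2 * Real.log T - |logDerivGammaHalf| - 2 * K) / T =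
    (Real.exp (-4) / 2 * Real.log T - |logDerivGammaHalf|) / T - 2 * (K / T) := by ring
  rw [hdiv]
  rcases hδ with rfl | rfl
  · have hleft := abs_le.1 (hu (-(2 / T)))
    have hright := abs_le.1 (hu (-(1 / T)))
    rw [zeroSum_neg] at hleft hright
    have hend : u + -(2 / (T : ℝ)) + 1 / T = u + -(1 / T) := by linarith
    refine ⟨u + -(2 / T), by linarith, by linarith, ?_⟩
    rw [hend]
    linarith
  · have hleft := abs_le.1 (hu (1 / T))
    have hright := abs_le.1 (hu (2 / T))
    refine ⟨u + 1 / T, by linarith, by linarith, ?_⟩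
    rw [add_assoc, hadd]
    linarith

lemma SparseFrequencies.exists_le_mul_mertensError (h : SparseFrequencies γ m B)
    (hS : ∀ u, 0 < u → smoothedError u = gammaPoleSum u - zeroSum γ m u)
    (hint : IntegrableOn (fun u ↦ mertensError u * Real.exp (-(1 / 4) * u)) (Ioi 0)) :
    ∃ C, ∀ δ : ℝ, δ = 1 ∨ δ = -1 → ∀ T : ℕ, 3 ≤ T → ∀ Y, 1 ≤ Y → ∃ u, Y ≤ u ∧
      Real.log u ≤ Real.log (2 * (Y + 1)) + 2 * B * T ^ 3 * Real.log T ∧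
      Real.exp (-4) / 2 * Real.log T - C ≤ δ * mertensError u := by
  obtain ⟨K₁, hK₁⟩ := h.exists_abs_integral_mertensError_add_le hS hint
  obtain ⟨K₂, hK₂⟩ := h.exists_almost_period_zeroSum
  refine ⟨|logDerivGammaHalf| + 2 * K₂ + K₁, fun δ hδ T hT Y hY ↦ ?_⟩
  obtain ⟨τ, hτY, hτlog, hτ⟩ := hK₂ T (by lia) (Y + 1) (by linarith)
  obtain ⟨a, haτ, hbτ, hincr⟩ := exists_le_neg_mul_zeroSum_sub hS hδ hT hτ
  have hpos : 0 < 1 / (T : ℝ) := by positivity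
  have hlt : a < a + 1 / T := by linarith
  have hintegral : -δ * (zeroSum γ m (a + 1 / T) - zeroSum γ m a) - K₁ / T ≤
      ∫ v in a..a + 1 / T, δ * mertensError v := by
    have hbound := abs_le.1 (hK₁ a (a + 1 / T) (by linarith) hlt.le)
    rw [add_sub_cancel_left, mul_one_div] at hbound
    rw [intervalIntegral.integral_const_mul]
    rcases hδ with rfl | rfl <;> linarith
  obtain ⟨u, hu, hlarge⟩ := exists_le_of_mul_le_integral
    (c := Real.exp (-4) / 2 * Real.log T - (|logDerivGammaHalf| + 2 * K₂ + K₁)) hlt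
    ((intervalIntegrable_mertensError (by linarith) hlt.le).const_mul δ) <| by
      rw [add_sub_cancel_left, mul_one_div]
      refine le_trans (le_of_eq ?_) ((sub_le_sub_right hincr _).trans hintegral)
      ring
  refine ⟨u, by linarith [hu.1], ?_, hlarge⟩
  have hlog : Real.log u ≤ Real.log (2 * τ) :=
    Real.log_le_log (by linarith [hu.1]) (by linarith [hu.2])
  rw [Real.log_mul two_ne_zero (by linarith)] at hlog ⊢
  linarith

end ExplicitFormula

theorem exists_le_mul_mertensError_of_le {ε K : ℝ} (hε : ε ≠ 0)
    (h : ∀ u, 0 < u → ε * mertensError u ≤ K * (1 + u)) :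
    ∃ B C, ∀ δ : ℝ, δ = 1 ∨ δ = -1 → ∀ T : ℕ, 3 ≤ T → ∀ Y, 1 ≤ Y → ∃ u, Y ≤ u ∧
      Real.log u ≤ Real.log (2 * (Y + 1)) + B * T ^ 3 * Real.log T ∧
      Real.exp (-4) / 2 * Real.log T - C ≤ δ * mertensError u := by
  obtain ⟨B, hB⟩ := exists_evenImagZeros_xi_of_le hε h
  have : Countable {ρ // xi ρ = 0} := (countable_zeros differentiable_xi xi_zero_ne_zero).to_subtype
  have hexplicit (u : ℝ) (hu : 0 < u) := smoothedError_eq hB.sparseFrequencies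
    (fun _ ↦ hB.hasSum_logDeriv_zeros) hu
  exact ⟨_, hB.sparseFrequencies.exists_le_mul_mertensError hexplicit
    (integrableOn_mertensError_mul_exp_of_le hε h (by norm_num))⟩

lemma exists_abs_mertensError_le (U : ℝ) :
    ∃ C, ∀ u, 0 ≤ u → u ≤ U → |mertensError u| ≤ C := by
  let S (u : ℝ) : ℝ :=
    ∑ n ∈ Finset.range (⌊Real.exp u⌋₊ + 1), ArithmeticFunction.vonMangoldt n / n
  have hterm (n : ℕ) : 0 ≤ ArithmeticFunction.vonMangoldt n / (n : ℝ) :=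
    div_nonneg ArithmeticFunction.vonMangoldt_nonneg n.cast_nonneg
  refine ⟨Real.exp (U / 2) * (S U + U + 1), fun u hu huU ↦ ?_⟩
  have hmono : S u ≤ S U :=
    Finset.sum_le_sum_of_subset_of_nonneg (by gcongr) fun n _ _ ↦ hterm n
  have hnonneg : 0 ≤ S u := Finset.sum_nonneg fun n _ ↦ hterm n
  rw [mertensError, abs_mul, Real.abs_exp]
  gcongr
  rw [abs_le]
  constructor <;> linarith [Real.one_half_lt_eulerMascheroniConstant,
    Real.eulerMascheroniConstant_lt_two_thirds]

lemma exists_mul_mertensError_le_mul_one_add {δ c C U : ℝ} (hc : 0 ≤ c)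
    (h : ∀ u, U ≤ u → δ * mertensError u ≤ c * Real.log (Real.log u) + C) :
    ∃ K, ∀ u, 0 < u → δ * mertensError u ≤ K * (1 + u) := by
  obtain ⟨M, hM⟩ := exists_abs_mertensError_le (max U 1)
  have hM0 : 0 ≤ M := (abs_nonneg _).trans (hM 0 le_rfl (by positivity))
  refine ⟨|δ| * M + c + |C|, fun u hu ↦ ?_⟩
  rcases le_total u (max U 1) with hsmall | hlarge
  · have hbound : δ * mertensError u ≤ |δ| * M :=
      (le_abs_self _).trans ((abs_mul _ _).trans_le (by gcongr; exact hM u hu.le hsmall))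
    nlinarith [mul_nonneg (abs_nonneg δ) hM0, abs_nonneg C]
  · have hlog : 0 ≤ Real.log u := Real.log_nonneg ((le_max_right _ _).trans hlarge)
    have hloglog : Real.log (Real.log u) ≤ u :=
      (Real.log_le_self hlog).trans (Real.log_le_self hu.le)
    nlinarith [h u ((le_max_left _ _).trans hlarge), mul_le_mul_of_nonneg_left hloglog hc,
      mul_nonneg (abs_nonneg δ) hM0, abs_nonneg C, le_abs_self C]

lemma log_log_le {L B u T : ℝ} (hT : 1 ≤ T) (hu : 1 < u)
    (h : Real.log u ≤ L + B * T ^ 3 * Real.log T) :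
    Real.log (Real.log u) ≤ Real.log (|L| + |B| + 1) + 4 * Real.log T := by
  have hT4 : 1 ≤ T ^ 4 := one_le_pow₀ hT
  have hlogT : Real.log T ≤ T := Real.log_le_self (by linarith)
  have hlogT0 : 0 ≤ Real.log T := Real.log_nonneg hT
  have hbound : Real.log u ≤ (|L| + |B| + 1) * T ^ 4 := calc
    Real.log u ≤ L + B * T ^ 3 * Real.log T := h
    _ ≤ |L| * T ^ 4 + |B| * T ^ 3 * T := by
      gcongr
      · exact (le_abs_self L).trans (le_mul_of_one_le_right (abs_nonneg L) hT4)
      · exact le_abs_self B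
    _ ≤ (|L| + |B| + 1) * T ^ 4 := by linarith
  refine (Real.log_le_log (Real.log_pos hu) hbound).trans_eq ?_
  rw [Real.log_mul (by positivity) (by positivity), Real.log_pow]
  norm_num

theorem exists_lt_mul_mertensError {δ c : ℝ} (hδ : δ = 1 ∨ δ = -1) (hc : 0 ≤ c)
    (hc' : 8 * c < Real.exp (-4)) (C U : ℝ) :
    ∃ u, U ≤ u ∧ c * Real.log (Real.log u) + C < δ * mertensError u := by
  by_contra! hle
  obtain ⟨K, hK⟩ := exists_mul_mertensError_le_mul_one_add hc hle
  have hδ0 : δ ≠ 0 := by rcases hδ with rfl | rfl <;> norm_num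
  obtain ⟨B, C', hlarge⟩ := exists_le_mul_mertensError_of_le hδ0 hK
  let L := Real.log (2 * (max U 2 + 1))
  have hatTop : Tendsto (fun T : ℕ ↦ (Real.exp (-4) / 2 - 4 * c) * Real.log T) atTop atTop :=
    (Real.tendsto_log_atTop.comp tendsto_natCast_atTop_atTop).const_mul_atTop (by linarith)
  obtain ⟨T, hT, hTlog⟩ := ((eventually_ge_atTop 3).and
    (hatTop.eventually_gt_atTop (c * Real.log (|L| + |B| + 1) + C + C'))).exists
  obtain ⟨u, hUu, hlog, hu⟩ := hlarge δ hδ T hT (max U 2)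
    (one_le_two.trans (le_max_right _ _))
  have hu2 : 2 ≤ u := (le_max_right _ _).trans hUu
  have hloglog := log_log_le (mod_cast (by lia : 1 ≤ T)) (by linarith) hlog
  linarith [hle u ((le_max_left _ _).trans hUu), mul_le_mul_of_nonneg_left hloglog hc]

/-! ### Prime powers -/

lemma sum_vonMangoldt_mul (f : ℕ → ℝ) (N : ℕ) :
    ∑ n ∈ Finset.range (N + 1), ArithmeticFunction.vonMangoldt n * f n =
      ∑ p ∈ Finset.range (N + 1) with p.Prime,
        ∑ k ∈ Finset.Icc 1 (Nat.log p N), Real.log p * f (p ^ k) := by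
  rw [Finset.sum_sigma']
  symm
  refine Finset.sum_bij_ne_zero (fun a _ _ ↦ a.1 ^ a.2) ?_ ?_ ?_ ?_
  · rintro ⟨p, k⟩ h -
    simp only [Finset.mem_sigma, Finset.mem_filter, Finset.mem_range, Finset.mem_Icc] at h ⊢
    exact Nat.lt_succ_of_le (Nat.pow_le_of_le_log (by have := h.1.2.pos; lia) h.2.2)
  · rintro ⟨p, k⟩ h - ⟨q, l⟩ h' - hpq
    simp only [Finset.mem_sigma, Finset.mem_filter, Finset.mem_Icc] at h h'
    obtain ⟨rfl, rfl⟩ := h.1.2.pow_inj' h'.1.2 (by lia) (by lia) hpq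
    rfl
  · rintro n hn hne
    obtain ⟨p, k, hp, hk, rfl⟩ := (isPrimePow_nat_iff n).1
      (ArithmeticFunction.vonMangoldt_ne_zero_iff.1 (left_ne_zero_of_mul hne))
    have hle : p ^ k ≤ N := Nat.lt_succ_iff.1 (Finset.mem_range.1 hn)
    refine ⟨⟨p, k⟩, ?_, ?_, rfl⟩
    · simp only [Finset.mem_sigma, Finset.mem_filter, Finset.mem_range, Finset.mem_Icc]
      exact ⟨⟨Nat.lt_succ_of_le ((Nat.le_self_pow hk.ne' p).trans hle), hp⟩, hk,
        Nat.le_log_of_pow_le hp.one_lt hle⟩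
    · rwa [ArithmeticFunction.vonMangoldt_apply_pow hk.ne',
        ArithmeticFunction.vonMangoldt_apply_prime hp] at hne
  · rintro ⟨p, k⟩ h -
    simp only [Finset.mem_sigma, Finset.mem_filter, Finset.mem_Icc] at h
    rw [ArithmeticFunction.vonMangoldt_apply_pow (by lia),
      ArithmeticFunction.vonMangoldt_apply_prime h.1.2]

lemma sum_Icc_inv_pow {p : ℝ} (h₀ : p ≠ 0) (h₁ : p ≠ 1) (K : ℕ) :
    ∑ k ∈ Finset.Icc 1 K, (p ^ k)⁻¹ = 1 / (p - 1) - 1 / ((p - 1) * p ^ K) := by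
  have hsub : p - 1 ≠ 0 := sub_ne_zero.2 h₁
  induction K with
  | zero => simp
  | succ K ih =>
    rw [Finset.sum_Icc_succ_top (by lia), ih]
    field_simp
    ring

lemma sum_log_div_sub_sum_vonMangoldt_div (N : ℕ) :
    ∑ p ∈ Finset.range (N + 1) with p.Prime, Real.log p / ((p : ℝ) - 1) -
        ∑ n ∈ Finset.range (N + 1), ArithmeticFunction.vonMangoldt n / n =
      ∑ p ∈ Finset.range (N + 1) with p.Prime,
        Real.log p / (((p : ℝ) - 1) * (p : ℝ) ^ Nat.log p N) := by
  simp only [div_eq_mul_inv (ArithmeticFunction.vonMangoldt _)]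
  rw [sum_vonMangoldt_mul (fun n ↦ (n : ℝ)⁻¹), ← Finset.sum_sub_distrib]
  refine Finset.sum_congr rfl fun p hp ↦ ?_
  have hprime := (Finset.mem_filter.1 hp).2
  simp only [Nat.cast_pow]
  rw [← Finset.mul_sum,
    sum_Icc_inv_pow (mod_cast hprime.ne_zero) (mod_cast hprime.ne_one)]
  ring

lemma theta_mul_sub_le {N : ℕ} (hN : 1 ≤ N) :
    Chebyshev.theta N * (1 / (N : ℝ) ^ 2 - 1 / ((N : ℝ) + 1) ^ 2) ≤
      2 * Real.log 4 * (1 / N - 1 / ((N : ℝ) + 1)) := by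
  have hN0 : (0 : ℝ) < N := mod_cast hN
  have hsq : 0 ≤ 1 / (N : ℝ) ^ 2 - 1 / ((N : ℝ) + 1) ^ 2 :=
    sub_nonneg.2 (by gcongr; linarith)
  calc
    _ ≤ Real.log 4 * N * (1 / (N : ℝ) ^ 2 - 1 / ((N : ℝ) + 1) ^ 2) := by
      gcongr
      exact Chebyshev.theta_le_log4_mul_x hN0.le
    _ = 2 * Real.log 4 * (1 / N - 1 / ((N : ℝ) + 1)) - Real.log 4 * (1 / (N * (N + 1) ^ 2)) := by
      field_simp
      ring
    _ ≤ _ := sub_le_self _ (by positivity)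

lemma sum_log_div_sq_le {M N : ℕ} (hM : 1 ≤ M) (hMN : M ≤ N) :
    ∑ p ∈ Finset.Ioc M N with p.Prime, Real.log p / (p : ℝ) ^ 2 ≤
      Chebyshev.theta N / (N : ℝ) ^ 2 + 2 * Real.log 4 * (1 / M - 1 / N) := by
  induction N, hMN using Nat.le_induction with
  | base => simpa using div_nonneg (Chebyshev.theta_nonneg _) (by positivity)
  | succ N hMN ih =>
    have htheta : Chebyshev.theta (N + 1 : ℕ) =
        Chebyshev.theta N + if (N + 1).Prime then Real.log (N + 1 : ℕ) else 0 := by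
      rw [Chebyshev.theta_eq_sum_Icc, Chebyshev.theta_eq_sum_Icc, Nat.floor_natCast,
        Nat.floor_natCast, Finset.sum_filter, Finset.sum_filter, Finset.sum_Icc_succ_top (by lia)]
    have hsum : ∑ p ∈ Finset.Ioc M (N + 1) with p.Prime, Real.log p / (p : ℝ) ^ 2 =
        ∑ p ∈ Finset.Ioc M N with p.Prime, Real.log p / (p : ℝ) ^ 2 +
          (Chebyshev.theta (N + 1 : ℕ) - Chebyshev.theta N) / ((N + 1 : ℕ) : ℝ) ^ 2 := by
      rw [htheta, Finset.sum_filter, Finset.sum_filter, Finset.sum_Ioc_succ_top hMN]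
      split_ifs <;> simp
    have habel := theta_mul_sub_le (hM.trans hMN)
    rw [hsum]
    push_cast at habel ⊢
    linarith [mul_sub (Chebyshev.theta N) (1 / (N : ℝ) ^ 2) (1 / ((N : ℝ) + 1) ^ 2),
      sub_div (Chebyshev.theta (N + 1)) (Chebyshev.theta N) (((N : ℝ) + 1) ^ 2),
      mul_one_div (Chebyshev.theta N) ((N : ℝ) ^ 2),
      mul_one_div (Chebyshev.theta N) (((N : ℝ) + 1) ^ 2)]

lemma log_div_mul_pow_log_le {p N : ℕ} {X : ℝ} (hp : p.Prime) (hX : 0 < X)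
    (h : X ≤ (p : ℝ) ^ (Nat.log p N + 1)) :
    Real.log p / (((p : ℝ) - 1) * (p : ℝ) ^ Nat.log p N) ≤ 2 / X * Real.log p := by
  have hp2 : (2 : ℝ) ≤ p := mod_cast hp.two_le
  have hlog : 0 ≤ Real.log p := Real.log_nonneg (by linarith)
  have hpow : 0 < (p : ℝ) ^ Nat.log p N := by positivity
  have hX2 : X / 2 ≤ ((p : ℝ) - 1) * (p : ℝ) ^ Nat.log p N := by
    rw [pow_succ'] at h
    nlinarith
  calc
    _ ≤ Real.log p / (X / 2) := by gcongr
    _ = 2 / X * Real.log p := by field_simp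

lemma sum_small_primes_le {N : ℕ} (hN : 1 ≤ N) :
    ∑ p ∈ Finset.Icc 0 (Nat.sqrt N) with p.Prime,
        Real.log p / (((p : ℝ) - 1) * (p : ℝ) ^ Nat.log p N) ≤ 2 * Real.log 4 / √N := by
  have hN0 : (0 : ℝ) < N := mod_cast hN
  calc
    _ ≤ ∑ p ∈ Finset.Icc 0 (Nat.sqrt N) with p.Prime, 2 / N * Real.log p :=
      Finset.sum_le_sum fun p hp ↦ by
        have hprime := (Finset.mem_filter.1 hp).2
        exact log_div_mul_pow_log_le hprime hN0
          (mod_cast (Nat.lt_pow_succ_log_self hprime.one_lt N).le)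
    _ = 2 / N * Chebyshev.theta (Nat.sqrt N) := by
      rw [← Finset.mul_sum, Chebyshev.theta_eq_sum_Icc, Nat.floor_natCast]
    _ ≤ 2 / N * (Real.log 4 * √N) := by
      gcongr
      exact (Chebyshev.theta_le_log4_mul_x (Nat.cast_nonneg _)).trans
        (by gcongr; exact Real.nat_sqrt_le_real_sqrt)
    _ = 2 * Real.log 4 / √N := by
      nth_rewrite 1 [← Real.sq_sqrt hN0.le]
      field_simp

lemma sum_large_primes_le {N : ℕ} (hN : 1 ≤ N) :
    ∑ p ∈ Finset.Ioc (Nat.sqrt N) N with p.Prime,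
        Real.log p / (((p : ℝ) - 1) * (p : ℝ) ^ Nat.log p N) ≤ 8 * Real.log 4 / √N := by
  have hN0 : (0 : ℝ) < N := mod_cast hN
  have hM : 1 ≤ Nat.sqrt N := Nat.sqrt_pos.2 hN
  have hM1 : (1 : ℝ) ≤ Nat.sqrt N := mod_cast hM
  have hsqrt : 1 / (Nat.sqrt N : ℝ) ≤ 2 / √N := by
    rw [div_le_div_iff₀ (by linarith) (Real.sqrt_pos.2 hN0)]
    linarith [Real.real_sqrt_le_nat_sqrt_succ (a := N)]
  have htheta : Chebyshev.theta N / (N : ℝ) ^ 2 ≤ Real.log 4 / N := by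
    rw [div_le_div_iff₀ (by positivity) hN0]
    nlinarith [Chebyshev.theta_le_log4_mul_x hN0.le]
  calc
    _ ≤ ∑ p ∈ Finset.Ioc (Nat.sqrt N) N with p.Prime, 2 * (Real.log p / (p : ℝ) ^ 2) :=
      Finset.sum_le_sum fun p hp ↦ by
        obtain ⟨hmem, hprime⟩ := Finset.mem_filter.1 hp
        have hp1 : (1 : ℝ) ≤ p := mod_cast hprime.one_le
        have hk := Nat.log_pos hprime.one_lt (Finset.mem_Ioc.1 hmem).2
        refine (log_div_mul_pow_log_le hprime (by positivity)
          (pow_le_pow_right₀ hp1 (by lia : 2 ≤ _))).trans_eq ?_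
        ring
    _ ≤ 2 * (Chebyshev.theta N / (N : ℝ) ^ 2 + 2 * Real.log 4 * (1 / Nat.sqrt N - 1 / N)) := by
      rw [← Finset.mul_sum]
      gcongr
      exact sum_log_div_sq_le hM (Nat.sqrt_le_self N)
    _ ≤ 2 * (Real.log 4 / N + 2 * Real.log 4 * (2 / √N - 1 / N)) := by gcongr
    _ = 8 * Real.log 4 / √N - 2 * (Real.log 4 / N) := by ring
    _ ≤ _ := sub_le_self _ (by positivity)

lemma abs_sum_log_div_sub_le {N : ℕ} (hN : 1 ≤ N) :
    |∑ p ∈ Finset.range (N + 1) with p.Prime, Real.log p / ((p : ℝ) - 1) -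
        ∑ n ∈ Finset.range (N + 1), ArithmeticFunction.vonMangoldt n / n| ≤
      10 * Real.log 4 / √N := by
  have hM := Nat.sqrt_le_self N
  have hsmall : {p ∈ {p ∈ Finset.range (N + 1) | p.Prime} | p ≤ Nat.sqrt N} =
      {p ∈ Finset.Icc 0 (Nat.sqrt N) | p.Prime} := by
    ext p
    simp only [Finset.mem_filter, Finset.mem_range, Finset.mem_Icc]
    lia
  have hlarge : {p ∈ {p ∈ Finset.range (N + 1) | p.Prime} | ¬p ≤ Nat.sqrt N} =
      {p ∈ Finset.Ioc (Nat.sqrt N) N | p.Prime} := by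
    ext p
    simp only [Finset.mem_filter, Finset.mem_range, Finset.mem_Ioc]
    lia
  have hnonneg : 0 ≤ ∑ p ∈ Finset.range (N + 1) with p.Prime,
      Real.log p / (((p : ℝ) - 1) * (p : ℝ) ^ Nat.log p N) := Finset.sum_nonneg fun p hp ↦ by
    have hp1 : (1 : ℝ) ≤ p := mod_cast (Finset.mem_filter.1 hp).2.one_le
    exact div_nonneg (Real.log_nonneg hp1) (mul_nonneg (sub_nonneg.2 hp1) (by positivity))
  rw [sum_log_div_sub_sum_vonMangoldt_div, abs_of_nonneg hnonneg,
    ← Finset.sum_filter_add_sum_filter_not _ (· ≤ Nat.sqrt N), hsmall, hlarge]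
  refine (add_le_add (sum_small_primes_le hN) (sum_large_primes_le hN)).trans_eq ?_
  ring

lemma abs_sqrt_mul_A_sub_sub_mertensError_le {u : ℝ} (hu : 0 ≤ u) :
    |√(Real.exp u) * (A (Real.exp u) - u) - mertensError u| ≤ 20 * Real.log 4 := by
  have hN : 1 ≤ ⌊Real.exp u⌋₊ := Nat.one_le_floor_iff _ |>.2 (Real.one_le_exp hu)
  have hsum := abs_sum_log_div_sub_le hN
  have hN1 : (1 : ℝ) ≤ ⌊Real.exp u⌋₊ := mod_cast hN
  have hsqrt : √(Real.exp u) ≤ 2 * √⌊Real.exp u⌋₊ := by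
    rw [Real.sqrt_le_left (by positivity), mul_pow, Real.sq_sqrt (by linarith)]
    linarith [Nat.lt_floor_add_one (Real.exp u)]
  have hfactor (s g a b : ℝ) : s * (g + a - u) - s * (b - u + g) = s * (a - b) := by ring
  rw [A, mertensError, Real.exp_half, hfactor, abs_mul, abs_of_nonneg (Real.sqrt_nonneg _)]
  calc
    _ ≤ 2 * √⌊Real.exp u⌋₊ * (10 * Real.log 4 / √⌊Real.exp u⌋₊) := by gcongr
    _ = 20 * Real.log 4 := by
      field_simp
      ring

theorem exists_lt_mul_A_sub_log {δ : ℝ} (hδ : δ = 1 ∨ δ = -1) (X : ℝ) :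
    ∃ x, X ≤ x ∧ Real.exp (-4) / 10 * Real.log (Real.log (Real.log x)) / √x <
      δ * (A x - Real.log x) := by
  obtain ⟨u, hu, hlt⟩ := exists_lt_mul_mertensError (c := Real.exp (-4) / 10) hδ (by positivity)
    (by linarith [Real.exp_pos (-4)]) (20 * Real.log 4) (max X 0)
  refine ⟨Real.exp u, by linarith [le_max_left X 0, Real.add_one_le_exp u], ?_⟩
  rw [Real.log_exp, div_lt_iff₀ (Real.sqrt_pos.2 (Real.exp_pos u))]
  have hbound := abs_le.1 (abs_sqrt_mul_A_sub_sub_mertensError_le ((le_max_right X 0).trans hu))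
  rcases hδ with rfl | rfl <;> linarith

end MertensOscillation

/-- `A(x) - log x = Ω_±(x^{-1/2} log log log x)`. -/
theorem A_sub_log_omega_pm :
    ∃ c : ℝ, 0 < c ∧
      (∀ X : ℝ, ∃ x : ℝ, X ≤ x ∧
        c * Real.log (Real.log (Real.log x)) / Real.sqrt x < A x - Real.log x) ∧
      (∀ X : ℝ, ∃ x : ℝ, X ≤ x ∧
        A x - Real.log x < -(c * Real.log (Real.log (Real.log x)) / Real.sqrt x)) := by
  refine ⟨Real.exp (-4) / 10, by positivity, fun X ↦ ?_, fun X ↦ ?_⟩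
  · simpa only [one_mul] using MertensOscillation.exists_lt_mul_A_sub_log (.inl rfl) X
  · simpa only [neg_one_mul, lt_neg] using
      MertensOscillation.exists_lt_mul_A_sub_log (.inr rfl) X
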